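/- arXiv:2407.14610 — 2 statements merged into one kernel-verified Lean document; each statement's English description precedes it below -/
import Mathlib

section
/- Let r : Ĉ → Ĉ be a nonconstant rational map and let L_r = r⁻¹({w ∈ ℂ : |w| = 1}) be its lemniscate. Then L_r is a lemniscate graph, with vertex set V = {z ∈ L_r : r is not injective on any neighborhood of z} (the critical points of r lying on L_r). -/
open Set Metric Topology Filter Polynomial

noncomputable section

/-- A Jordan curve: a set homeomorphic to the unit circle. -/
def IsJordanCurve {X : Type*} [TopologicalSpace X] (E : Set X) : Prop :=
  Nonempty (E ≃ₜ (Metric.sphere (0 : ℂ) 1 : Set ℂ))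

/-- A simple arc: a set homeomorphic to the open unit interval `(0,1)`. -/
def IsSimpleArc {X : Type*} [TopologicalSpace X] (E : Set X) : Prop :=
  Nonempty (E ≃ₜ (Set.Ioo (0 : ℝ) 1 : Set ℝ))

/-- The connected components of a set. -/
def setComponents {X : Type*} [TopologicalSpace X] (A : Set X) : Set (Set X) :=
  {C | ∃ x ∈ A, C = connectedComponentIn A x}

/-- The edges of the pair `(G, V)`: the connected components of `G \ V`. -/
def graphEdges {X : Type*} [TopologicalSpace X] (G V : Set X) : Set (Set X) :=
  setComponents (G \ V)

/-- The degree of a vertex `v`: the number of edges `e` with `v ∈ closure e \ e`,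
where an edge is counted twice if `closure e \ e = {v}`. -/
def vertexDegree {X : Type*} [TopologicalSpace X] (G V : Set X) (v : X) : ℕ :=
  {e ∈ graphEdges G V | v ∈ closure e \ e}.ncard +
    {e ∈ graphEdges G V | closure e \ e = {v}}.ncard

/-- `G` is a lemniscate graph with (finite) vertex set `V`. -/
structure IsLemniscateGraphWith {X : Type*} [TopologicalSpace X] (G V : Set X) : Prop where
  vertex_subset : V ⊆ G
  vertex_finite : V.Finite
  edges_finite : (graphEdges G V).Finite
  edge_shape : ∀ e ∈ graphEdges G V, IsJordanCurve e ∨ (IsSimpleArc e ∧ closure e \ e ⊆ V)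
  degree_even : ∀ v ∈ V, Even (vertexDegree G V v)
  degree_ge_four : ∀ v ∈ V, 4 ≤ vertexDegree G V v

/-- `G` is a lemniscate graph (for some finite vertex set). -/
def IsLemniscateGraph {X : Type*} [TopologicalSpace X] (G : Set X) : Prop :=
  ∃ V, IsLemniscateGraphWith G V

/-- The faces of `G`: the connected components of the complement of `G`. -/
def graphFaces {X : Type*} [TopologicalSpace X] (G : Set X) : Set (Set X) :=
  setComponents Gᶜ

/-- A 2-coloring of the faces of `G`, recorded by the set `grey` of grey faces:
two distinct faces whose closures share a common edge get different colors. -/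
def IsTwoColoring {X : Type*} [TopologicalSpace X] (G V : Set X) (grey : Set (Set X)) : Prop :=
  grey ⊆ graphFaces G ∧
    ∀ F₁ ∈ graphFaces G, ∀ F₂ ∈ graphFaces G, F₁ ≠ F₂ →
      (∃ e ∈ graphEdges G V, e ⊆ closure F₁ ∧ e ⊆ closure F₂) →
      (F₁ ∈ grey ↔ F₂ ∉ grey)

/-- The distance function of a metric space structure on the Riemann sphere. -/
def mdist (m : MetricSpace (OnePoint ℂ)) : OnePoint ℂ → OnePoint ℂ → ℝ :=
  m.toPseudoMetricSpace.toDist.dist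

/-- The metric space structure `m` induces the standard topology of the Riemann sphere. -/
def InducesSphereTopology (m : MetricSpace (OnePoint ℂ)) : Prop :=
  m.toPseudoMetricSpace.toUniformSpace.toTopologicalSpace =
    (inferInstance : TopologicalSpace (OnePoint ℂ))

/-- `E` and `F` are `ε`-homeomorphic with respect to the metric `m`: there is a
homeomorphism of the sphere carrying `E` to `F` and moving points less than `ε`. -/
def EpsHomeomorphic (m : MetricSpace (OnePoint ℂ)) (ε : ℝ) (E F : Set (OnePoint ℂ)) : Prop :=
  ∃ φ : OnePoint ℂ ≃ₜ OnePoint ℂ, φ '' E = F ∧ ∃ c < ε, ∀ z, mdist m (φ z) z ≤ c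

/-- `r` is a rational map on the Riemann sphere: the continuous extension of `p/q`
for coprime polynomials `p`, `q`, not both constant. -/
def IsRationalMap (r : OnePoint ℂ → OnePoint ℂ) : Prop :=
  Continuous r ∧ ∃ p q : ℂ[X], IsCoprime p q ∧ ¬(p.natDegree = 0 ∧ q.natDegree = 0) ∧
    ∀ z : ℂ, q.eval z ≠ 0 → r (z : OnePoint ℂ) = ((p.eval z / q.eval z : ℂ) : OnePoint ℂ)

/-- The lemniscate of `r` : the preimage of the unit circle. -/
def lemniscate (r : OnePoint ℂ → OnePoint ℂ) : Set (OnePoint ℂ) :=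
  r ⁻¹' ((fun w : ℂ => (w : OnePoint ℂ)) '' {w : ℂ | ‖w‖ = 1})

/-- The copy of a planar set inside the Riemann sphere. -/
def toSphere (s : Set ℂ) : Set (OnePoint ℂ) := (fun z : ℂ => (z : OnePoint ℂ)) '' s

/-- `f` is, away from the finite set `S`, a local homeomorphism with finite fibres over the image
of the open map `E : ℂ → Y`, which is periodic with period `T` and injective modulo `T`. -/
structure IsBranchedOver {X Y : Type*} [TopologicalSpace X] [TopologicalSpace Y]
    (f : X → Y) (E : ℂ → Y) (T : ℝ) (S : Set X) : Prop where
  continuous_map : Continuous f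
  continuous_param : Continuous E
  isOpenMap_param : IsOpenMap E
  period_pos : 0 < T
  param_eq_iff : ∀ z w : ℂ, E z = E w ↔ ∃ n : ℤ, z = w + n * T
  finite_branch : S.Finite
  isLocalHomeomorphOn : IsLocalHomeomorphOn f Sᶜ
  finite_fiber : ∀ z : ℂ, {x | f x = E z}.Finite

/-- The preimage of the curve `t ↦ E t`, `t` real. -/
def realPreimage {X Y : Type*} (f : X → Y) (E : ℂ → Y) : Set X :=
  {x | ∃ t : ℝ, f x = E t}

/-- The points of `realPreimage f E` near which `f` is not injective. -/
def branchPoints {X Y : Type*} [TopologicalSpace X] (f : X → Y) (E : ℂ → Y) : Set X :=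
  {x ∈ realPreimage f E | ¬ ∃ U ∈ 𝓝 x, InjOn f U}

/-- The points of `realPreimage f E` near which `f` is injective. -/
def regularPoints {X Y : Type*} [TopologicalSpace X] (f : X → Y) (E : ℂ → Y) : Set X :=
  {x ∈ realPreimage f E | ∃ U ∈ 𝓝 x, InjOn f U}

/-- An open neighbourhood `U` of `v` that is isolating for the fibre of `f` through `v` and into
whose frontier `f` maps no point lying over the `ε`-disc around `θ`. -/
structure IsIsolatingNhd {X Y : Type*} [TopologicalSpace X] (f : X → Y) (E : ℂ → Y) (T : ℝ)
    (S : Set X) (v : X) (θ : ℝ) (U : Set X) (ε : ℝ) : Prop where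
  isOpen : IsOpen U
  mem : v ∈ U
  pos : 0 < ε
  le_period : ε ≤ T
  apply_eq : f v = E θ
  eq_of_mem_branch : ∀ x ∈ closure U, x ∈ S → x = v
  eq_of_apply_eq : ∀ x ∈ closure U, f x = E θ → x = v
  mem_of_mem_closure : ∀ z ∈ ball (θ : ℂ) ε, ∀ x ∈ closure U, f x = E z → x ∈ U

section Branched

variable {X Y : Type*} [TopologicalSpace X] [TopologicalSpace Y] {f : X → Y} {E : ℂ → Y}
  {T : ℝ} {S : Set X} {v : X} {θ ε : ℝ} {U : Set X}

theorem isPreconnected_ball_diff_center (c : ℂ) (ε : ℝ) : IsPreconnected (ball c ε \ {c}) := by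
  have h : ball c ε \ {c} =
      (fun p : ℝ × ℝ => c + p.1 * Complex.exp (p.2 * Complex.I)) '' (Ioo 0 ε ×ˢ univ) := by
    ext z
    constructor
    · rintro ⟨hz, hzc⟩
      refine ⟨(‖z - c‖, Complex.arg (z - c)), ⟨⟨?_, ?_⟩, mem_univ _⟩, ?_⟩
      · exact norm_pos_iff.2 (sub_ne_zero.2 hzc)
      · simpa [dist_eq_norm] using hz
      · simp [Complex.norm_mul_exp_arg_mul_I]
    · rintro ⟨⟨r, t⟩, ⟨⟨h0, h1⟩, -⟩, rfl⟩
      constructor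
      · simp [dist_eq_norm, Complex.norm_exp_ofReal_mul_I, abs_of_pos h0, h1]
      · simp [h0.ne']
  rw [h]
  exact (isPreconnected_Ioo.prod isPreconnected_univ).image _ (by fun_prop)

namespace IsBranchedOver

theorem eq_center_of_mem_ball (h : IsBranchedOver f E T S) (hε : ε ≤ T) {z c : ℂ}
    (hz : z ∈ ball c ε) (hE : E z = E c) : z = c := by
  obtain ⟨n, rfl⟩ := (h.param_eq_iff _ _).1 hE
  rcases eq_or_ne n 0 with rfl | hn
  · simp
  · exfalso
    have h1 : (1 : ℝ) ≤ |(n : ℝ)| := by exact_mod_cast Int.one_le_abs hn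
    have h2 : ‖(n : ℂ) * T‖ < ε := by simpa [dist_eq_norm] using hz
    rw [norm_mul, Complex.norm_intCast, Complex.norm_real, Real.norm_eq_abs,
      abs_of_pos h.period_pos] at h2
    nlinarith [h.period_pos]

theorem exists_isIsolatingNhd [T2Space X] [CompactSpace X] [T2Space Y]
    (h : IsBranchedOver f E T S) (hv : f v = E θ) {W : Set X} (hW : W ∈ 𝓝 v) :
    ∃ U ε, IsIsolatingNhd f E T S v θ U ε ∧ closure U ⊆ W := by
  set F : Set X := (S ∪ {x | f x = E θ}) \ {v}
  have hF : F.Finite := (h.finite_branch.union (h.finite_fiber θ)).subset sdiff_subset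
  have hFW : W ∩ Fᶜ ∈ 𝓝 v :=
    inter_mem hW (hF.isClosed.isOpen_compl.mem_nhds (by simp [F]))
  obtain ⟨N, hN, hNc, hNW⟩ := exists_mem_nhds_isClosed_subset hFW
  have hcl : closure (interior N) ⊆ W ∩ Fᶜ :=
    (closure_minimal interior_subset hNc).trans hNW
  have hvU : v ∈ interior N := mem_interior_iff_mem_nhds.2 hN
  have hK : IsClosed (f '' (frontier (interior N))) :=
    (isClosed_frontier.isCompact.image h.continuous_map).isClosed
  have hmem : E θ ∈ (f '' (frontier (interior N)))ᶜ := by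
    rintro ⟨x, hx, hfx⟩
    have hxv : x = v := by
      by_contra hne
      exact (hcl (frontier_subset_closure hx)).2 ⟨Or.inr hfx, hne⟩
    rw [isOpen_interior.frontier_eq] at hx
    exact hx.2 (hxv ▸ hvU)
  obtain ⟨ε, hε, hball⟩ := Metric.isOpen_iff.1 (hK.isOpen_compl.preimage h.continuous_param)
    (θ : ℂ) hmem
  refine ⟨interior N, min ε T, ⟨isOpen_interior, hvU, lt_min hε h.period_pos, min_le_right _ _, hv,
    ?_, ?_, ?_⟩, hcl.trans inter_subset_left⟩
  · intro x hx hxS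
    by_contra hne
    exact (hcl hx).2 ⟨Or.inl hxS, hne⟩
  · intro x hx hxS
    by_contra hne
    exact (hcl hx).2 ⟨Or.inr hxS, hne⟩
  · intro z hz x hx hfx
    by_contra hxU
    refine hball (ball_subset_ball (min_le_left _ _) hz) ⟨x, ?_, hfx⟩
    rw [isOpen_interior.frontier_eq]
    exact ⟨hx, hxU⟩

theorem notMem_branch (h : IsBranchedOver f E T S) (hU : IsIsolatingNhd f E T S v θ U ε)
    {z : ℂ} (hz : z ∈ ball (θ : ℂ) ε) (hzθ : z ≠ θ) {x : X} (hx : x ∈ closure U)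
    (hfx : f x = E z) : x ∉ S := by
  intro hxS
  have hxv := hU.eq_of_mem_branch x hx hxS
  apply hzθ
  apply h.eq_center_of_mem_ball hU.le_period hz
  rw [← hfx, hxv, hU.apply_eq]

theorem eventually_ncard_fiber_eq [T2Space X] [CompactSpace X] [T2Space Y]
    (h : IsBranchedOver f E T S)
    (hU : IsIsolatingNhd f E T S v θ U ε) {z₀ : ℂ} (hz₀ : z₀ ∈ ball (θ : ℂ) ε) (hz₀θ : z₀ ≠ θ) :
    ∀ᶠ z in 𝓝 z₀, {x ∈ U | f x = E z}.ncard = {x ∈ U | f x = E z₀}.ncard := by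
  set F : Set X := {x ∈ U | f x = E z₀} with hFdef
  have hFfin : F.Finite := (h.finite_fiber z₀).subset fun x hx => hx.2
  have hFS : ∀ x ∈ F, x ∈ Sᶜ := fun x hx =>
    h.notMem_branch hU hz₀ hz₀θ (subset_closure hx.1) hx.2
  obtain ⟨D, hD, hdisj⟩ := hFfin.t2_separation
  have hloc : ∀ x ∈ Sᶜ, ∃ N, x ∈ N ∧ IsOpen N ∧ InjOn f N := by
    intro x hx
    obtain ⟨e, hxe, rfl⟩ := h.isLocalHomeomorphOn x hx
    exact ⟨e.source, hxe, e.open_source, e.injOn⟩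
  choose! N hxN hNo hNinj using hloc
  set O : X → Set X := fun x => D x ∩ N x ∩ U
  have hO : ∀ x ∈ F, IsOpen (O x) := fun x hx =>
    ((hD x).2.inter (hNo x (hFS x hx))).inter hU.isOpen
  have hxO : ∀ x ∈ F, x ∈ O x := fun x hx => ⟨⟨(hD x).1, hxN x (hFS x hx)⟩, hx.1⟩
  have hOinj : ∀ x ∈ F, InjOn f (O x) := fun x hx =>
    (hNinj x (hFS x hx)).mono fun y hy => hy.1.2
  have hK : IsClosed (f '' (closure U \ ⋃ x ∈ F, O x)) :=
    ((isClosed_closure.sdiff (isOpen_biUnion hO)).isCompact.image h.continuous_map).isClosed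
  have hz₀K : E z₀ ∉ f '' (closure U \ ⋃ x ∈ F, O x) := by
    rintro ⟨x, ⟨hx, hxO'⟩, hfx⟩
    have hxF : x ∈ F := ⟨hU.mem_of_mem_closure z₀ hz₀ x hx hfx, hfx⟩
    exact hxO' (mem_biUnion hxF (hxO x hxF))
  have ev1 : ∀ᶠ z in 𝓝 z₀, E z ∉ f '' (closure U \ ⋃ x ∈ F, O x) :=
    h.continuous_param.continuousAt.eventually (hK.isOpen_compl.mem_nhds hz₀K)
  have ev2 : ∀ᶠ z in 𝓝 z₀, ∀ x ∈ F, E z ∈ f '' (O x) := by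
    rw [hFfin.eventually_all]
    intro x hx
    apply h.continuous_param.continuousAt.eventually
    rw [← hx.2, ← h.isLocalHomeomorphOn.map_nhds_eq (hFS x hx)]
    exact image_mem_map ((hO x hx).mem_nhds (hxO x hx))
  filter_upwards [ev1, ev2] with z hz1 hz2
  choose! g hgO hg using hz2
  have himg : g '' F = {x ∈ U | f x = E z} := by
    ext y
    constructor
    · rintro ⟨x, hx, rfl⟩
      exact ⟨(hgO x hx).2, hg x hx⟩
    · rintro ⟨hyU, hfy⟩
      have hy : y ∈ ⋃ x ∈ F, O x := by
        by_contra hy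
        exact hz1 ⟨y, ⟨subset_closure hyU, hy⟩, hfy⟩
      obtain ⟨x, hx, hyx⟩ := mem_iUnion₂.1 hy
      exact ⟨x, hx, hOinj x hx (hgO x hx) hyx (by rw [hg x hx, hfy])⟩
  rw [← himg, InjOn.ncard_image]
  intro x hx y hy hxy
  by_contra hne
  refine (hdisj hx hy hne).le_bot ⟨(hgO x hx).1.1, ?_⟩
  rw [hxy]
  exact (hgO y hy).1.1

theorem ncard_fiber_eq [T2Space X] [CompactSpace X] [T2Space Y] (h : IsBranchedOver f E T S)
    (hU : IsIsolatingNhd f E T S v θ U ε) {z w : ℂ} (hz : z ∈ ball (θ : ℂ) ε \ {(θ : ℂ)})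
    (hw : w ∈ ball (θ : ℂ) ε \ {(θ : ℂ)}) :
    {x ∈ U | f x = E z}.ncard = {x ∈ U | f x = E w}.ncard := by
  refine (isPreconnected_ball_diff_center (θ : ℂ) ε).constant
    (f := fun z => {x ∈ U | f x = E z}.ncard) ?_ hz hw
  intro z₀ hz₀
  apply ContinuousAt.continuousWithinAt
  exact continuousAt_const.congr ((h.eventually_ncard_fiber_eq hU hz₀.1 hz₀.2).mono fun _ h => h.symm)

theorem image_ball_mem_nhds (h : IsBranchedOver f E T S) (c : ℂ) (hε : 0 < ε) :
    E '' ball c ε ∈ 𝓝 (E c) :=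
  h.isOpenMap_param.image_mem_nhds (ball_mem_nhds c hε)

theorem ncard_fiber_pos [T2Space X] [CompactSpace X] [T2Space Y] (h : IsBranchedOver f E T S)
    [∀ x : X, (𝓝[≠] x).NeBot]
    (hU : IsIsolatingNhd f E T S v θ U ε) {w : ℂ} (hw : w ∈ ball (θ : ℂ) ε \ {(θ : ℂ)}) :
    0 < {x ∈ U | f x = E w}.ncard := by
  have hN : U ∩ f ⁻¹' (E '' ball (θ : ℂ) ε) ∈ 𝓝 v := by
    refine inter_mem (hU.isOpen.mem_nhds hU.mem) (h.continuous_map.continuousAt ?_)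
    rw [hU.apply_eq]
    exact h.image_ball_mem_nhds _ hU.pos
  obtain ⟨x, ⟨hxU, z, hz, hzx⟩, hxv⟩ :=
    
    Filter.nonempty_of_mem (inter_mem (mem_nhdsWithin_of_mem_nhds hN)
      (self_mem_nhdsWithin : {v}ᶜ ∈ 𝓝[≠] v))
  have hzθ : z ≠ θ := by
    rintro rfl
    exact hxv (hU.eq_of_apply_eq x (subset_closure hxU) hzx.symm)
  rw [h.ncard_fiber_eq hU hw ⟨hz, hzθ⟩]
  exact (ncard_pos ((h.finite_fiber z).subset fun x hx => hx.2)).2 ⟨x, hxU, hzx.symm⟩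

theorem injOn_of_ncard_fiber_eq_one [T2Space X] [CompactSpace X] [T2Space Y]
    (h : IsBranchedOver f E T S)
    (hU : IsIsolatingNhd f E T S v θ U ε) {w : ℂ} (hw : w ∈ ball (θ : ℂ) ε \ {(θ : ℂ)})
    (h1 : {x ∈ U | f x = E w}.ncard = 1) : ∃ N ∈ 𝓝 v, InjOn f N := by
  refine ⟨U ∩ f ⁻¹' (E '' ball (θ : ℂ) ε), ?_, ?_⟩
  · refine inter_mem (hU.isOpen.mem_nhds hU.mem) (h.continuous_map.continuousAt ?_)
    rw [hU.apply_eq]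
    exact h.image_ball_mem_nhds _ hU.pos
  · rintro x ⟨hx, z, hz, hzx⟩ y ⟨hy, -⟩ hxy
    by_cases hzθ : z = θ
    · subst hzθ
      rw [hU.eq_of_apply_eq x (subset_closure hx) hzx.symm,
        hU.eq_of_apply_eq y (subset_closure hy) (by rw [← hxy, hzx])]
    · rw [h.ncard_fiber_eq hU hw ⟨hz, hzθ⟩, ncard_eq_one] at h1
      obtain ⟨a, ha⟩ := h1
      have hxa : x ∈ ({a} : Set X) := ha ▸ ⟨hx, hzx.symm⟩
      have hya : y ∈ ({a} : Set X) := ha ▸ ⟨hy, by rw [← hxy, hzx]⟩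
      rw [hxa, hya]

theorem two_le_ncard_fiber [T2Space X] [CompactSpace X] [T2Space Y] (h : IsBranchedOver f E T S)
    [∀ x : X, (𝓝[≠] x).NeBot] (hv : v ∈ branchPoints f E)
    (hU : IsIsolatingNhd f E T S v θ U ε) {w : ℂ} (hw : w ∈ ball (θ : ℂ) ε \ {(θ : ℂ)}) :
    2 ≤ {x ∈ U | f x = E w}.ncard := by
  have h0 := h.ncard_fiber_pos hU hw
  have h1 : {x ∈ U | f x = E w}.ncard ≠ 1 := fun h1 =>
    hv.2 (h.injOn_of_ncard_fiber_eq_one hU hw h1)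
  omega

/-- `f` is open at the points of `realPreimage f E`. -/
theorem nhds_le_map [T2Space X] [CompactSpace X] [T2Space Y] (h : IsBranchedOver f E T S)
    [∀ x : X, (𝓝[≠] x).NeBot] (hv : v ∈ realPreimage f E) : 𝓝 (f v) ≤ map f (𝓝 v) := by
  intro A hA
  obtain ⟨θ, hθ⟩ := hv
  obtain ⟨U, ε, hU, hUA⟩ := h.exists_isIsolatingNhd hθ hA
  rw [hθ]
  refine mem_of_superset (h.image_ball_mem_nhds _ hU.pos) ?_
  rintro _ ⟨z, hz, rfl⟩
  by_cases hzθ : z = θ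
  · rw [hzθ, ← hθ]
    exact hUA (subset_closure hU.mem)
  · obtain ⟨x, hxU, hx⟩ := nonempty_of_ncard_ne_zero (h.ncard_fiber_pos hU ⟨hz, hzθ⟩).ne'
    exact hx ▸ hUA (subset_closure hxU)

theorem isLocalHomeomorphOn_regularPoints [T2Space X] [CompactSpace X] [T2Space Y]
    (h : IsBranchedOver f E T S) [∀ x : X, (𝓝[≠] x).NeBot] :
    IsLocalHomeomorphOn f (regularPoints f E) := by
  rintro x ⟨hx, N, hN, hinj⟩
  have hS : IsOpen (S \ {x})ᶜ := (h.finite_branch.subset sdiff_subset).isClosed.isOpen_compl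
  set O : Set X := interior N ∩ (S \ {x})ᶜ
  have hO : IsOpen O := isOpen_interior.inter hS
  have hxO : x ∈ O := ⟨mem_interior_iff_mem_nhds.2 hN, by simp⟩
  have hinjO : InjOn f O := hinj.mono fun y hy => interior_subset hy.1
  have hmap : ∀ y ∈ O, 𝓝 (f y) ≤ map f (𝓝 y) := by
    intro y hy
    by_cases hyx : y = x
    · exact hyx ▸ h.nhds_le_map hx
    · exact (h.isLocalHomeomorphOn.map_nhds_eq fun hyS => hy.2 ⟨hyS, hyx⟩).ge
  have : Nonempty X := ⟨x⟩
  have hopen : IsOpenMap (O.domRestrict f) := by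
    refine IsOpenMap.of_nhds_le fun y => (hmap y y.2).trans ?_
    rw [← hO.nhdsWithin_eq y.2, ← map_nhds_subtype_val, Filter.map_map]
    rfl
  exact ⟨OpenPartialHomeomorph.ofContinuousOpenRestrict hinjO.bijOn_image.toPartialEquiv
    h.continuous_map.continuousOn hopen hO, hxO, rfl⟩

theorem branchPoints_subset (h : IsBranchedOver f E T S) : branchPoints f E ⊆ S := by
  intro x hx
  by_contra hxS
  obtain ⟨e, hxe, rfl⟩ := h.isLocalHomeomorphOn x hxS
  exact hx.2 ⟨e.source, e.open_source.mem_nhds hxe, e.injOn⟩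

end IsBranchedOver

end Branched

/-- A continuous lift of `t ↦ E t` through `f` along regular points, over an open interval `J`. -/
structure IsLift {X Y : Type*} [TopologicalSpace X] (f : X → Y) (E : ℂ → Y)
    (γ : ℝ → X) (J : Set ℝ) : Prop where
  isOpen : IsOpen J
  ordConnected : J.OrdConnected
  continuousOn : ContinuousOn γ J
  mem : ∀ t ∈ J, γ t ∈ regularPoints f E
  apply_eq : ∀ t ∈ J, f (γ t) = E t

/-- A lift over a nonempty interval that cannot be extended to a larger one. -/
structure IsMaxLift {X Y : Type*} [TopologicalSpace X] (f : X → Y) (E : ℂ → Y)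
    (γ : ℝ → X) (J : Set ℝ) : Prop extends IsLift f E γ J where
  nonempty : J.Nonempty
  maximal : ∀ γ' J', IsLift f E γ' J' → ∀ u ∈ J, u ∈ J' → γ u = γ' u → J' ⊆ J

section Lifts

variable {X Y : Type*} [TopologicalSpace X] {f : X → Y} {E : ℂ → Y}
  {T : ℝ} {S : Set X} {γ γ₁ γ₂ : ℝ → X} {J J₁ J₂ : Set ℝ}

theorem IsLift.continuousAt (h : IsLift f E γ J) {t : ℝ} (ht : t ∈ J) : ContinuousAt γ t :=
  h.continuousOn.continuousAt (h.isOpen.mem_nhds ht)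

theorem IsLift.eqOn [T2Space X] (h₁ : IsLift f E γ₁ J₁) (h₂ : IsLift f E γ₂ J₂) {u : ℝ}
    (hu₁ : u ∈ J₁) (hu₂ : u ∈ J₂) (hu : γ₁ u = γ₂ u) : EqOn γ₁ γ₂ (J₁ ∩ J₂) := by
  have hJ : IsPreconnected (J₁ ∩ J₂) := (h₁.ordConnected.inter h₂.ordConnected).isPreconnected
  have hsub : J₁ ∩ J₂ ⊆ {t | t ∈ J₁ ∩ J₂ ∧ γ₁ t = γ₂ t} := by
    refine hJ.subset_of_closure_inter_subset ?_ ⟨u, ⟨hu₁, hu₂⟩, ⟨hu₁, hu₂⟩, hu⟩ ?_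
    · rw [isOpen_iff_mem_nhds]
      rintro t ⟨ht, hteq⟩
      obtain ⟨-, N, hN, hinj⟩ := h₁.mem t ht.1
      have e₁ := h₁.continuousAt ht.1 hN
      have e₂ := h₂.continuousAt ht.2 (hteq ▸ hN)
      filter_upwards [e₁, e₂, (h₁.isOpen.inter h₂.isOpen).mem_nhds ht] with s hs₁ hs₂ hs
      exact ⟨hs, hinj hs₁ hs₂ (by rw [h₁.apply_eq s hs.1, h₂.apply_eq s hs.2])⟩
    · rintro t ⟨htc, ht⟩
      refine ⟨ht, ?_⟩
      have := mem_closure_iff_nhdsWithin_neBot.1 htc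
      refine tendsto_nhds_unique_of_eventuallyEq (l := 𝓝[{t | t ∈ J₁ ∩ J₂ ∧ γ₁ t = γ₂ t}] t)
        ((h₁.continuousAt ht.1).mono_left nhdsWithin_le_nhds)
        ((h₂.continuousAt ht.2).mono_left nhdsWithin_le_nhds) ?_
      filter_upwards [self_mem_nhdsWithin] with s hs using hs.2
  exact fun t ht => (hsub ht).2

theorem IsLift.exists_union [T2Space X] (h₁ : IsLift f E γ₁ J₁) (h₂ : IsLift f E γ₂ J₂) {u : ℝ}
    (hu₁ : u ∈ J₁) (hu₂ : u ∈ J₂) (hu : γ₁ u = γ₂ u) :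
    ∃ γ, IsLift f E γ (J₁ ∪ J₂) ∧ EqOn γ γ₁ J₁ := by
  classical
  have heq := h₁.eqOn h₂ hu₁ hu₂ hu
  have hpw₁ : EqOn (J₁.piecewise γ₁ γ₂) γ₁ J₁ := piecewise_eqOn _ _ _
  have hpw₂ : EqOn (J₁.piecewise γ₁ γ₂) γ₂ J₂ := by
    intro t ht
    by_cases ht₁ : t ∈ J₁
    · rw [hpw₁ ht₁, heq ⟨ht₁, ht⟩]
    · rw [piecewise_eq_of_notMem _ _ _ ht₁]
  refine ⟨J₁.piecewise γ₁ γ₂, ⟨h₁.isOpen.union h₂.isOpen, ?_, ?_, ?_, ?_⟩, hpw₁⟩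
  · exact (IsPreconnected.union u hu₁ hu₂ h₁.ordConnected.isPreconnected
      h₂.ordConnected.isPreconnected).ordConnected
  · exact (h₁.continuousOn.congr hpw₁).union_of_isOpen (h₂.continuousOn.congr hpw₂)
      h₁.isOpen h₂.isOpen
  · rintro t (ht | ht)
    · rw [hpw₁ ht]; exact h₁.mem t ht
    · rw [hpw₂ ht]; exact h₂.mem t ht
  · rintro t (ht | ht)
    · rw [hpw₁ ht]; exact h₁.apply_eq t ht
    · rw [hpw₂ ht]; exact h₂.apply_eq t ht

theorem IsMaxLift.eq_and_eqOn [T2Space X] (h₁ : IsMaxLift f E γ₁ J₁) (h₂ : IsMaxLift f E γ₂ J₂)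
    {u : ℝ} (hu₁ : u ∈ J₁) (hu₂ : u ∈ J₂) (hu : γ₁ u = γ₂ u) : J₁ = J₂ ∧ EqOn γ₁ γ₂ J₁ := by
  have hJ : J₁ = J₂ := (h₂.maximal _ _ h₁.toIsLift u hu₂ hu₁ hu.symm).antisymm
    (h₁.maximal _ _ h₂.toIsLift u hu₁ hu₂ hu)
  subst hJ
  exact ⟨rfl, by simpa using h₁.toIsLift.eqOn h₂.toIsLift hu₁ hu₂ hu⟩

variable [TopologicalSpace Y]

theorem IsBranchedOver.exists_isLift [T2Space X] [CompactSpace X] [T2Space Y]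
    [∀ x : X, (𝓝[≠] x).NeBot] (h : IsBranchedOver f E T S) {x : X} {t₀ : ℝ}
    (hx : x ∈ regularPoints f E) (ht₀ : f x = E t₀) :
    ∃ N ∈ 𝓝 x, ∃ γ J, IsLift f E γ J ∧ t₀ ∈ J ∧ γ t₀ = x ∧
      ∀ t ∈ J, ∀ y ∈ N, f y = E t → γ t = y := by
  obtain ⟨e, hxe, rfl⟩ := h.isLocalHomeomorphOn_regularPoints x hx
  have hc : Continuous fun t : ℝ => E t := h.continuous_param.comp Complex.continuous_ofReal
  have hmem : (fun t : ℝ => E t) ⁻¹' e.target ∈ 𝓝 t₀ :=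
    (e.open_target.preimage hc).mem_nhds (by
      change E t₀ ∈ e.target
      rw [← ht₀]
      exact e.map_source hxe)
  obtain ⟨δ, hδ, hball⟩ := Metric.mem_nhds_iff.1 hmem
  refine ⟨e.source, e.open_source.mem_nhds hxe, fun t => e.symm (E t), ball t₀ δ,
    ⟨isOpen_ball, ?_, ?_, ?_, ?_⟩, mem_ball_self hδ, ?_, ?_⟩
  · rw [Real.ball_eq_Ioo]; exact ordConnected_Ioo
  · exact e.continuousOn_symm.comp hc.continuousOn hball
  · intro t ht
    exact ⟨⟨t, e.right_inv (hball ht)⟩,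
      e.source, e.open_source.mem_nhds (e.map_target (hball ht)), e.injOn⟩
  · exact fun t ht => e.right_inv (hball ht)
  · change e.symm (E t₀) = x
    rw [← ht₀, e.left_inv hxe]
  · intro t _ y hy hfy
    change e.symm (E t) = y
    rw [← hfy, e.left_inv hy]

theorem IsBranchedOver.exists_isMaxLift [T2Space X] [CompactSpace X] [T2Space Y]
    [∀ x : X, (𝓝[≠] x).NeBot] (h : IsBranchedOver f E T S) {x : X} {t₀ : ℝ}
    (hx : x ∈ regularPoints f E) (ht₀ : f x = E t₀) :
    ∃ γ J, IsMaxLift f E γ J ∧ t₀ ∈ J ∧ γ t₀ = x := by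
  classical
  set P : (ℝ → X) → Set ℝ → Prop := fun γ J => IsLift f E γ J ∧ t₀ ∈ J ∧ γ t₀ = x
  set J : Set ℝ := {t | ∃ γ J, P γ J ∧ t ∈ J}
  have hch : ∀ t ∈ J, ∃ γ J, P γ J ∧ t ∈ J := fun t ht => ht
  have : Nonempty X := ⟨x⟩
  choose! Γ K hΓ hK using hch
  set γ : ℝ → X := fun t => Γ t t
  have hγ : ∀ γ' J', P γ' J' → J' ⊆ J ∧ EqOn γ γ' J' := by
    intro γ' J' hP
    have hsub : J' ⊆ J := fun t ht => ⟨γ', J', hP, ht⟩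
    refine ⟨hsub, fun t ht => ?_⟩
    have hPt := hΓ t (hsub ht)
    exact hPt.1.eqOn hP.1 hPt.2.1 hP.2.1 (hPt.2.2.trans hP.2.2.symm) ⟨hK t (hsub ht), ht⟩
  have hJopen : IsOpen J := by
    rw [isOpen_iff_mem_nhds]
    rintro t ⟨γ', J', hP, ht⟩
    exact mem_of_superset (hP.1.isOpen.mem_nhds ht) (hγ γ' J' hP).1
  have hlift : IsLift f E γ J := by
    refine ⟨hJopen, ?_, ?_, ?_, ?_⟩
    · refine IsPreconnected.ordConnected (isPreconnected_of_forall t₀ ?_)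
      rintro t ⟨γ', J', hP, ht⟩
      exact ⟨J', (hγ γ' J' hP).1, hP.2.1, ht, hP.1.ordConnected.isPreconnected⟩
    · rintro t ⟨γ', J', hP, ht⟩
      refine ((hP.1.continuousAt ht).congr ?_).continuousWithinAt
      filter_upwards [hP.1.isOpen.mem_nhds ht] with s hs using ((hγ γ' J' hP).2 hs).symm
    · rintro t ⟨γ', J', hP, ht⟩
      rw [(hγ γ' J' hP).2 ht]
      exact hP.1.mem t ht
    · rintro t ⟨γ', J', hP, ht⟩
      rw [(hγ γ' J' hP).2 ht]
      exact hP.1.apply_eq t ht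
  obtain ⟨-, -, γ₀, J₀, hγ₀, htJ₀, hγt₀, -⟩ := h.exists_isLift hx ht₀
  have ht₀J := (hγ γ₀ J₀ ⟨hγ₀, htJ₀, hγt₀⟩).1 htJ₀
  have hγx : γ t₀ = x := ((hγ γ₀ J₀ ⟨hγ₀, htJ₀, hγt₀⟩).2 htJ₀).trans hγt₀
  refine ⟨γ, J, ⟨hlift, ⟨t₀, ht₀J⟩, ?_⟩, ht₀J, hγx⟩
  intro γ' J' hγ' u hu hu' huu
  obtain ⟨γ'', hγ'', heq⟩ := hlift.exists_union hγ' hu hu' huu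
  exact subset_union_right.trans
    (hγ γ'' _ ⟨hγ'', Or.inl ht₀J, (heq ht₀J).trans hγx⟩).1

theorem IsBranchedOver.param_sub_int_mul (h : IsBranchedOver f E T S) (t : ℝ) (n : ℤ) :
    E ((t - n * T : ℝ) : ℂ) = E t := by
  rw [h.param_eq_iff]
  exact ⟨-n, by push_cast; ring⟩

theorem IsBranchedOver.isLift_shift (h : IsBranchedOver f E T S) (hγ : IsLift f E γ J) (n : ℤ) :
    IsLift f E (fun t => γ (t - n * T)) ((fun t => t - n * T) ⁻¹' J) where
  isOpen := hγ.isOpen.preimage (by fun_prop)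
  ordConnected := hγ.ordConnected.preimage_mono fun a b hab => sub_le_sub_right hab _
  continuousOn := hγ.continuousOn.comp (by fun_prop) fun _ ht => ht
  mem _ ht := hγ.mem _ ht
  apply_eq t ht := by rw [hγ.apply_eq _ ht, h.param_sub_int_mul]

theorem IsBranchedOver.isMaxLift_shift (h : IsBranchedOver f E T S) (hγ : IsMaxLift f E γ J)
    (n : ℤ) : IsMaxLift f E (fun t => γ (t - n * T)) ((fun t => t - n * T) ⁻¹' J) where
  toIsLift := h.isLift_shift hγ.toIsLift n
  nonempty := by
    obtain ⟨t, ht⟩ := hγ.nonempty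
    exact ⟨t + n * T, by simpa using ht⟩
  maximal := by
    intro γ' J' hγ' u hu hu' huu t ht
    refine hγ.maximal _ _ (h.isLift_shift hγ' (-n)) (u - n * T) hu ?_ ?_ ?_
    · simpa using hu'
    · simpa using huu
    · simpa using ht

theorem IsBranchedOver.exists_shift_eq [T2Space X] (h : IsBranchedOver f E T S)
    (h₁ : IsMaxLift f E γ₁ J₁) (h₂ : IsMaxLift f E γ₂ J₂)
    {s t : ℝ} (hs : s ∈ J₁) (ht : t ∈ J₂) (hst : γ₁ s = γ₂ t) :
    ∃ n : ℤ, s = t + n * T ∧ J₁ = (fun t => t - n * T) ⁻¹' J₂ ∧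
      ∀ u ∈ J₁, γ₁ u = γ₂ (u - n * T) := by
  have hE : E s = E t := by rw [← h₁.apply_eq s hs, ← h₂.apply_eq t ht, hst]
  obtain ⟨n, hn⟩ := (h.param_eq_iff _ _).1 hE
  have hn' : s = t + n * T := by exact_mod_cast hn
  refine ⟨n, hn', ?_⟩
  exact h₁.eq_and_eqOn (h.isMaxLift_shift h₂ n) hs (by simpa [hn'] using ht) 
    (by rw [hst, hn', add_sub_cancel_right])

theorem IsBranchedOver.image_eq_image [T2Space X] (h : IsBranchedOver f E T S)
    (h₁ : IsMaxLift f E γ₁ J₁) (h₂ : IsMaxLift f E γ₂ J₂)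
    {s t : ℝ} (hs : s ∈ J₁) (ht : t ∈ J₂) (hst : γ₁ s = γ₂ t) : γ₁ '' J₁ = γ₂ '' J₂ := by
  obtain ⟨n, -, hJ, heq⟩ := h.exists_shift_eq h₁ h₂ hs ht hst
  ext x
  constructor
  · rintro ⟨u, hu, rfl⟩
    exact ⟨u - n * T, by rw [hJ] at hu; exact hu, (heq u hu).symm⟩
  · rintro ⟨u, hu, rfl⟩
    have huJ : u + n * T ∈ J₁ := by rw [hJ]; simpa using hu
    exact ⟨u + n * T, huJ, by rw [heq _ huJ]; simp⟩

/-- Points of `realPreimage f E` close to `γ t` lie on the lift, at parameters close to `t`. -/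
theorem IsBranchedOver.exists_nhds_inter_subset_image [T2Space X] [CompactSpace X] [T2Space Y]
    [∀ x : X, (𝓝[≠] x).NeBot] (h : IsBranchedOver f E T S)
    (hγ : IsLift f E γ J) {t : ℝ} (ht : t ∈ J) {A : Set ℝ} (hA : A ∈ 𝓝 t) :
    ∃ N ∈ 𝓝 (γ t), N ∩ realPreimage f E ⊆ γ '' (J ∩ A) := by
  obtain ⟨N, hN, γ', J', hγ', htJ', hγt, huniq⟩ :=
    h.exists_isLift (hγ.mem t ht) (hγ.apply_eq t ht)
  obtain ⟨δ, hδ, hball⟩ := Metric.mem_nhds_iff.1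
    (inter_mem (inter_mem (hγ.isOpen.mem_nhds ht) hA) (hγ'.isOpen.mem_nhds htJ'))
  refine ⟨N ∩ f ⁻¹' (E '' ball (t : ℂ) δ),
    inter_mem hN (h.continuous_map.continuousAt ?_), ?_⟩
  · rw [hγ.apply_eq t ht]
    exact h.image_ball_mem_nhds _ hδ
  · rintro y ⟨⟨hyN, z, hz, hzy⟩, s, hs⟩
    obtain ⟨n, rfl⟩ := (h.param_eq_iff z s).1 (hzy.trans hs)
    have hcast : ((s : ℂ) + n * T) = ((s + n * T : ℝ) : ℂ) := by push_cast; ring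
    rw [hcast] at hz hzy
    have hmem : s + n * T ∈ ball t δ := by
      rw [mem_ball, Real.dist_eq]
      rwa [mem_ball, Complex.dist_eq, ← Complex.ofReal_sub, Complex.norm_real,
        Real.norm_eq_abs] at hz
    obtain ⟨⟨h1, h2⟩, h3⟩ := hball hmem
    refine ⟨s + n * T, ⟨h1, h2⟩, ?_⟩
    rw [hγ.eqOn hγ' ht htJ' hγt.symm ⟨h1, h3⟩]
    exact huniq _ h3 y hyN hzy.symm

theorem IsBranchedOver.connectedComponentIn_eq [T2Space X] [CompactSpace X] [T2Space Y]
    [∀ x : X, (𝓝[≠] x).NeBot] (h : IsBranchedOver f E T S)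
    (hγ : IsMaxLift f E γ J) {t : ℝ} (ht : t ∈ J) :
    connectedComponentIn (regularPoints f E) (γ t) = γ '' J := by
  have hsub : γ '' J ⊆ regularPoints f E := image_subset_iff.2 hγ.mem
  refine Subset.antisymm ?_ ((hγ.ordConnected.isPreconnected.image γ
    hγ.continuousOn).subset_connectedComponentIn (mem_image_of_mem γ ht) hsub)
  have hnhds : ∀ γ' J', IsMaxLift f E γ' J' → ∀ s ∈ J', ∃ N, IsOpen N ∧ γ' s ∈ N ∧
      N ∩ regularPoints f E ⊆ γ' '' J' := by
    intro γ' J' hγ' s hs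
    obtain ⟨N, hN, hNs⟩ := h.exists_nhds_inter_subset_image hγ'.toIsLift hs univ_mem
    refine ⟨interior N, isOpen_interior, mem_interior_iff_mem_nhds.2 hN, fun y hy => ?_⟩
    exact image_mono inter_subset_left (hNs ⟨interior_subset hy.1, hy.2.1⟩)
  set A : Set X := ⋃₀ {N | IsOpen N ∧ N ∩ regularPoints f E ⊆ γ '' J}
  set B : Set X := ⋃₀ {N | IsOpen N ∧ N ∩ regularPoints f E ⊆ (γ '' J)ᶜ}
  have hA : A ∩ regularPoints f E ⊆ γ '' J := by
    rintro y ⟨⟨N, hN, hyN⟩, hy⟩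
    exact hN.2 ⟨hyN, hy⟩
  have hB : B ∩ regularPoints f E ⊆ (γ '' J)ᶜ := by
    rintro y ⟨⟨N, hN, hyN⟩, hy⟩
    exact hN.2 ⟨hyN, hy⟩
  have hcover : regularPoints f E ⊆ A ∪ B := by
    intro y hy
    by_cases hyJ : y ∈ γ '' J
    · obtain ⟨s, hs, rfl⟩ := hyJ
      obtain ⟨N, hN, hyN, hNs⟩ := hnhds γ J hγ s hs
      exact Or.inl ⟨N, ⟨hN, hNs⟩, hyN⟩
    · obtain ⟨s, hs⟩ := hy.1
      obtain ⟨γ', J', hγ', hsJ', rfl⟩ := h.exists_isMaxLift hy hs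
      obtain ⟨N, hN, hyN, hNs⟩ := hnhds γ' J' hγ' s hsJ'
      refine Or.inr ⟨N, ⟨hN, hNs.trans ?_⟩, hyN⟩
      rintro _ ⟨u, hu, rfl⟩ ⟨w, hw, hwu⟩
      apply hyJ
      rw [h.image_eq_image hγ hγ' hw hu hwu]
      exact mem_image_of_mem γ' hsJ'
  have hC := isPreconnected_connectedComponentIn (F := regularPoints f E) (x := γ t)
  have hCM := connectedComponentIn_subset (regularPoints f E) (γ t)
  have hxM := hγ.mem t ht
  by_contra hne
  obtain ⟨y, hyC, hy⟩ := not_subset.1 hne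
  have hyB : y ∈ B := (hcover (hCM hyC)).resolve_left fun hyA => hy (hA ⟨hyA, hCM hyC⟩)
  have hxA : γ t ∈ A := (hcover hxM).resolve_right fun hxB =>
    hB ⟨hxB, hxM⟩ (mem_image_of_mem γ ht)
  obtain ⟨w, hwC, hwA, hwB⟩ := hC A B (isOpen_sUnion fun N hN => hN.1)
    (isOpen_sUnion fun N hN => hN.1) (hCM.trans hcover)
    ⟨γ t, mem_connectedComponentIn hxM, hxA⟩ ⟨y, hyC, hyB⟩
  exact hB ⟨hwB, hCM hwC⟩ (hA ⟨hwA, hCM hwC⟩)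

end Lifts

section Shapes

variable {X Y : Type*} [TopologicalSpace X] [TopologicalSpace Y] {f : X → Y} {E : ℂ → Y}
  {T : ℝ} {S : Set X} {γ : ℝ → X} {J : Set ℝ} {a b : ℝ}

theorem notMem_of_isLUB_of_isOpen {J : Set ℝ} {b : ℝ} (hJ : IsOpen J) (hb : IsLUB J b) :
    b ∉ J := by
  intro hbJ
  obtain ⟨δ, hδ, hball⟩ := Metric.isOpen_iff.1 hJ b hbJ
  have : b + δ / 2 ∈ J := hball (by simp [abs_of_pos hδ, hδ])
  linarith [hb.1 this]

theorem notMem_of_isGLB_of_isOpen {J : Set ℝ} {a : ℝ} (hJ : IsOpen J) (ha : IsGLB J a) :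
    a ∉ J := by
  intro haJ
  obtain ⟨δ, hδ, hball⟩ := Metric.isOpen_iff.1 hJ a haJ
  have : a - δ / 2 ∈ J := hball (by simp [abs_of_pos hδ, hδ])
  linarith [ha.1 this]

theorem exists_eq_Ioo_of_isOpen_of_ordConnected {J : Set ℝ} (hJ : IsOpen J) (hc : J.OrdConnected)
    (hne : J.Nonempty) (hb : BddBelow J) (ha : BddAbove J) : ∃ a b, a < b ∧ J = Ioo a b := by
  have hsub : J ⊆ Ioo (sInf J) (sSup J) := fun t ht =>
    ⟨(csInf_le hb ht).lt_of_ne fun h =>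
        notMem_of_isGLB_of_isOpen hJ (isGLB_csInf hne hb) (h ▸ ht),
      (le_csSup ha ht).lt_of_ne fun h =>
        notMem_of_isLUB_of_isOpen hJ (isLUB_csSup hne ha) (h ▸ ht)⟩
  obtain ⟨t, ht⟩ := hne
  exact ⟨sInf J, sSup J, (hsub ht).1.trans (hsub ht).2, hsub.antisymm
    (IsConnected.Ioo_csInf_csSup_subset ⟨⟨t, ht⟩, hc.isPreconnected⟩ hb ha)⟩

theorem IsBranchedOver.exists_add_int_mul_notMem (h : IsBranchedOver f E T S)
    (hγ : IsLift f E γ J) (hinj : InjOn γ J) (t : ℝ) {σ : ℕ → ℤ} (hσ : Function.Injective σ) :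
    ∃ n, t + σ n * T ∉ J := by
  by_contra! hall
  refine Set.infinite_of_injective_forall_mem (f := fun n => γ (t + σ n * T)) ?_ ?_
    (h.finite_fiber t)
  · intro m n hmn
    have := hinj (hall m) (hall n) hmn
    simpa [h.period_pos.ne', hσ.eq_iff] using this
  · intro n
    change f _ = E t
    rw [hγ.apply_eq _ (hall n), h.param_eq_iff]
    exact ⟨σ n, by push_cast; ring⟩

theorem IsBranchedOver.exists_eq_Ioo (h : IsBranchedOver f E T S) (hγ : IsMaxLift f E γ J)
    (hinj : InjOn γ J) : ∃ a b, a < b ∧ J = Ioo a b := by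
  obtain ⟨t, ht⟩ := hγ.nonempty
  have hT := h.period_pos
  refine exists_eq_Ioo_of_isOpen_of_ordConnected hγ.isOpen hγ.ordConnected ⟨t, ht⟩ ?_ ?_
  · obtain ⟨n, hn⟩ := h.exists_add_int_mul_notMem hγ.toIsLift hinj t
      (σ := fun n => -(n : ℤ)) (fun a b hab => by simpa using hab)
    refine ⟨t + (-(n : ℤ) : ℤ) * T, fun s hs => ?_⟩
    by_contra! hlt
    refine hn (hγ.ordConnected.out hs ht ⟨hlt.le, ?_⟩)
    push_cast
    have : 0 ≤ (n : ℝ) * T := by positivity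
    linarith
  · obtain ⟨n, hn⟩ := h.exists_add_int_mul_notMem hγ.toIsLift hinj t
      (σ := fun n => (n : ℤ)) (fun a b hab => by simpa using hab)
    refine ⟨t + (n : ℤ) * T, fun s hs => ?_⟩
    by_contra! hlt
    refine hn (hγ.ordConnected.out ht hs ⟨?_, hlt.le⟩)
    push_cast
    have : 0 ≤ (n : ℝ) * T := by positivity
    linarith

theorem IsBranchedOver.eq_univ_of_apply_eq [T2Space X] (h : IsBranchedOver f E T S)
    (hγ : IsMaxLift f E γ J) {s t : ℝ} (hs : s ∈ J) (ht : t ∈ J) (hst : γ s = γ t) (hne : s ≠ t) :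
    J = univ := by
  obtain ⟨n, hn, hJ, -⟩ := h.exists_shift_eq hγ hγ hs ht hst
  have hstep : ∀ u, u ∈ J ↔ u - n * T ∈ J := fun u => by
    conv_lhs => rw [hJ]
    rfl
  have hmul : ∀ k : ℕ, s + k * (n * T) ∈ J ∧ s - k * (n * T) ∈ J := by
    intro k
    induction k with
    | zero => simpa using hs
    | succ k ih =>
      constructor
      · rw [hstep]
        convert ih.1 using 1
        push_cast
        ring
      · have := (hstep _).1 ih.2
        convert this using 1
        push_cast
        ring
  have hpos : 0 < |(n : ℝ) * T| := by
    rw [abs_pos]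
    intro h0
    rw [h0, add_zero] at hn
    exact hne hn
  rw [eq_univ_iff_forall]
  intro u
  obtain ⟨k, hk⟩ := exists_nat_gt (|u - s| / |(n : ℝ) * T|)
  rw [div_lt_iff₀ hpos] at hk
  have hseg := hγ.ordConnected.uIcc_subset (hmul k).1 (hmul k).2
  apply hseg
  rw [mem_uIcc]
  have h1 := abs_lt.1 hk
  rcases abs_cases ((n : ℝ) * T) with h2 | h2
  · right
    rw [h2.1] at h1
    constructor <;> linarith [h1.1, h1.2]
  · left
    rw [h2.1] at h1
    constructor <;> linarith [h1.1, h1.2]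

theorem IsBranchedOver.isJordanCurve_of_not_injOn [T2Space X] (h : IsBranchedOver f E T S)
    (hγ : IsMaxLift f E γ J) (hinj : ¬ InjOn γ J) :
    J = univ ∧ IsCompact (γ '' J) ∧ IsJordanCurve (γ '' J) := by
  simp only [InjOn, not_forall] at hinj
  obtain ⟨s, hs, t, ht, hst, hne⟩ := hinj
  have hJ := h.eq_univ_of_apply_eq hγ hs ht hst hne
  subst hJ
  have hshift : ∀ s t, γ s = γ t → ∃ k : ℤ, s = t + k * T ∧ ∀ u, γ u = γ (u - k * T) := by
    intro s t hst
    obtain ⟨k, hk, -, hu⟩ := h.exists_shift_eq hγ hγ (mem_univ s) (mem_univ t) hst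
    exact ⟨k, hk, fun u => hu u (mem_univ u)⟩
  let H : AddSubgroup ℤ :=
    { carrier := {k | ∀ u, γ u = γ (u - k * T)}
      zero_mem' := fun u => by simp
      add_mem' := fun {k l} hk hl u => by
        rw [hk u, hl (u - k * T)]
        congr 1
        push_cast
        ring
      neg_mem' := fun {k} hk u => by
        rw [hk (u - (-k : ℤ) * T)]
        congr 1
        push_cast
        ring }
  obtain ⟨m, hm⟩ := Int.subgroup_cyclic H
  rw [← AddSubgroup.zmultiples_eq_closure] at hm
  have hm0 : (m : ℝ) * T ≠ 0 := by
    intro h0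
    have hm0 : m = 0 := by
      have := (mul_eq_zero.1 h0).resolve_right h.period_pos.ne'
      exact_mod_cast this
    obtain ⟨k, hk, hku⟩ := hshift s t hst
    have hkH : k ∈ H := hku
    rw [hm, hm0, AddSubgroup.mem_zmultiples_iff] at hkH
    obtain ⟨l, hl⟩ := hkH
    rw [smul_zero] at hl
    subst hl
    simp at hk
    exact hne hk
  have hper : Function.Periodic γ (m * T) := by
    intro u
    have hmH : m ∈ H := hm ▸ AddSubgroup.mem_zmultiples m
    rw [hmH (u + m * T), add_sub_cancel_right]
  have hcont : Continuous γ := continuousOn_univ.1 hγ.continuousOn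
  let g : AddCircle ((m : ℝ) * T) → X := hper.lift
  have hg : Continuous g := hcont.quotient_liftOn' _
  have hginj : Function.Injective g := by
    intro x y
    induction x using QuotientAddGroup.induction_on with | _ x => ?_
    induction y using QuotientAddGroup.induction_on with | _ y => ?_
    intro hxy
    obtain ⟨k, hk, hku⟩ := hshift x y hxy
    have hkH : k ∈ H := hku
    rw [hm, AddSubgroup.mem_zmultiples_iff] at hkH
    obtain ⟨l, rfl⟩ := hkH
    have : x - y ∈ AddSubgroup.zmultiples ((m : ℝ) * T) := by
      rw [AddSubgroup.mem_zmultiples_iff]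
      refine ⟨l, ?_⟩
      rw [hk]
      simp only [zsmul_eq_mul]
      push_cast
      ring
    exact (QuotientAddGroup.eq_iff_sub_mem).2 this
  have hrange : range g = γ '' univ := by
    ext x
    constructor
    · rintro ⟨y, rfl⟩
      induction y using QuotientAddGroup.induction_on with | _ y => ?_
      exact ⟨y, mem_univ _, rfl⟩
    · rintro ⟨y, -, rfl⟩
      exact ⟨(y : AddCircle ((m : ℝ) * T)), rfl⟩
  have hcompact : CompactSpace (AddCircle ((m : ℝ) * T)) :=
    (AddCircle.homeomorphCircle hm0).symm.compactSpace
  refine ⟨rfl, hrange ▸ isCompact_range hg, ?_⟩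
  rw [← hrange]
  exact ⟨(hg.isClosedEmbedding hginj).isEmbedding.toHomeomorph.symm.trans
    (AddCircle.homeomorphCircle hm0)⟩

theorem IsBranchedOver.injOn_of_Ioo [T2Space X] (h : IsBranchedOver f E T S)
    (hγ : IsMaxLift f E γ (Ioo a b)) : InjOn γ (Ioo a b) := by
  by_contra hinj
  have hab := (h.isJordanCurve_of_not_injOn hγ hinj).1
  have : b ∈ Ioo a b := hab ▸ mem_univ b
  exact this.2.false

theorem IsBranchedOver.isSimpleArc [T2Space X] [CompactSpace X] [T2Space Y]
    [∀ x : X, (𝓝[≠] x).NeBot] (h : IsBranchedOver f E T S) (hab : a < b)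
    (hγ : IsMaxLift f E γ (Ioo a b)) : IsSimpleArc (γ '' Ioo a b) := by
  have hinj := h.injOn_of_Ioo hγ
  let g : Ioo a b → X := fun t => γ t
  have hg : IsEmbedding g := by
    refine ⟨isInducing_iff_nhds.2 fun t => le_antisymm ?_ ?_, fun s t hst =>
      Subtype.ext (hinj s.2 t.2 hst)⟩
    · exact (continuousOn_iff_continuous_domRestrict.1 hγ.continuousOn).continuousAt.le_comap
    · intro A hA
      rw [nhds_subtype, mem_comap] at hA
      obtain ⟨B, hB, hBA⟩ := hA
      obtain ⟨N, hN, hNs⟩ := h.exists_nhds_inter_subset_image hγ.toIsLift t.2 hB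
      refine ⟨N, hN, fun s hs => hBA ?_⟩
      obtain ⟨u, ⟨huJ, huB⟩, hus⟩ := hNs ⟨hs, (hγ.mem s s.2).1⟩
      have hsu : u = s := hinj huJ s.2 hus
      rw [hsu] at huB
      exact huB
  have hrange : range g = γ '' Ioo a b := by rw [image_eq_range]
  have himg : affineHomeomorph (b - a) a (sub_pos.2 hab).ne' '' Ioo 0 1 = Ioo a b := by
    rw [affineHomeomorph_image_Ioo _ _ _ _ (sub_pos.2 hab)]
    simp
  rw [← hrange]
  exact ⟨hg.toHomeomorph.symm.trans
    ((Homeomorph.setCongr himg.symm).trans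
      ((affineHomeomorph (b - a) a (sub_pos.2 hab).ne').image (Ioo 0 1)).symm)⟩

end Shapes

/-- The images of the maximal lifts over bounded intervals whose right end converges to `v`. -/
def rightEdges {X Y : Type*} [TopologicalSpace X] (f : X → Y) (E : ℂ → Y) (v : X) :
    Set (Set X) :=
  {e | ∃ γ a b, a < b ∧ IsMaxLift f E γ (Ioo a b) ∧ e = γ '' Ioo a b ∧
    Tendsto γ (𝓝[<] b) (𝓝 v)}

section Reflection

variable {X Y : Type*} {f : X → Y} {E : ℂ → Y} {T : ℝ} {S : Set X} {γ : ℝ → X} {J : Set ℝ}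

theorem realPreimage_neg : realPreimage f (fun z => E (-z)) = realPreimage f E := by
  ext x
  constructor <;> rintro ⟨t, ht⟩ <;> exact ⟨-t, by simpa using ht⟩

variable [TopologicalSpace X]

theorem regularPoints_neg : regularPoints f (fun z => E (-z)) = regularPoints f E := by
  simp only [regularPoints, realPreimage_neg]

theorem branchPoints_neg : branchPoints f (fun z => E (-z)) = branchPoints f E := by
  simp only [branchPoints, realPreimage_neg]

theorem IsLift.neg (h : IsLift f E γ J) :
    IsLift f (fun z => E (-z)) (fun t => γ (-t)) ((fun t => -t) ⁻¹' J) where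
  isOpen := h.isOpen.preimage continuous_neg
  ordConnected := h.ordConnected.preimage_anti fun _ _ hab => neg_le_neg hab
  continuousOn := h.continuousOn.comp continuous_neg.continuousOn fun _ ht => ht
  mem _ ht := (regularPoints_neg (f := f) (E := E)).symm ▸ h.mem _ ht
  apply_eq t ht := by simpa using h.apply_eq (-t) ht

theorem IsMaxLift.neg (h : IsMaxLift f E γ J) :
    IsMaxLift f (fun z => E (-z)) (fun t => γ (-t)) ((fun t => -t) ⁻¹' J) where
  toIsLift := h.toIsLift.neg
  nonempty := by
    obtain ⟨t, ht⟩ := h.nonempty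
    exact ⟨-t, by simpa using ht⟩
  maximal := by
    intro γ' J' hγ' u hu hu' huu t ht
    have hneg : IsLift f E (fun t => γ' (-t)) ((fun t => -t) ⁻¹' J') := by
      simpa using hγ'.neg
    exact h.maximal _ _ hneg (-u) hu (by simpa using hu') (by simpa using huu)
      (by simpa using ht)

theorem IsIsolatingNhd.neg {v : X} {θ ε : ℝ} {U : Set X} (h : IsIsolatingNhd f E T S v θ U ε) :
    IsIsolatingNhd f (fun z => E (-z)) T S v (-θ) U ε where
  isOpen := h.isOpen
  mem := h.mem
  pos := h.pos
  le_period := h.le_period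
  apply_eq := by simpa using h.apply_eq
  eq_of_mem_branch := h.eq_of_mem_branch
  eq_of_apply_eq x hx hfx := h.eq_of_apply_eq x hx (by simpa using hfx)
  mem_of_mem_closure z hz x hx hfx := h.mem_of_mem_closure (-z)
    (by rw [mem_ball, ← dist_neg_neg]; simpa using hz) x hx hfx

theorem IsBranchedOver.neg [TopologicalSpace Y] (h : IsBranchedOver f E T S) :
    IsBranchedOver f (fun z => E (-z)) T S where
  continuous_map := h.continuous_map
  continuous_param := h.continuous_param.comp continuous_neg
  isOpenMap_param := h.isOpenMap_param.comp (Homeomorph.neg ℂ).isOpenMap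
  period_pos := h.period_pos
  param_eq_iff z w := by
    rw [h.param_eq_iff]
    constructor
    · rintro ⟨n, hn⟩
      exact ⟨-n, by push_cast; linear_combination -hn⟩
    · rintro ⟨n, hn⟩
      exact ⟨-n, by push_cast; linear_combination -hn⟩
  finite_branch := h.finite_branch
  isLocalHomeomorphOn := h.isLocalHomeomorphOn
  finite_fiber z := h.finite_fiber (-z)

end Reflection

section Ends

variable {X Y : Type*} [TopologicalSpace X] {f : X → Y} {E : ℂ → Y}
  {T : ℝ} {S : Set X} {γ : ℝ → X} {J : Set ℝ} {a b : ℝ} {v : X} {θ ε : ℝ} {U : Set X}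

theorem IsIsolatingNhd.lift_mem (hU : IsIsolatingNhd f E T S v θ U ε) (hγ : IsLift f E γ J)
    {s t : ℝ} (hs : s ∈ J ∩ Ioo (θ - ε) (θ + ε)) (ht : t ∈ J ∩ Ioo (θ - ε) (θ + ε))
    (hsU : γ s ∈ U) : γ t ∈ U := by
  have hpre : IsPreconnected (γ '' (J ∩ Ioo (θ - ε) (θ + ε))) :=
    (hγ.ordConnected.inter ordConnected_Ioo).isPreconnected.image γ
      (hγ.continuousOn.mono inter_subset_left)
  refine hpre.subset_of_closure_inter_subset hU.isOpen ⟨γ s, mem_image_of_mem γ hs, hsU⟩ ?_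
    (mem_image_of_mem γ ht)
  rintro _ ⟨hcl, u, ⟨huJ, hu⟩, rfl⟩
  refine hU.mem_of_mem_closure u ?_ _ hcl (hγ.apply_eq u huJ)
  rw [mem_ball, Complex.dist_eq, ← Complex.ofReal_sub, Complex.norm_real, Real.norm_eq_abs, abs_lt]
  constructor <;> linarith [hu.1, hu.2]

theorem IsLift.eventually_mem (hγ : IsLift f E γ J) (hne : J.Nonempty) (hb : IsLUB J b) :
    ∀ᶠ t in 𝓝[<] b, t ∈ J := by
  obtain ⟨t₀, ht₀⟩ := hne
  have hlt : t₀ < b := (hb.1 ht₀).lt_of_ne fun h =>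
    notMem_of_isLUB_of_isOpen hγ.isOpen hb (h ▸ ht₀)
  filter_upwards [Ioo_mem_nhdsLT hlt] with t ht
  obtain ⟨s, hs, hts⟩ := (lt_isLUB_iff hb).1 ht.2
  exact hγ.ordConnected.out ht₀ hs ⟨ht.1.le, hts.le⟩

variable [TopologicalSpace Y]

theorem IsBranchedOver.tendsto_apply (h : IsBranchedOver f E T S) (hγ : IsLift f E γ J)
    (hne : J.Nonempty) (hb : IsLUB J b) : Tendsto (f ∘ γ) (𝓝[<] b) (𝓝 (E b)) := by
  have hc : Continuous fun t : ℝ => E t := h.continuous_param.comp Complex.continuous_ofReal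
  refine ((hc.tendsto b).mono_left nhdsWithin_le_nhds).congr' ?_
  filter_upwards [hγ.eventually_mem hne hb] with t ht using (hγ.apply_eq t ht).symm

theorem IsBranchedOver.exists_tendsto_right [T2Space X] [CompactSpace X] [T2Space Y]
    [∀ x : X, (𝓝[≠] x).NeBot] (h : IsBranchedOver f E T S)
    (hγ : IsMaxLift f E γ J) (hb : IsLUB J b) :
    ∃ v ∈ branchPoints f E, f v = E b ∧ Tendsto γ (𝓝[<] b) (𝓝 v) := by
  have hbJ := notMem_of_isLUB_of_isOpen hγ.isOpen hb
  have hevJ := hγ.eventually_mem hγ.nonempty hb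
  have hfγ := h.tendsto_apply hγ.toIsLift hγ.nonempty hb
  obtain ⟨v, hv⟩ := exists_clusterPt_of_compactSpace (map γ (𝓝[<] b))
  have hclust : MapClusterPt v (𝓝[<] b) γ := hv
  have hfv : f v = E b := by
    have h1 : MapClusterPt (f v) (𝓝[<] b) (f ∘ γ) :=
      hclust.continuousAt_comp h.continuous_map.continuousAt
    have h2 : (𝓝 (f v) ⊓ 𝓝 (E b)).NeBot := NeBot.mono h1 (inf_le_inf_left _ hfγ)
    exact eq_of_nhds_neBot h2
  have hlim : Tendsto γ (𝓝[<] b) (𝓝 v) := by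
    intro W hW
    obtain ⟨U, ε, hU, hUW⟩ := h.exists_isIsolatingNhd hfv hW
    have hev : ∀ᶠ t in 𝓝[<] b, t ∈ J ∩ Ioo (b - ε) (b + ε) := by
      filter_upwards [hevJ, Ioo_mem_nhdsLT (show b - ε < b by linarith [hU.pos])] with t ht ht'
      exact ⟨ht, ht'.1, by linarith [ht'.2, hU.pos]⟩
    obtain ⟨s, hsU, hs⟩ := ((hclust.frequently (hU.isOpen.mem_nhds hU.mem)).and_eventually hev).exists
    change ∀ᶠ t in 𝓝[<] b, γ t ∈ W
    filter_upwards [hev] with t ht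
    exact hUW (subset_closure (hU.lift_mem hγ.toIsLift hs ht hsU))
  refine ⟨v, ⟨⟨b, hfv⟩, fun hreg => hbJ ?_⟩, hfv, hlim⟩
  obtain ⟨N, hN, γ', J', hγ', hbJ', -, huniq⟩ := h.exists_isLift ⟨⟨b, hfv⟩, hreg⟩ hfv
  obtain ⟨t, ⟨htJ, htN⟩, htJ'⟩ := ((hevJ.and (hlim.eventually hN)).and
    (mem_nhdsWithin_of_mem_nhds (hγ'.isOpen.mem_nhds hbJ'))).exists
  exact hγ.maximal γ' J' hγ' t htJ htJ' (huniq t htJ' _ htN (hγ.apply_eq t htJ)).symm hbJ'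

theorem IsBranchedOver.exists_tendsto_left [T2Space X] [CompactSpace X] [T2Space Y]
    [∀ x : X, (𝓝[≠] x).NeBot] (h : IsBranchedOver f E T S)
    (hγ : IsMaxLift f E γ J) (ha : IsGLB J a) :
    ∃ v ∈ branchPoints f E, f v = E a ∧ Tendsto γ (𝓝[>] a) (𝓝 v) := by
  have hlub : IsLUB ((fun t => -t) ⁻¹' J) (-a) := by
    have : (fun t : ℝ => -t) ⁻¹' J = -J := rfl
    rw [this, isLUB_neg, neg_neg]
    exact ha
  obtain ⟨v, hv, hfv, hlim⟩ := h.neg.exists_tendsto_right hγ.neg hlub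
  refine ⟨v, (branchPoints_neg (f := f) (E := E)) ▸ hv, by simpa using hfv, ?_⟩
  simpa [Function.comp_def] using hlim.comp (tendsto_neg_nhdsGT (a := a))

end Ends

section Counting

variable {X Y : Type*} [TopologicalSpace X] [TopologicalSpace Y] {f : X → Y} {E : ℂ → Y}
  {T : ℝ} {S : Set X} {γ : ℝ → X} {J : Set ℝ} {a b : ℝ} {v : X} {θ ε : ℝ} {U : Set X}

theorem ofReal_mem_ball_iff {s θ ε : ℝ} : (s : ℂ) ∈ ball (θ : ℂ) ε ↔ s ∈ Ioo (θ - ε) (θ + ε) := by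
  rw [mem_ball, Complex.dist_eq, ← Complex.ofReal_sub, Complex.norm_real, Real.norm_eq_abs, abs_lt]
  constructor <;> rintro ⟨h₁, h₂⟩ <;> constructor <;> linarith

theorem IsBranchedOver.eq_center_of_mem_Ioo (h : IsBranchedOver f E T S) (hε : ε ≤ T) {s : ℝ}
    (hs : s ∈ Ioo (θ - ε) (θ + ε)) (hE : E s = E θ) : s = θ :=
  Complex.ofReal_injective (h.eq_center_of_mem_ball hε (ofReal_mem_ball_iff.2 hs) hE)

theorem IsBranchedOver.apply_eq_of_tendsto [T2Space Y] (h : IsBranchedOver f E T S)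
    (hab : a < b) (hγ : IsLift f E γ (Ioo a b)) (hlim : Tendsto γ (𝓝[<] b) (𝓝 v)) :
    f v = E b :=
  tendsto_nhds_unique ((h.continuous_map.tendsto v).comp hlim)
    (h.tendsto_apply hγ (nonempty_Ioo.2 hab) (isLUB_Ioo hab))

theorem IsBranchedOver.mem_regularPoints_of_mem_fiber (h : IsBranchedOver f E T S)
    (hU : IsIsolatingNhd f E T S v θ U ε) {t : ℝ} (ht : t ∈ Ioo (θ - ε) θ) {x : X} (hx : x ∈ U)
    (hfx : f x = E t) : x ∈ regularPoints f E := by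
  refine ⟨⟨t, hfx⟩, ?_⟩
  by_contra hnot
  refine h.notMem_branch hU (ofReal_mem_ball_iff.2 ⟨ht.1, by linarith [ht.2, hU.pos]⟩)
    (fun heq => ht.2.ne (Complex.ofReal_injective heq)) (subset_closure hx) hfx
    (h.branchPoints_subset ⟨⟨t, hfx⟩, hnot⟩)

variable [T2Space X]

theorem IsBranchedOver.exists_eq_Ioo_of_ne_univ (h : IsBranchedOver f E T S)
    (hγ : IsMaxLift f E γ J) (hJ : J ≠ univ) : ∃ a b, a < b ∧ J = Ioo a b := by
  refine h.exists_eq_Ioo hγ ?_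
  by_contra hinj
  exact hJ (h.isJordanCurve_of_not_injOn hγ hinj).1

theorem IsBranchedOver.exists_of_mem_rightEdges [T2Space Y] (h : IsBranchedOver f E T S)
    (hv : f v = E θ) {e : Set X} (he : e ∈ rightEdges f E v) :
    ∃ γ a, a < θ ∧ IsMaxLift f E γ (Ioo a θ) ∧ e = γ '' Ioo a θ ∧ Tendsto γ (𝓝[<] θ) (𝓝 v) := by
  obtain ⟨γ, a, b, hab, hγ, rfl, hlim⟩ := he
  obtain ⟨n, hn⟩ := (h.param_eq_iff _ _).1
    ((h.apply_eq_of_tendsto hab hγ.toIsLift hlim).symm.trans hv)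
  have hn' : b = θ + n * T := by exact_mod_cast hn
  subst hn'
  have hshift := h.isMaxLift_shift hγ (-n)
  have hpre : (fun t : ℝ => t - ((-n : ℤ) : ℝ) * T) ⁻¹' Ioo a (θ + n * T) =
      Ioo (a - n * T) θ := by
    ext t
    simp only [mem_preimage, mem_Ioo, Int.cast_neg]
    constructor <;> rintro ⟨h₁, h₂⟩ <;> constructor <;> linarith
  rw [hpre] at hshift
  refine ⟨_, a - n * T, by linarith, hshift, ?_, hlim.comp ?_⟩
  · obtain ⟨t, ht⟩ := hshift.nonempty
    refine h.image_eq_image hγ hshift (s := t + n * T) (t := t) ?_ ht (by simp)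
    constructor <;> linarith [ht.1, ht.2]
  · refine tendsto_nhdsWithin_iff.2 ⟨?_, ?_⟩
    · have hc : Continuous fun t : ℝ => t - ((-n : ℤ) : ℝ) * T := by fun_prop
      refine (hc.tendsto' θ _ ?_).mono_left nhdsWithin_le_nhds
      push_cast
      ring
    · filter_upwards [self_mem_nhdsWithin] with t ht
      have ht' : t < θ := ht
      simp only [mem_Iio, Int.cast_neg]
      linarith

variable [CompactSpace X] [T2Space Y] [∀ x : X, (𝓝[≠] x).NeBot]

/-- A maximal lift through a point of an isolating neighbourhood of `v` lying over `t < θ` ends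
at `v` over `θ`. -/
theorem IsBranchedOver.exists_eq_Ioo_and_tendsto (h : IsBranchedOver f E T S)
    (hv : v ∈ branchPoints f E) (hU : IsIsolatingNhd f E T S v θ U ε) (hγ : IsMaxLift f E γ J)
    {t : ℝ} (htJ : t ∈ J) (ht : t ∈ Ioo (θ - ε) θ) (htU : γ t ∈ U) :
    ∃ a, a < θ ∧ J = Ioo a θ ∧ Tendsto γ (𝓝[<] θ) (𝓝 v) := by
  have hε := hU.pos
  have htI : t ∈ Ioo (θ - ε) (θ + ε) := ⟨ht.1, by linarith [ht.2]⟩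
  have hθ : θ ∉ J := fun hθJ => by
    have hU' := hU.lift_mem hγ.toIsLift ⟨htJ, htI⟩
      ⟨hθJ, by constructor <;> linarith⟩ htU
    have := hU.eq_of_apply_eq _ (subset_closure hU') (hγ.apply_eq θ hθJ)
    exact hv.2 (this ▸ (hγ.mem θ hθJ).2)
  obtain ⟨a, b, hab, rfl⟩ := h.exists_eq_Ioo_of_ne_univ hγ fun hJ => hθ (hJ ▸ mem_univ θ)
  have hbθ : b ≤ θ := by
    by_contra! hlt
    exact hθ ⟨htJ.1.trans ht.2, hlt⟩
  obtain ⟨v', hv', hfv', hlim⟩ := h.exists_tendsto_right hγ (isLUB_Ioo hab)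
  have hcl : v' ∈ closure U := by
    refine mem_closure_of_tendsto hlim ?_
    filter_upwards [Ioo_mem_nhdsLT htJ.2] with s hs
    exact hU.lift_mem hγ.toIsLift ⟨htJ, htI⟩ ⟨⟨htJ.1.trans hs.1, hs.2⟩,
      ht.1.trans hs.1, by linarith [hs.2]⟩ htU
  obtain rfl := hU.eq_of_mem_branch v' hcl (h.branchPoints_subset hv')
  obtain rfl : b = θ := h.eq_center_of_mem_Ioo hU.le_period
    ⟨ht.1.trans htJ.2, by linarith⟩ (hfv'.symm.trans hU.apply_eq)
  exact ⟨a, hab, rfl, hlim⟩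

theorem IsBranchedOver.mem_of_tendsto (h : IsBranchedOver f E T S)
    (hU : IsIsolatingNhd f E T S v θ U ε) (haθ : a < θ) (hγ : IsMaxLift f E γ (Ioo a θ))
    (hlim : Tendsto γ (𝓝[<] θ) (𝓝 v)) {t : ℝ} (ht : t ∈ Ioo (θ - ε) θ) :
    t ∈ Ioo a θ ∧ γ t ∈ U := by
  have hε := hU.pos
  have hmax : max a (θ - ε) < θ := max_lt haθ (by linarith)
  obtain ⟨s, hsU, hs⟩ := ((hlim.eventually (hU.isOpen.mem_nhds hU.mem)).and
    (Ioo_mem_nhdsLT hmax)).exists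
  have hs' : s ∈ Ioo a θ ∩ Ioo (θ - ε) (θ + ε) :=
    ⟨⟨(le_max_left _ _).trans_lt hs.1, hs.2⟩, (le_max_right _ _).trans_lt hs.1,
      by linarith [hs.2]⟩
  suffices hat : a < t from
    ⟨⟨hat, ht.2⟩, hU.lift_mem hγ.toIsLift hs' ⟨⟨hat, ht.2⟩, ht.1, by linarith [ht.2]⟩ hsU⟩
  by_contra! hta
  obtain ⟨w, hw, hfw, hlim'⟩ := h.exists_tendsto_left hγ (isGLB_Ioo haθ)
  have hcl : w ∈ closure U := by
    refine mem_closure_of_tendsto hlim' ?_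
    filter_upwards [Ioo_mem_nhdsGT haθ] with u hu
    exact hU.lift_mem hγ.toIsLift hs' ⟨hu, (ht.1.trans_le hta).trans hu.1,
      by linarith [hu.2]⟩ hsU
  obtain rfl := hU.eq_of_mem_branch w hcl (h.branchPoints_subset hw)
  exact haθ.ne (h.eq_center_of_mem_Ioo hU.le_period
    ⟨ht.1.trans_le hta, by linarith⟩ (hfw.symm.trans hU.apply_eq))

theorem IsBranchedOver.rightEdges_eq_image (h : IsBranchedOver f E T S)
    (hv : v ∈ branchPoints f E) (hU : IsIsolatingNhd f E T S v θ U ε) {t : ℝ}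
    (ht : t ∈ Ioo (θ - ε) θ) :
    rightEdges f E v = connectedComponentIn (regularPoints f E) '' {x ∈ U | f x = E t} := by
  ext e
  constructor
  · intro he
    obtain ⟨γ, a, haθ, hγ, rfl, hlim⟩ := h.exists_of_mem_rightEdges hU.apply_eq he
    obtain ⟨htJ, htU⟩ := h.mem_of_tendsto hU haθ hγ hlim ht
    exact ⟨γ t, ⟨htU, hγ.apply_eq t htJ⟩, h.connectedComponentIn_eq hγ htJ⟩
  · rintro ⟨x, ⟨hxU, hfx⟩, rfl⟩
    obtain ⟨γ, J, hγ, htJ, rfl⟩ :=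
      h.exists_isMaxLift (h.mem_regularPoints_of_mem_fiber hU ht hxU hfx) hfx
    obtain ⟨a, haθ, rfl, hlim⟩ := h.exists_eq_Ioo_and_tendsto hv hU hγ htJ ht hxU
    exact ⟨γ, a, θ, haθ, hγ, h.connectedComponentIn_eq hγ htJ, hlim⟩

theorem IsBranchedOver.injOn_connectedComponentIn (h : IsBranchedOver f E T S)
    (hv : v ∈ branchPoints f E) (hU : IsIsolatingNhd f E T S v θ U ε) {t : ℝ}
    (ht : t ∈ Ioo (θ - ε) θ) :
    InjOn (connectedComponentIn (regularPoints f E)) {x ∈ U | f x = E t} := by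
  rintro x ⟨hxU, hfx⟩ y ⟨hyU, hfy⟩ hxy
  obtain ⟨γ₁, J₁, hγ₁, htJ₁, rfl⟩ :=
    h.exists_isMaxLift (h.mem_regularPoints_of_mem_fiber hU ht hxU hfx) hfx
  obtain ⟨γ₂, J₂, hγ₂, htJ₂, rfl⟩ :=
    h.exists_isMaxLift (h.mem_regularPoints_of_mem_fiber hU ht hyU hfy) hfy
  obtain ⟨a₁, ha₁, rfl, -⟩ := h.exists_eq_Ioo_and_tendsto hv hU hγ₁ htJ₁ ht hxU
  obtain ⟨a₂, ha₂, rfl, -⟩ := h.exists_eq_Ioo_and_tendsto hv hU hγ₂ htJ₂ ht hyU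
  rw [h.connectedComponentIn_eq hγ₁ htJ₁, h.connectedComponentIn_eq hγ₂ htJ₂] at hxy
  obtain ⟨s, hs, hst⟩ : γ₁ t ∈ γ₂ '' Ioo a₂ θ := hxy ▸ mem_image_of_mem γ₁ htJ₁
  obtain ⟨n, hn, hJ, heq⟩ := h.exists_shift_eq hγ₁ hγ₂ htJ₁ hs hst.symm
  have hpre : (fun t : ℝ => t - n * T) ⁻¹' Ioo a₂ θ = Ioo (a₂ + n * T) (θ + n * T) := by
    ext u
    simp only [mem_preimage, mem_Ioo]
    constructor <;> rintro ⟨h₁, h₂⟩ <;> constructor <;> linarith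
  have hlub : IsLUB (Ioo a₁ θ) (θ + n * T) := by
    rw [hJ, hpre]
    exact isLUB_Ioo (by linarith)
  have hnT : (n : ℝ) * T = 0 := by linarith [hlub.unique (isLUB_Ioo ha₁)]
  simpa [hnT] using heq t htJ₁

theorem IsBranchedOver.ncard_rightEdges (h : IsBranchedOver f E T S)
    (hv : v ∈ branchPoints f E) (hU : IsIsolatingNhd f E T S v θ U ε) {t : ℝ}
    (ht : t ∈ Ioo (θ - ε) θ) :
    (rightEdges f E v).ncard = {x ∈ U | f x = E t}.ncard := by
  rw [h.rightEdges_eq_image hv hU ht, (h.injOn_connectedComponentIn hv hU ht).ncard_image]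

theorem IsBranchedOver.finite_rightEdges (h : IsBranchedOver f E T S)
    (hv : v ∈ branchPoints f E) : (rightEdges f E v).Finite := by
  obtain ⟨θ, hθ⟩ := hv.1
  obtain ⟨U, ε, hU, -⟩ := h.exists_isIsolatingNhd hθ univ_mem
  have hε := hU.pos
  rw [h.rightEdges_eq_image hv hU (t := θ - ε / 2) ⟨by linarith, by linarith⟩]
  exact ((h.finite_fiber _).subset fun x hx => hx.2).image _

theorem IsBranchedOver.ncard_leftEdges_eq (h : IsBranchedOver f E T S)
    (hv : v ∈ branchPoints f E) :
    (rightEdges f (fun z => E (-z)) v).ncard = (rightEdges f E v).ncard ∧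
      2 ≤ (rightEdges f E v).ncard := by
  obtain ⟨θ, hθ⟩ := hv.1
  obtain ⟨U, ε, hU, -⟩ := h.exists_isIsolatingNhd hθ univ_mem
  have hε := hU.pos
  have hv' : v ∈ branchPoints f (fun z => E (-z)) := by rwa [branchPoints_neg]
  have hmem : ∀ s : ℝ, s ∈ Ioo (θ - ε) (θ + ε) → s ≠ θ → (s : ℂ) ∈ ball (θ : ℂ) ε \ {(θ : ℂ)} :=
    fun s hs hne => ⟨ofReal_mem_ball_iff.2 hs, fun heq => hne (Complex.ofReal_injective heq)⟩
  have hm : ((θ - ε / 2 : ℝ) : ℂ) ∈ ball (θ : ℂ) ε \ {(θ : ℂ)} :=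
    hmem _ ⟨by linarith, by linarith⟩ (by linarith)
  have hp : ((θ + ε / 2 : ℝ) : ℂ) ∈ ball (θ : ℂ) ε \ {(θ : ℂ)} :=
    hmem _ ⟨by linarith, by linarith⟩ (by linarith)
  rw [h.ncard_rightEdges hv hU (t := θ - ε / 2) ⟨by linarith, by linarith⟩,
    h.neg.ncard_rightEdges hv' hU.neg (t := -(θ + ε / 2)) ⟨by linarith, by linarith⟩]
  refine ⟨?_, h.two_le_ncard_fiber hv hU hm⟩
  rw [h.ncard_fiber_eq hU hm hp]
  simp only [Complex.ofReal_neg, neg_neg]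

end Counting

theorem closure_image_Ioo {X : Type*} [TopologicalSpace X] [T2Space X] [RegularSpace X]
    {γ : ℝ → X} {a b : ℝ} (hab : a < b) (hγ : ContinuousOn γ (Ioo a b)) {u v : X}
    (hu : Tendsto γ (𝓝[>] a) (𝓝 u)) (hv : Tendsto γ (𝓝[<] b) (𝓝 v)) :
    closure (γ '' Ioo a b) = γ '' Ioo a b ∪ {u, v} := by
  refine Subset.antisymm ?_ (union_subset subset_closure ?_)
  · have hc := continuousOn_Icc_extendFrom_Ioo hγ hu hv
    have hsub : ∀ t ∈ Ioo a b, extendFrom (Ioo a b) γ t = γ t := fun t ht =>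
      extendFrom_eq (subset_closure ht) (hγ t ht)
    have himg : extendFrom (Ioo a b) γ '' Icc a b ⊆ γ '' Ioo a b ∪ {u, v} := by
      rintro _ ⟨t, ht, rfl⟩
      rcases ht.1.eq_or_lt with rfl | hat
      · exact Or.inr (Or.inl (eq_lim_at_left_extendFrom_Ioo hab hu))
      rcases ht.2.eq_or_lt with rfl | htb
      · exact Or.inr (Or.inr (eq_lim_at_right_extendFrom_Ioo hab hv))
      · exact Or.inl ⟨t, ⟨hat, htb⟩, (hsub t ⟨hat, htb⟩).symm⟩
    refine (closure_minimal ?_ (isCompact_Icc.image_of_continuousOn hc).isClosed).trans himg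
    rintro _ ⟨t, ht, rfl⟩
    exact ⟨t, Ioo_subset_Icc_self ht, hsub t ht⟩
  · rintro _ (rfl | rfl)
    · refine mem_closure_of_tendsto hu ?_
      filter_upwards [Ioo_mem_nhdsGT hab] with t ht using mem_image_of_mem γ ht
    · refine mem_closure_of_tendsto hv ?_
      filter_upwards [Ioo_mem_nhdsLT hab] with t ht using mem_image_of_mem γ ht

/-- `e` is the image of a maximal lift over a bounded interval, converging to `u` at the left end
and to `v` at the right end. -/
def HasEnds {X Y : Type*} [TopologicalSpace X] (f : X → Y) (E : ℂ → Y) (e : Set X) (u v : X) :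
    Prop :=
  ∃ γ a b, a < b ∧ IsMaxLift f E γ (Ioo a b) ∧ e = γ '' Ioo a b ∧
    Tendsto γ (𝓝[>] a) (𝓝 u) ∧ Tendsto γ (𝓝[<] b) (𝓝 v)

section Edges

variable {X Y : Type*} [TopologicalSpace X] {f : X → Y} {E : ℂ → Y}
  {T : ℝ} {S : Set X} {e : Set X} {u v w : X}

theorem realPreimage_diff_branchPoints :
    realPreimage f E \ branchPoints f E = regularPoints f E := by
  ext x
  exact ⟨fun hx => ⟨hx.1, not_not.1 fun hn => hx.2 ⟨hx.1, hn⟩⟩,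
    fun hx => ⟨hx.1, fun hn => hn.2 hx.2⟩⟩

theorem HasEnds.neg (he : HasEnds f E e u v) : HasEnds f (fun z => E (-z)) e v u := by
  obtain ⟨γ, a, b, hab, hγ, rfl, hu, hv⟩ := he
  have hneg := hγ.neg
  have hpre : (fun t : ℝ => -t) ⁻¹' Ioo a b = Ioo (-b) (-a) := by
    ext t
    simp only [mem_preimage, mem_Ioo]
    constructor <;> rintro ⟨h₁, h₂⟩ <;> constructor <;> linarith
  rw [hpre] at hneg
  refine ⟨_, -b, -a, neg_lt_neg hab, hneg, ?_, hv.comp ?_, hu.comp ?_⟩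
  · rw [← hpre]
    ext x
    constructor
    · rintro ⟨t, ht, rfl⟩
      exact ⟨-t, by simpa using ht.symm, by simp⟩
    · rintro ⟨t, ht, rfl⟩
      exact ⟨-t, ht, rfl⟩
  · simpa using tendsto_neg_nhdsGT (a := -b)
  · simpa using tendsto_neg_nhdsLT (a := -a)

variable [TopologicalSpace Y] [T2Space X]

theorem HasEnds.mem_rightEdges_iff (h : IsBranchedOver f E T S) (he : HasEnds f E e u v) :
    e ∈ rightEdges f E w ↔ w = v := by
  obtain ⟨γ, a, b, hab, hγ, rfl, hu, hv⟩ := he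
  constructor
  · rintro ⟨γ₂, a₂, b₂, hab₂, hγ₂, heq, hlim⟩
    obtain ⟨t, ht⟩ := nonempty_Ioo.2 hab
    obtain ⟨s, hs, hst⟩ : γ t ∈ γ₂ '' Ioo a₂ b₂ := heq ▸ mem_image_of_mem γ ht
    obtain ⟨n, -, hJ, hshift⟩ := h.exists_shift_eq hγ hγ₂ ht hs hst.symm
    have hpre : (fun t : ℝ => t - n * T) ⁻¹' Ioo a₂ b₂ = Ioo (a₂ + n * T) (b₂ + n * T) := by
      ext u
      simp only [mem_preimage, mem_Ioo]
      constructor <;> rintro ⟨h₁, h₂⟩ <;> constructor <;> linarith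
    have hlub : IsLUB (Ioo a b) (b₂ + n * T) := by
      rw [hJ, hpre]
      exact isLUB_Ioo (by linarith)
    obtain rfl : b = b₂ + n * T := (isLUB_Ioo hab).unique hlub
    refine tendsto_nhds_unique (l := 𝓝[<] (b₂ + n * T))
      (hlim.comp (f := fun t => t - n * T) ?_) (hv.congr' ?_)
    · refine tendsto_nhdsWithin_iff.2 ⟨?_, ?_⟩
      · have hc : Continuous fun t : ℝ => t - n * T := by fun_prop
        exact (hc.tendsto' _ _ (by ring)).mono_left nhdsWithin_le_nhds
      · filter_upwards [self_mem_nhdsWithin] with t ht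
        have ht' : t < b₂ + n * T := ht
        simp only [mem_Iio]
        linarith
    · filter_upwards [Ioo_mem_nhdsLT hab] with t ht using hshift t ht
  · rintro rfl
    exact ⟨γ, a, b, hab, hγ, rfl, hv⟩

theorem HasEnds.mem_leftEdges_iff (h : IsBranchedOver f E T S) (he : HasEnds f E e u v) :
    e ∈ rightEdges f (fun z => E (-z)) w ↔ w = u :=
  he.neg.mem_rightEdges_iff h.neg

variable [CompactSpace X] [T2Space Y] [∀ x : X, (𝓝[≠] x).NeBot]

theorem IsBranchedOver.exists_hasEnds (h : IsBranchedOver f E T S) {γ : ℝ → X} {a b : ℝ}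
    (hab : a < b) (hγ : IsMaxLift f E γ (Ioo a b)) :
    ∃ u v, HasEnds f E (γ '' Ioo a b) u v := by
  obtain ⟨u, -, -, hu⟩ := h.exists_tendsto_left hγ (isGLB_Ioo hab)
  obtain ⟨v, -, -, hv⟩ := h.exists_tendsto_right hγ (isLUB_Ioo hab)
  exact ⟨u, v, γ, a, b, hab, hγ, rfl, hu, hv⟩

theorem IsBranchedOver.exists_hasEnds_of_mem_rightEdges (h : IsBranchedOver f E T S)
    (he : e ∈ rightEdges f E v) : ∃ u, HasEnds f E e u v := by
  have he' := he
  obtain ⟨γ, a, b, hab, hγ, rfl, -⟩ := he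
  obtain ⟨u, w, huw⟩ := h.exists_hasEnds hab hγ
  exact ⟨u, ((huw.mem_rightEdges_iff h).1 he') ▸ huw⟩

theorem IsBranchedOver.exists_hasEnds_of_mem_leftEdges (h : IsBranchedOver f E T S)
    (he : e ∈ rightEdges f (fun z => E (-z)) u) : ∃ v, HasEnds f E e u v := by
  obtain ⟨v, hv⟩ := h.neg.exists_hasEnds_of_mem_rightEdges he
  exact ⟨v, by simpa using hv.neg⟩

theorem HasEnds.right_mem_branchPoints (h : IsBranchedOver f E T S) (he : HasEnds f E e u v) :
    v ∈ branchPoints f E := by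
  obtain ⟨γ, a, b, hab, hγ, rfl, hu, hv⟩ := he
  obtain ⟨v', hv', -, hlim⟩ := h.exists_tendsto_right hγ (isLUB_Ioo hab)
  exact tendsto_nhds_unique hv hlim ▸ hv'

theorem HasEnds.left_mem_branchPoints (h : IsBranchedOver f E T S) (he : HasEnds f E e u v) :
    u ∈ branchPoints f E := by
  simpa only [branchPoints_neg] using he.neg.right_mem_branchPoints h.neg

theorem HasEnds.closure_diff (h : IsBranchedOver f E T S) (he : HasEnds f E e u v) :
    closure e \ e = {u, v} := by
  have hub := he.left_mem_branchPoints h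
  have hvb := he.right_mem_branchPoints h
  obtain ⟨γ, a, b, hab, hγ, rfl, hu, hv⟩ := he
  rw [closure_image_Ioo hab hγ.continuousOn hu hv, union_sdiff_left, sdiff_eq_left]
  refine disjoint_left.2 ?_
  rintro x hx ⟨t, ht, rfl⟩
  have hreg := (hγ.mem t ht).2
  rcases hx with hx | hx <;> rw [hx] at hreg
  · exact hub.2 hreg
  · exact hvb.2 hreg

theorem HasEnds.isSimpleArc (h : IsBranchedOver f E T S) (he : HasEnds f E e u v) :
    IsSimpleArc e := by
  obtain ⟨γ, a, b, hab, hγ, rfl, -⟩ := he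
  exact h.isSimpleArc hab hγ

theorem HasEnds.mem_setComponents (h : IsBranchedOver f E T S) (he : HasEnds f E e u v) :
    e ∈ setComponents (regularPoints f E) := by
  obtain ⟨γ, a, b, hab, hγ, rfl, -⟩ := he
  obtain ⟨t, ht⟩ := hγ.nonempty
  exact ⟨γ t, hγ.mem t ht, (h.connectedComponentIn_eq hγ ht).symm⟩

theorem IsBranchedOver.isJordanCurve_or_hasEnds (h : IsBranchedOver f E T S)
    (he : e ∈ setComponents (regularPoints f E)) :
    (IsJordanCurve e ∧ IsClosed e ∧
      e ∈ connectedComponentIn (regularPoints f E) '' {x | f x = E (0 : ℝ)}) ∨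
    ∃ u v, HasEnds f E e u v := by
  obtain ⟨x, hx, rfl⟩ := he
  obtain ⟨t, ht⟩ := hx.1
  obtain ⟨γ, J, hγ, htJ, rfl⟩ := h.exists_isMaxLift hx ht
  rw [h.connectedComponentIn_eq hγ htJ]
  by_cases hinj : InjOn γ J
  · obtain ⟨a, b, hab, rfl⟩ := h.exists_eq_Ioo hγ hinj
    exact Or.inr (h.exists_hasEnds hab hγ)
  · obtain ⟨rfl, hcomp, hjordan⟩ := h.isJordanCurve_of_not_injOn hγ hinj
    exact Or.inl ⟨hjordan, hcomp.isClosed, γ 0, hγ.apply_eq 0 (mem_univ _),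
      h.connectedComponentIn_eq hγ (mem_univ _)⟩

theorem IsBranchedOver.finite_setComponents (h : IsBranchedOver f E T S) :
    (setComponents (regularPoints f E)).Finite := by
  have hV : (branchPoints f E).Finite := h.finite_branch.subset h.branchPoints_subset
  refine (((h.finite_fiber (0 : ℝ)).image (connectedComponentIn (regularPoints f E))).union
    (hV.biUnion fun v hv => h.finite_rightEdges hv)).subset fun e he => ?_
  rcases h.isJordanCurve_or_hasEnds he with ⟨-, -, hmem⟩ | ⟨u, v, huv⟩
  · exact Or.inl hmem
  · exact Or.inr (mem_biUnion (huv.right_mem_branchPoints h) ((huv.mem_rightEdges_iff h).2 rfl))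

theorem IsBranchedOver.setOf_mem_closure_diff (h : IsBranchedOver f E T S) :
    {e ∈ setComponents (regularPoints f E) | v ∈ closure e \ e} =
      rightEdges f E v ∪ rightEdges f (fun z => E (-z)) v := by
  ext e
  constructor
  · rintro ⟨he, hv⟩
    rcases h.isJordanCurve_or_hasEnds he with ⟨-, hcl, -⟩ | ⟨u, w, huw⟩
    · rw [hcl.closure_eq] at hv
      exact absurd hv.1 hv.2
    · rw [huw.closure_diff h] at hv
      rcases hv with rfl | rfl
      · exact Or.inr ((huw.mem_leftEdges_iff h).2 rfl)
      · exact Or.inl ((huw.mem_rightEdges_iff h).2 rfl)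
  · rintro (he | he)
    · obtain ⟨u, huv⟩ := h.exists_hasEnds_of_mem_rightEdges he
      exact ⟨huv.mem_setComponents h, by rw [huv.closure_diff h]; simp⟩
    · obtain ⟨u, huv⟩ := h.exists_hasEnds_of_mem_leftEdges he
      exact ⟨huv.mem_setComponents h, by rw [huv.closure_diff h]; simp⟩

theorem IsBranchedOver.setOf_closure_diff_eq_singleton (h : IsBranchedOver f E T S) :
    {e ∈ setComponents (regularPoints f E) | closure e \ e = {v}} =
      rightEdges f E v ∩ rightEdges f (fun z => E (-z)) v := by
  ext e
  constructor
  · rintro ⟨he, hv⟩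
    rcases h.isJordanCurve_or_hasEnds he with ⟨-, hcl, -⟩ | ⟨u, w, huw⟩
    · rw [hcl.closure_eq, sdiff_self] at hv
      exact absurd hv.symm (singleton_ne_empty v)
    · rw [huw.closure_diff h] at hv
      have hu : u = v := (hv ▸ mem_insert u {w} : u ∈ ({v} : Set X))
      have hw : w = v := (hv ▸ mem_insert_of_mem u rfl : w ∈ ({v} : Set X))
      exact ⟨(huw.mem_rightEdges_iff h).2 hw.symm, (huw.mem_leftEdges_iff h).2 hu.symm⟩
  · rintro ⟨hr, hl⟩
    obtain ⟨u, huv⟩ := h.exists_hasEnds_of_mem_rightEdges hr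
    obtain rfl := (huv.mem_leftEdges_iff h).1 hl
    exact ⟨huv.mem_setComponents h, by rw [huv.closure_diff h]; simp⟩

theorem IsBranchedOver.vertexDegree_eq (h : IsBranchedOver f E T S) (hv : v ∈ branchPoints f E) :
    vertexDegree (realPreimage f E) (branchPoints f E) v = 2 * (rightEdges f E v).ncard := by
  have hv' : v ∈ branchPoints f (fun z => E (-z)) := by rwa [branchPoints_neg]
  rw [vertexDegree, graphEdges, realPreimage_diff_branchPoints, h.setOf_mem_closure_diff,
    h.setOf_closure_diff_eq_singleton, ncard_union_add_ncard_inter _ _ (h.finite_rightEdges hv)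
    (h.neg.finite_rightEdges hv'), (h.ncard_leftEdges_eq hv).1, two_mul]

/-- The preimage of the real curve under a branched map is a lemniscate graph with vertices at the
branch points. -/
theorem IsBranchedOver.isLemniscateGraphWith (h : IsBranchedOver f E T S) :
    IsLemniscateGraphWith (realPreimage f E) (branchPoints f E) where
  vertex_subset := sep_subset _ _
  vertex_finite := h.finite_branch.subset h.branchPoints_subset
  edges_finite := by
    rw [graphEdges, realPreimage_diff_branchPoints]
    exact h.finite_setComponents
  edge_shape e he := by
    rw [graphEdges, realPreimage_diff_branchPoints] at he
    rcases h.isJordanCurve_or_hasEnds he with ⟨hj, -⟩ | ⟨u, v, huv⟩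
    · exact Or.inl hj
    · refine Or.inr ⟨huv.isSimpleArc h, ?_⟩
      rw [huv.closure_diff h]
      rintro _ (rfl | rfl)
      exacts [huv.left_mem_branchPoints h, huv.right_mem_branchPoints h]
  degree_even v hv := by
    rw [h.vertexDegree_eq hv]
    exact even_two_mul _
  degree_ge_four v hv := by
    rw [h.vertexDegree_eq hv]
    linarith [(h.ncard_leftEdges_eq hv).2]

end Edges

section RationalMap

theorem Polynomial.ne_zero_of_isCoprime_of_natDegree {p q : ℂ[X]} (hpq : IsCoprime p q)
    (hdeg : ¬(p.natDegree = 0 ∧ q.natDegree = 0)) : q ≠ 0 := by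
  rintro rfl
  exact hdeg ⟨natDegree_eq_zero_of_isUnit (isCoprime_zero_right.1 hpq), natDegree_zero⟩

theorem Polynomial.sub_C_mul_ne_zero {p q : ℂ[X]} (hpq : IsCoprime p q)
    (hdeg : ¬(p.natDegree = 0 ∧ q.natDegree = 0)) (w : ℂ) : p - C w * q ≠ 0 := by
  intro h0
  have hp : p = C w * q := sub_eq_zero.1 h0
  have hq : q.natDegree = 0 :=
    natDegree_eq_zero_of_isUnit (hpq.isUnit_of_dvd' (hp ▸ dvd_mul_left q (C w)) dvd_rfl)
  refine hdeg ⟨?_, hq⟩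
  rw [hp, ← Nat.le_zero, ← hq]
  exact natDegree_C_mul_le w q

theorem Polynomial.wronskian_ne_zero {p q : ℂ[X]} (hpq : IsCoprime p q)
    (hdeg : ¬(p.natDegree = 0 ∧ q.natDegree = 0)) : wronskian p q ≠ 0 := by
  intro h0
  obtain ⟨hp, hq⟩ := hpq.wronskian_eq_zero_iff.1 h0
  exact hdeg ⟨derivative_eq_zero.1 hp, derivative_eq_zero.1 hq⟩

theorem Polynomial.isLocalHomeomorphOn_div (p q : ℂ[X]) :
    IsLocalHomeomorphOn (fun z => p.eval z / q.eval z)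
      {z | q.eval z ≠ 0 ∧ (wronskian p q).eval z ≠ 0} := by
  refine IsLocalHomeomorphOn.mk _ _ fun z hz => ?_
  have hder : HasStrictDerivAt (fun z => p.eval z / q.eval z)
      (((derivative p).eval z * q.eval z - p.eval z * (derivative q).eval z) / q.eval z ^ 2) z :=
    (p.hasStrictDerivAt z).fun_div (q.hasStrictDerivAt z) hz.1
  have hne : ((derivative p).eval z * q.eval z - p.eval z * (derivative q).eval z) /
      q.eval z ^ 2 ≠ 0 := by
    refine div_ne_zero (fun h0 => hz.2 ?_) (pow_ne_zero 2 hz.1)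
    simp only [wronskian, eval_sub, eval_mul]
    linear_combination -h0
  exact ⟨(hder.hasStrictFDerivAt_equiv hne).toOpenPartialHomeomorph _,
    HasStrictFDerivAt.mem_toOpenPartialHomeomorph_source _, fun _ _ => rfl⟩

theorem isLocalHomeomorphOn_of_eq_div {r : OnePoint ℂ → OnePoint ℂ} {p q : ℂ[X]}
    (hr : ∀ z : ℂ, q.eval z ≠ 0 → r z = ((p.eval z / q.eval z : ℂ) : OnePoint ℂ)) :
    IsLocalHomeomorphOn r
      ((↑) '' {z : ℂ | q.eval z ≠ 0 ∧ (wronskian p q).eval z ≠ 0}) := by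
  have hcoe : IsLocalHomeomorph ((↑) : ℂ → OnePoint ℂ) :=
    OnePoint.isOpenEmbedding_coe.isLocalHomeomorph
  have hdiv := (hcoe.isLocalHomeomorphOn (s := univ)).comp (p.isLocalHomeomorphOn_div q)
    (mapsTo_univ _ _)
  refine IsLocalHomeomorphOn.of_comp_right (f := ((↑) : ℂ → OnePoint ℂ)) ?_
    (hcoe.isLocalHomeomorphOn)
  refine IsLocalHomeomorphOn.mk _ _ fun z hz => ?_
  obtain ⟨e, hze, he⟩ := hdiv z hz
  have hopen : IsOpen {z : ℂ | q.eval z ≠ 0} := isOpen_ne_fun q.continuous continuous_const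
  refine ⟨e.restrOpen _ hopen, ⟨hze, hz.1⟩, fun w hw => ?_⟩
  have hw' : q.eval w ≠ 0 := hw.2
  exact (hr w hw').trans (congrFun he w)

theorem Polynomial.finite_setOf_eval_eq_zero {p : ℂ[X]} (hp : p ≠ 0) :
    {z : ℂ | p.eval z = 0}.Finite :=
  finite_setOfPred_isRoot hp

/-- The universal covering `z ↦ exp (i z)` of the punctured plane, as a map into the sphere. -/
def sphereExp (z : ℂ) : OnePoint ℂ := (Complex.exp (z * Complex.I) : ℂ)

theorem sphereExp_eq_iff (z w : ℂ) :
    sphereExp z = sphereExp w ↔ ∃ n : ℤ, z = w + n * ((2 * Real.pi : ℝ) : ℂ) := by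
  rw [sphereExp, sphereExp, OnePoint.coe_eq_coe, Complex.exp_eq_exp_iff_exists_int]
  refine exists_congr fun n => ?_
  rw [← mul_left_inj' Complex.I_ne_zero (a := z)]
  push_cast
  ring_nf

theorem isOpenMap_sphereExp : IsOpenMap sphereExp :=
  OnePoint.isOpenEmbedding_coe.isOpenMap.comp
    (Complex.isOpenMap_exp.comp (Homeomorph.mulRight₀ _ Complex.I_ne_zero).isOpenMap)

theorem continuous_sphereExp : Continuous sphereExp :=
  OnePoint.continuous_coe.comp (by fun_prop)

theorem IsRationalMap.exists_isBranchedOver {r : OnePoint ℂ → OnePoint ℂ} (hr : IsRationalMap r) :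
    ∃ S, IsBranchedOver r sphereExp (2 * Real.pi) S := by
  obtain ⟨hcont, p, q, hpq, hdeg, hdiv⟩ := hr
  have hqfin := finite_setOf_eval_eq_zero (ne_zero_of_isCoprime_of_natDegree hpq hdeg)
  refine ⟨((↑) '' {z : ℂ | q.eval z ≠ 0 ∧ (wronskian p q).eval z ≠ 0})ᶜ, hcont,
    continuous_sphereExp, isOpenMap_sphereExp, Real.two_pi_pos, sphereExp_eq_iff, ?_, ?_, ?_⟩
  · refine ((finite_singleton OnePoint.infty).union ((hqfin.union
      (finite_setOf_eval_eq_zero (wronskian_ne_zero hpq hdeg))).image (↑))).subset fun x hx => ?_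
    induction x using OnePoint.rec with
    | infty => exact Or.inl rfl
    | coe z =>
      refine Or.inr ⟨z, ?_, rfl⟩
      by_contra hz
      exact hx ⟨z, ⟨fun h => hz (Or.inl h), fun h => hz (Or.inr h)⟩, rfl⟩
  · rw [compl_compl]
    exact isLocalHomeomorphOn_of_eq_div hdiv
  · intro w
    refine ((finite_singleton OnePoint.infty).union ((hqfin.union
      (finite_setOf_eval_eq_zero (sub_C_mul_ne_zero hpq hdeg
        (Complex.exp (w * Complex.I))))).image (↑))).subset fun x hx => ?_
    induction x using OnePoint.rec with
    | infty => exact Or.inl rfl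
    | coe z =>
      refine Or.inr ⟨z, ?_, rfl⟩
      by_cases hz : q.eval z = 0
      · exact Or.inl hz
      · have hx' : r z = sphereExp w := hx
        rw [hdiv z hz, sphereExp, OnePoint.coe_eq_coe, div_eq_iff hz] at hx'
        refine Or.inr ?_
        change (p - C _ * q).eval z = 0
        rw [eval_sub, eval_mul, eval_C, hx', sub_self]

theorem lemniscate_eq_realPreimage (r : OnePoint ℂ → OnePoint ℂ) :
    lemniscate r = realPreimage r sphereExp := by
  ext x
  constructor
  · rintro ⟨w, hw, hwx⟩
    obtain ⟨t, ht⟩ := (Complex.norm_eq_one_iff w).1 hw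
    exact ⟨t, by rw [← hwx, ← ht]; rfl⟩
  · rintro ⟨t, ht⟩
    exact ⟨Complex.exp (t * Complex.I), Complex.norm_exp_ofReal_mul_I t, ht.symm⟩

end RationalMap

/-- Any rational lemniscate is a lemniscate graph, with vertex set the set of points
of the lemniscate at which the map is not locally injective (its critical points). -/
theorem rational_lemniscate_is_graph
    (r : OnePoint ℂ → OnePoint ℂ) (hr : IsRationalMap r) :
    IsLemniscateGraphWith (lemniscate r)
      {z ∈ lemniscate r | ¬ ∃ U ∈ 𝓝 z, Set.InjOn r U} := by
  obtain ⟨S, hS⟩ := hr.exists_isBranchedOver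
  rw [lemniscate_eq_realPreimage]
  exact hS.isLemniscateGraphWith

end
end

section
/- Let Ω ⊂ ℂ be a bounded lemniscate domain, let z₀ ∈ Ω, and set γ := ∂Ω. Let (δ_n) be a sequence of positive reals converging to 0, and for each n let h_n : γ → ℂ be a continuous injective map with sup_{z ∈ γ} |h_n(z) − z| < δ_n; assume z₀ ∉ h_n(γ) and let Ω_n be the connected component of ℂ \ h_n(γ) containing z₀. Suppose φ, φ_n : closure(𝔻) → ℂ are continuous maps that are injective and holomorphic on the open unit disc 𝔻, with φ(𝔻) = Ω, φ_n(𝔻) = Ω_n, φ(0) = φ_n(0) = z₀, and with φ′(0) and φ_n′(0) real and positive. Then φ_n → φ uniformly on closure(𝔻), i.e. sup_{z ∈ closure(𝔻)} |φ_n(z) − φ(z)| → 0 as n → ∞. -/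
open Set Metric Topology Filter Polynomial

noncomputable section

/-- A lemniscate domain: a simply connected open set whose boundary is a
lemniscate graph. -/
def IsLemniscateDomain (Ω : Set ℂ) : Prop :=
  IsOpen Ω ∧ SimplyConnectedSpace Ω ∧ IsLemniscateGraph (frontier Ω)

/-- An injective holomorphic function is open at each point. -/
lemma nhds_le_map_nhds_of_injOn {U : Set ℂ} (hU : IsOpen U) {f : ℂ → ℂ}
    (hf : DifferentiableOn ℂ f U) (hi : InjOn f U) {z : ℂ} (hz : z ∈ U) :
    𝓝 (f z) ≤ map f (𝓝 z) := by
  have han : AnalyticAt ℂ f z := hf.analyticAt (hU.mem_nhds hz)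
  refine han.eventually_constant_or_nhds_le_map_nhds.resolve_left fun hconst => ?_
  have h1 : ∀ᶠ w in 𝓝 z, w = z := by
    filter_upwards [hconst, hU.mem_nhds hz] with w hw hwU using hi hwU hz hw
  have h2 : ∃ᶠ w in 𝓝[≠] z, w ≠ z :=
    (eventually_mem_nhdsWithin (a := z) (s := {z}ᶜ)).frequently.mono fun w hw => hw
  exact h2 (by filter_upwards [h1.filter_mono nhdsWithin_le_nhds] with w hw using not_not.2 hw)

lemma isOpen_image_of_injOn {U : Set ℂ} (hU : IsOpen U) {f : ℂ → ℂ}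
    (hf : DifferentiableOn ℂ f U) (hi : InjOn f U) {s : Set ℂ} (hs : IsOpen s) (hsU : s ⊆ U) :
    IsOpen (f '' s) := by
  rw [isOpen_iff_mem_nhds]
  rintro _ ⟨z, hz, rfl⟩
  exact nhds_le_map_nhds_of_injOn hU hf hi (hsU hz) (image_mem_map (hs.mem_nhds hz))

/-- A local left inverse of an injective holomorphic function is continuous. -/
lemma continuousAt_of_leftInvOn {U : Set ℂ} (hU : IsOpen U) {f g : ℂ → ℂ}
    (hf : DifferentiableOn ℂ f U) (hi : InjOn f U) (hg : LeftInvOn g f U) {z : ℂ} (hz : z ∈ U) :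
    ContinuousAt g (f z) := by
  have h : Tendsto g (map f (𝓝 z)) (𝓝 (g (f z))) := by
    rw [tendsto_map'_iff, hg hz]
    refine tendsto_id.congr' ?_
    filter_upwards [hU.mem_nhds hz] with w hw using (hg hw).symm
  exact h.mono_left (nhds_le_map_nhds_of_injOn hU hf hi hz)

lemma eventually_deriv_ne_zero_of_injOn {U : Set ℂ} (hU : IsOpen U) {f : ℂ → ℂ}
    (hf : DifferentiableOn ℂ f U) (hi : InjOn f U) {z : ℂ} (hz : z ∈ U) :
    ∀ᶠ w in 𝓝[≠] z, deriv f w ≠ 0 := by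
  refine ((hf.analyticAt (hU.mem_nhds hz)).deriv.eventually_eq_zero_or_eventually_ne_zero
    ).resolve_left fun h0 => ?_
  obtain ⟨r, hr, hball⟩ := Metric.mem_nhds_iff.1 (inter_mem h0 (hU.mem_nhds hz))
  have hconst : ∀ w ∈ ball z r, f w = f z := fun w hw =>
    isOpen_ball.is_const_of_deriv_eq_zero (convex_ball z r).isPreconnected
      (hf.mono fun x hx => (hball hx).2) (fun x hx => (hball hx).1) hw (mem_ball_self hr)
  have hw : z + (r / 2 : ℝ) ∈ ball z r := by
    simp [abs_of_pos hr]; linarith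
  have := hi (hball hw).2 hz (hconst _ hw)
  simp at this
  exact hr.ne' this

/-- The inverse of an injective holomorphic function is holomorphic. -/
lemma differentiableOn_of_leftInvOn {U : Set ℂ} (hU : IsOpen U) {f g : ℂ → ℂ}
    (hf : DifferentiableOn ℂ f U) (hi : InjOn f U) (hg : LeftInvOn g f U) :
    DifferentiableOn ℂ g (f '' U) := by
  rintro _ ⟨z, hz, rfl⟩
  obtain ⟨V, hVsub, hVo, hzV⟩ := _root_.mem_nhds_iff.1
    (inter_mem (mem_nhdsWithin_iff_eventually.1 (eventually_deriv_ne_zero_of_injOn hU hf hi hz))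
      (hU.mem_nhds hz))
  have hVU : V ⊆ U := fun w hw => (hVsub hw).2
  have hopen : IsOpen (f '' V) := isOpen_image_of_injOn hU hf hi hVo hVU
  have hmem : f '' V ∈ 𝓝 (f z) := hopen.mem_nhds (mem_image_of_mem f hzV)
  have hd : DifferentiableOn ℂ g (f '' V \ {f z}) := by
    rintro _ ⟨⟨w, hw, rfl⟩, hne⟩
    have hwz : w ≠ z := fun h => hne (by simp [h])
    have hder : HasDerivAt f (deriv f (g (f w))) (g (f w)) := by
      rw [hg (hVU hw)]
      exact (hf.differentiableAt (hU.mem_nhds (hVU hw))).hasDerivAt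
    refine (HasDerivAt.of_local_left_inverse
      (continuousAt_of_leftInvOn hU hf hi hg (hVU hw)) hder ?_ ?_
      ).differentiableAt.differentiableWithinAt
    · rw [hg (hVU hw)]
      exact (hVsub hw).1 hwz
    · filter_upwards [hopen.mem_nhds (mem_image_of_mem f hw)]
      rintro _ ⟨x, hx, rfl⟩
      rw [hg (hVU hx)]
  exact (((Complex.differentiableOn_compl_singleton_and_continuousAt_iff hmem).1
    ⟨hd, continuousAt_of_leftInvOn hU hf hi hg hz⟩).differentiableAt hmem).differentiableWithinAt

lemma deriv_ne_zero_of_injOn {U : Set ℂ} (hU : IsOpen U) {f : ℂ → ℂ}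
    (hf : DifferentiableOn ℂ f U) (hi : InjOn f U) {z : ℂ} (hz : z ∈ U) : deriv f z ≠ 0 := by
  have hg : LeftInvOn (Function.invFunOn f U) f U := hi.leftInvOn_invFunOn
  have hgd := (differentiableOn_of_leftInvOn hU hf hi hg).differentiableAt
    ((isOpen_image_of_injOn hU hf hi hU subset_rfl).mem_nhds (mem_image_of_mem f hz))
  have hcomp := hgd.hasDerivAt.comp z (hf.differentiableAt (hU.mem_nhds hz)).hasDerivAt
  have hid : HasDerivAt (Function.invFunOn f U ∘ f) 1 z := by
    refine (hasDerivAt_id z).congr_of_eventuallyEq ?_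
    filter_upwards [hU.mem_nhds hz] with w hw using hg hw
  intro h0
  have := hcomp.unique hid
  simp [h0] at this

/-- A continuous extension of an injective holomorphic function sends boundary points outside
the image. -/
lemma notMem_image_of_mem_frontier {U : Set ℂ} (hU : IsOpen U) {f : ℂ → ℂ}
    (hc : ContinuousOn f (closure U)) (hf : DifferentiableOn ℂ f U) (hi : InjOn f U) {ξ : ℂ}
    (hξ : ξ ∈ closure U) (hξU : ξ ∉ U) : f ξ ∉ f '' U := by
  rintro ⟨ω, hω, hfω⟩
  obtain ⟨A, B, hA, hB, hωA, hξB, hAB⟩ := t2_separation (fun h => hξU (h ▸ hω) : ω ≠ ξ)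
  have hopen := isOpen_image_of_injOn hU hf hi (hA.inter hU) inter_subset_right
  have hmem : f '' (A ∩ U) ∈ 𝓝 (f ξ) := hopen.mem_nhds (hfω ▸ mem_image_of_mem f ⟨hωA, hω⟩)
  have hev : ∀ᶠ x in 𝓝[U] ξ, f x ∈ f '' (A ∩ U) :=
    ((hc ξ hξ).mono subset_closure).eventually hmem
  have hevB : ∀ᶠ x in 𝓝[U] ξ, x ∈ B := mem_nhdsWithin_of_mem_nhds (hB.mem_nhds hξB)
  have : (𝓝[U] ξ).NeBot := mem_closure_iff_nhdsWithin_neBot.1 hξ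
  obtain ⟨x, ⟨y, hy, hyx⟩, hxB, hxU⟩ := (hev.and (hevB.and eventually_mem_nhdsWithin)).exists
  exact disjoint_left.1 hAB hy.1 (hi hy.2 hxU hyx ▸ hxB)

/-- Continuous logarithms propagate along homotopies of nonvanishing functions. -/
lemma exists_continuousOn_log_of_homotopy {X : Type*} [TopologicalSpace X] {A : Set X}
    {H : ℝ → X → ℂ}
    (hH : ContinuousOn (Function.uncurry H) (Icc 0 1 ×ˢ A))
    (hne : ∀ t ∈ Icc (0 : ℝ) 1, ∀ x ∈ A, H t x ≠ 0)
    (h₀ : ∃ l : X → ℂ, ContinuousOn l A ∧ ∀ x ∈ A, Complex.exp (l x) = H 0 x) :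
    ∃ l : X → ℂ, ContinuousOn l A ∧ ∀ x ∈ A, Complex.exp (l x) = H 1 x := by
  classical
  obtain ⟨l, hl, hexp⟩ := h₀
  let Hc : C(unitInterval × A, {z : ℂ // z ≠ 0}) :=
    ⟨fun p => ⟨H p.1 p.2, hne p.1 p.1.2 p.2 p.2.2⟩, by
      refine Continuous.subtype_mk ?_ _
      exact hH.comp_continuous (f := fun p : unitInterval × A => ((p.1 : ℝ), (p.2 : X)))
        (by fun_prop) fun p => ⟨p.1.2, p.2.2⟩⟩
  let lc : C(A, ℂ) := ⟨fun a => l a, hl.comp_continuous continuous_subtype_val fun a => a.2⟩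
  have hz : ∀ a, Hc (0, a) = (⟨_, (lc a).exp_ne_zero⟩ : {z : ℂ // z ≠ 0}) := fun a => by
    apply Subtype.ext
    exact (hexp a a.2).symm
  let G := Complex.isCoveringMap_exp.liftHomotopy Hc lc hz
  have hG := Complex.isCoveringMap_exp.liftHomotopy_lifts Hc lc hz
  refine ⟨fun x => if hx : x ∈ A then G (1, ⟨x, hx⟩) else 0, ?_, fun x hx => ?_⟩
  · rw [continuousOn_iff_continuous_domRestrict]
    have : Continuous fun a : A => G (1, a) := by fun_prop
    convert this using 2 with a
    simp
  · have := congrArg Subtype.val (congrFun hG (1, ⟨x, hx⟩))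
    simp only [hx, dif_pos]
    exact this

lemma exists_continuousOn_log_of_starConvex {A : Set ℂ} {x₀ : ℂ} (hx₀ : x₀ ∈ A)
    (hA : StarConvex ℝ x₀ A) {q : ℂ → ℂ} (hq : ContinuousOn q A) (hne : ∀ x ∈ A, q x ≠ 0) :
    ∃ l : ℂ → ℂ, ContinuousOn l A ∧ ∀ x ∈ A, Complex.exp (l x) = q x := by
  have hmem : ∀ t ∈ Icc (0 : ℝ) 1, ∀ x ∈ A, x₀ + t • (x - x₀) ∈ A := fun t ht x hx =>
    hA.add_smul_sub_mem hx ht.1 ht.2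
  have := exists_continuousOn_log_of_homotopy (A := A) (H := fun t x => q (x₀ + t • (x - x₀)))
    (hq.comp (by fun_prop) fun p hp => hmem p.1 hp.1 p.2 hp.2)
    (fun t ht x hx => hne _ (hmem t ht x hx))
    ⟨fun _ => Complex.log (q x₀), continuousOn_const, fun x _ => by
      simp [Complex.exp_log (hne x₀ hx₀)]⟩
  simpa using this

/-- Two continuous logarithms of the same function on a preconnected set which agree at one point
agree everywhere. -/
lemma eqOn_of_exp_eq_exp {X : Type*} [TopologicalSpace X] {A : Set X} (hA : IsPreconnected A)
    {l m : X → ℂ} (hl : ContinuousOn l A) (hm : ContinuousOn m A)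
    (h : ∀ x ∈ A, Complex.exp (l x) = Complex.exp (m x)) {a : X} (ha : a ∈ A)
    (hla : l a = m a) : EqOn l m A :=
  Complex.isCoveringMap_exp.eqOn_of_comp_eqOn hA hl hm
    (fun x hx => Subtype.ext (h x hx)) ha hla

lemma not_exists_continuousOn_log_sphere {ω : ℂ} {R : ℝ} (hR : 0 < R) :
    ¬ ∃ l : ℂ → ℂ, ContinuousOn l (sphere ω R) ∧
      ∀ x ∈ sphere ω R, Complex.exp (l x) = x - ω := by
  rintro ⟨l, hl, hexp⟩
  have hmem : ∀ θ : ℝ, circleMap ω R θ ∈ sphere ω R := circleMap_mem_sphere ω hR.le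
  have hlc : Continuous fun θ : ℝ => l (circleMap ω R θ) :=
    hl.comp_continuous (continuous_circleMap ω R) hmem
  let m : ℝ → ℂ := fun θ => l (circleMap ω R 0) + θ * Complex.I
  have hm : Continuous m := by fun_prop
  have heq : EqOn (fun θ : ℝ => l (circleMap ω R θ)) m univ := by
    refine eqOn_of_exp_eq_exp isPreconnected_univ hlc.continuousOn hm.continuousOn
      (fun θ _ => ?_) (mem_univ 0) (by simp [m])
    simp only [m, Complex.exp_add, hexp _ (hmem _)]
    simp [circleMap]
  have h2 := heq (mem_univ (2 * Real.pi))
  have hper : circleMap ω R (2 * Real.pi) = circleMap ω R 0 := by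
    simpa using periodic_circleMap ω R 0
  simp [m, hper, Real.pi_ne_zero] at h2

/-- The function `z ↦ z - ω` has no continuous logarithm on the boundary of a bounded set
containing `ω`. -/
lemma not_exists_continuousOn_log_frontier {L : Set ℂ} (hL : Bornology.IsBounded L) {ω : ℂ}
    (hω : ω ∈ L) :
    ¬ ∃ l : ℂ → ℂ, ContinuousOn l (frontier L) ∧
      ∀ x ∈ frontier L, Complex.exp (l x) = x - ω := by
  classical
  rintro ⟨l, hl, hexp⟩
  obtain ⟨S, hS⟩ := ContinuousMap.exists_restrict_eq (isClosed_frontier (s := L))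
    (⟨fun a => l a, hl.comp_continuous continuous_subtype_val fun a => a.2⟩ : C(frontier L, ℂ))
  have hSl : ∀ x ∈ frontier L, S x = l x := fun x hx => DFunLike.congr_fun hS ⟨x, hx⟩
  let F : ℂ → ℂ := L.piecewise (fun z => Complex.exp (S z)) (fun z => z - ω)
  have hF : Continuous F := by
    refine Continuous.piecewise (fun a ha => ?_) (by fun_prop) (by fun_prop)
    rw [hSl a ha, hexp a ha]
  have hF0 : ∀ x ∈ univ, F x ≠ 0 := by
    intro x _
    by_cases hx : x ∈ L
    · simp [F, hx]
    · simp only [F, hx, not_false_eq_true, piecewise_eq_of_notMem]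
      exact sub_ne_zero.2 fun h => hx (h ▸ hω)
  obtain ⟨m, hm, hmexp⟩ := exists_continuousOn_log_of_starConvex (mem_univ ω)
    (starConvex_univ ω) hF.continuousOn hF0
  obtain ⟨R, hR, hLR⟩ := hL.subset_ball_lt 0 ω
  refine not_exists_continuousOn_log_sphere (ω := ω) hR ⟨m, hm.mono (subset_univ _), fun x hx => ?_⟩
  have hxL : x ∉ L := fun h => (mem_ball.1 (hLR h)).ne (mem_sphere.1 hx)
  rw [hmexp x (mem_univ x)]
  simp [F, hxL]

/-- If a crosscut of the disc is mapped by a univalent map `f` into a small disc, and its endpoints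
are joined by a small connected subset of a set `K` containing the boundary values of `f`, then the
part of the disc cut off is mapped into the same small disc. -/
lemma image_inter_ball_subset_closedBall {f : ℂ → ℂ} (hc : ContinuousOn f (closedBall 0 1))
    (hd : DifferentiableOn ℂ f (ball 0 1)) (hi : InjOn f (ball 0 1)) {K C : Set ℂ}
    (hK : MapsTo f (sphere 0 1) K) (hKd : Disjoint K (f '' ball 0 1))
    (hCK : C ⊆ K) (hC : IsPreconnected C) {a : ℂ} (ha : a ∈ C) {ζ : ℂ} {ρ ε : ℝ}
    (hend : ∀ ξ ∈ sphere (0 : ℂ) 1 ∩ sphere ζ ρ, f ξ ∈ C) (hCε : C ⊆ closedBall a ε)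
    (hcross : MapsTo f (closedBall 0 1 ∩ sphere ζ ρ) (closedBall a ε))
    (h0 : (0 : ℂ) ∉ closedBall ζ ρ) (hf0 : f 0 ∉ closedBall a ε) :
    f '' (ball 0 1 ∩ ball ζ ρ) ⊆ closedBall a ε := by
  classical
  rintro _ ⟨ω, ⟨hω, hωρ⟩, rfl⟩
  by_contra hw
  have h0b : (0 : ℂ) ∈ ball (0 : ℂ) 1 := mem_ball_self one_pos
  set q : ℂ → ℂ := fun z => (z - f ω) / (z - f 0) with hq
  have hKne : ∀ x ∈ K, ∀ y ∈ ball (0 : ℂ) 1, x - f y ≠ 0 := fun x hx y hy h =>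
    disjoint_left.1 hKd hx (sub_eq_zero.1 h ▸ mem_image_of_mem f hy)
  have htω : ∀ t ∈ Icc (0 : ℝ) 1, t * ω ∈ ball (0 : ℂ) 1 := by
    intro t ht
    simp only [mem_ball_zero_iff, norm_mul, Complex.norm_real, Real.norm_eq_abs,
      abs_of_nonneg ht.1] at hω ⊢
    nlinarith [ht.2, norm_nonneg ω]
  obtain ⟨lK, hlK, hlKexp⟩ : ∃ l : ℂ → ℂ, ContinuousOn l K ∧ ∀ x ∈ K, Complex.exp (l x) = q x := by
    have := exists_continuousOn_log_of_homotopy (A := K)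
      (H := fun t z => (z - f (t * ω)) / (z - f 0)) ?_ ?_ ?_
    · simpa using this
    · refine ContinuousOn.div (ContinuousOn.sub (by fun_prop) ?_) (by fun_prop)
        fun p hp => hKne _ hp.2 _ h0b
      exact hd.continuousOn.comp (f := fun p : ℝ × ℂ => (p.1 : ℂ) * ω) (by fun_prop)
        fun p hp => htω p.1 hp.1
    · exact fun t ht x hx => div_ne_zero (hKne x hx _ (htω t ht)) (hKne x hx _ h0b)
    · exact ⟨fun _ => 0, continuousOn_const, fun x hx => by simp [div_self (hKne x hx _ h0b)]⟩
  have hball : ∀ x ∈ closedBall a ε, ∀ y, y ∉ closedBall a ε → x - y ≠ 0 := fun x hx y hy h =>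
    hy (sub_eq_zero.1 h ▸ hx)
  obtain ⟨lB, hlB, hlBexp⟩ := exists_continuousOn_log_of_starConvex (hCε ha)
    ((convex_closedBall a ε).starConvex (hCε ha)) (q := q)
    (ContinuousOn.div (by fun_prop) (by fun_prop) fun x hx => hball x hx _ hf0)
    (fun x hx => div_ne_zero (hball x hx _ hw) (hball x hx _ hf0))
  set lB' : ℂ → ℂ := fun z => lB z + (lK a - lB a) with hlB'
  have hlB'c : ContinuousOn lB' (closedBall a ε) := hlB.add continuousOn_const
  have hlB'exp : ∀ x ∈ closedBall a ε, Complex.exp (lB' x) = q x := by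
    intro x hx
    rw [hlB', Complex.exp_add, Complex.exp_sub, hlBexp x hx, hlBexp a (hCε ha),
      hlKexp a (hCK ha), div_self, mul_one]
    exact div_ne_zero (hball a (hCε ha) _ hw) (hball a (hCε ha) _ hf0)
  have hagree : EqOn lK lB' C := eqOn_of_exp_eq_exp hC (hlK.mono hCK) (hlB'c.mono hCε)
    (fun x hx => by rw [hlKexp x (hCK hx), hlB'exp x (hCε hx)]) ha (by simp [hlB'])
  have hS₁ : sphere (0 : ℂ) 1 ⊆ closedBall 0 1 := sphere_subset_closedBall
  let S₂ : Set ℂ := closedBall 0 1 ∩ sphere ζ ρ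
  let m : ℂ → ℂ := (sphere (0 : ℂ) 1).piecewise (fun ξ => lK (f ξ)) (fun ξ => lB' (f ξ))
  have hm₁ : EqOn m (fun ξ => lK (f ξ)) (sphere 0 1) := piecewise_eqOn _ _ _
  have hm₂ : EqOn m (fun ξ => lB' (f ξ)) S₂ := by
    intro ξ hξ
    by_cases h : ξ ∈ sphere (0 : ℂ) 1
    · exact (hm₁ h).trans (hagree (hend ξ ⟨h, hξ.2⟩))
    · simp only [m, piecewise_eq_of_notMem _ _ _ h]
  have hmc : ContinuousOn m (sphere 0 1 ∪ S₂) := by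
    refine ContinuousOn.union_of_isClosed ?_ ?_ isClosed_sphere
      (isClosed_closedBall.inter isClosed_sphere)
    · exact (hlK.comp (hc.mono hS₁) hK).congr hm₁
    · exact (hlB'c.comp (hc.mono inter_subset_left) hcross).congr hm₂
  have hmexp : ∀ ξ ∈ sphere 0 1 ∪ S₂, Complex.exp (m ξ) = q (f ξ) := by
    rintro ξ (hξ | hξ)
    · rw [hm₁ hξ, hlKexp _ (hK hξ)]
    · rw [hm₂ hξ, hlB'exp _ (hcross hξ)]
  let L : Set ℂ := ball 0 1 ∩ ball ζ ρ
  have hfr : frontier L ⊆ sphere 0 1 ∪ S₂ := by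
    refine (frontier_inter_subset _ _).trans (union_subset_union ?_ ?_)
    · exact inter_subset_left.trans frontier_ball_subset_sphere
    · exact inter_subset_inter closure_ball_subset_closedBall frontier_ball_subset_sphere
  let Lc : Set ℂ := closedBall 0 1 ∩ closedBall ζ ρ
  have hfrc : frontier L ⊆ Lc := frontier_subset_closure.trans <|
    (closure_inter_subset_inter_closure _ _).trans
      (inter_subset_inter closure_ball_subset_closedBall closure_ball_subset_closedBall)
  have hne : ∀ ξ ∈ closedBall (0 : ℂ) 1, ∀ y ∈ ball (0 : ℂ) 1, ξ ≠ y → f ξ - f y ≠ 0 := by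
    intro ξ hξ y hy hne h
    rcases (mem_closedBall.1 hξ).lt_or_eq with hlt | heq
    · exact hne (hi hlt hy (sub_eq_zero.1 h))
    · exact hKne _ (hK heq) y hy h
  have hωn : closedBall (0 : ℂ) 1 ∈ 𝓝 ω := mem_of_superset (isOpen_ball.mem_nhds hω)
    ball_subset_closedBall
  have hωd : DifferentiableAt ℂ f ω := hd.differentiableAt (isOpen_ball.mem_nhds hω)
  have hne0 : ∀ ξ ∈ Lc, f ξ - f 0 ≠ 0 := fun ξ hξ =>
    hne ξ hξ.1 0 h0b fun h => h0 (h ▸ hξ.2)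
  obtain ⟨lg, hlg, hlgexp⟩ := exists_continuousOn_log_of_starConvex (A := Lc) (x₀ := ω)
    (q := fun ξ => dslope f ω ξ / (f ξ - f 0))
    ⟨ball_subset_closedBall hω, ball_subset_closedBall hωρ⟩
    (((convex_closedBall _ _).inter (convex_closedBall _ _)).starConvex
      ⟨ball_subset_closedBall hω, ball_subset_closedBall hωρ⟩)
    ((((continuousOn_dslope hωn).2 ⟨hc, hωd⟩).mono inter_subset_left).div
      ((hc.mono inter_subset_left).sub continuousOn_const) hne0)
    (fun ξ hξ => div_ne_zero (by
      by_cases h : ξ = ω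
      · rw [h, dslope_same]
        exact deriv_ne_zero_of_injOn isOpen_ball hd hi hω
      · rw [dslope_of_ne _ h, slope_def_field]
        exact div_ne_zero (hne ξ hξ.1 ω hω h) (sub_ne_zero.2 h)) (hne0 ξ hξ))
  refine not_exists_continuousOn_log_frontier (L := L) (ω := ω)
    (isBounded_ball.subset inter_subset_left) ⟨hω, hωρ⟩
    ⟨fun ξ => m ξ - lg ξ, (hmc.mono hfr).sub (hlg.mono hfrc), fun ξ hξ => ?_⟩
  have hξω : ξ ≠ ω := by
    rintro rfl
    exact disjoint_left.1 (disjoint_frontier_iff_isOpen.2 (isOpen_ball.inter isOpen_ball)) hξ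
      ⟨hω, hωρ⟩
  rw [Complex.exp_sub, hmexp ξ (hfr hξ), hlgexp ξ (hfrc hξ), hq, dslope_of_ne _ hξω,
    slope_def_field]
  have h1 := hne0 ξ (hfrc hξ)
  have h2 := hne ξ (hfrc hξ).1 ω hω hξω
  have h3 := sub_ne_zero.2 hξω
  field_simp

open MeasureTheory in
lemma enorm_sub_le_lintegral_enorm_deriv {G G' : ℝ → ℂ} {a b : ℝ} (hab : a ≤ b)
    (hc : ContinuousOn G (Icc a b)) (hd : ∀ t ∈ Ioo a b, HasDerivAt G (G' t) t)
    (hc' : ContinuousOn G' (Ioo a b)) :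
    ‖G b - G a‖ₑ ≤ ∫⁻ t in Ioo a b, ‖G' t‖ₑ := by
  by_cases htop : ∫⁻ t in Ioo a b, ‖G' t‖ₑ = ⊤
  · simp [htop]
  have hG_int : IntegrableOn G' (Ioo a b) :=
    ⟨hc'.aestronglyMeasurable measurableSet_Ioo, lt_top_iff_ne_top.2 htop⟩
  have hG_int' : IntervalIntegrable G' volume a b := by
    rw [intervalIntegrable_iff_integrableOn_Ioo_of_le hab]
    exact hG_int
  rw [← intervalIntegral.integral_eq_sub_of_hasDerivAt_of_le hab hc hd hG_int',
    intervalIntegral.integral_of_le hab, integral_Ioc_eq_integral_Ioo]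
  exact enorm_integral_le_lintegral_enorm _

/-- The area of the image of a univalent function. -/
lemma lintegral_enorm_deriv_sq_eq_volume_image {U : Set ℂ} (hU : IsOpen U) {f : ℂ → ℂ}
    (hd : DifferentiableOn ℂ f U) (hi : InjOn f U) :
    ∫⁻ z in U, ‖deriv f z‖ₑ ^ 2 = MeasureTheory.volume (f '' U) := by
  rw [← MeasureTheory.lintegral_abs_det_fderiv_eq_addHaar_image MeasureTheory.volume
    hU.measurableSet (f' := fun z => (fderiv ℂ f z).restrictScalars ℝ)
    (fun z hz => ((hd.differentiableAt
      (hU.mem_nhds hz)).hasFDerivAt.restrictScalars ℝ).hasFDerivWithinAt) hi]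
  refine MeasureTheory.lintegral_congr fun z => ?_
  have : ((fderiv ℂ f z).restrictScalars ℝ).det = ‖deriv f z‖ ^ 2 := by
    have h1 : ((fderiv ℂ f z).restrictScalars ℝ).det =
        LinearMap.det ((fderiv ℂ f z : ℂ →ₗ[ℂ] ℂ).restrictScalars ℝ) := rfl
    rw [h1, LinearMap.det_restrictScalars, Algebra.norm_complex_apply, LinearMap.det_ring,
      Complex.normSq_eq_norm_sq]
    rfl
  rw [this, abs_of_nonneg (sq_nonneg _), ENNReal.ofReal_pow (norm_nonneg _), ofReal_norm]

lemma norm_polarCoord_symm_sub_one_sq (ρ θ : ℝ) :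
    ‖Complex.polarCoord.symm (ρ, θ) - 1‖ ^ 2 = 1 + ρ * (ρ - 2 * Real.cos θ) := by
  rw [← Complex.normSq_eq_norm_sq, Complex.polarCoord_symm_apply, Complex.normSq_apply]
  simp
  rw [Complex.cos_ofReal_re, Complex.sin_ofReal_re]
  linear_combination ρ ^ 2 * Real.sin_sq_add_cos_sq θ

lemma polarCoord_symm_mem_ball_one_iff {ρ θ : ℝ} (hρ : 0 < ρ) :
    Complex.polarCoord.symm (ρ, θ) ∈ ball (1 : ℂ) 1 ↔ ρ < 2 * Real.cos θ := by
  rw [mem_ball, dist_eq_norm, ← sq_lt_one_iff₀ (norm_nonneg _),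
    norm_polarCoord_symm_sub_one_sq]
  constructor
  · intro h
    have := neg_of_mul_neg_right (by linarith : ρ * (ρ - 2 * Real.cos θ) < 0) hρ.le
    linarith
  · intro h
    nlinarith

lemma polarCoord_symm_mem_closedBall_one_iff {ρ θ : ℝ} (hρ : 0 < ρ) :
    Complex.polarCoord.symm (ρ, θ) ∈ closedBall (1 : ℂ) 1 ↔ ρ ≤ 2 * Real.cos θ := by
  rw [mem_closedBall, dist_eq_norm, ← sq_le_one_iff₀ (norm_nonneg _),
    norm_polarCoord_symm_sub_one_sq]
  constructor
  · intro h
    have := nonpos_of_mul_nonpos_right (by linarith : ρ * (ρ - 2 * Real.cos θ) ≤ 0) hρ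
    linarith
  · intro h
    nlinarith

lemma cos_gt_of_mem_Ioo {s t θ c : ℝ} (hs : |s| ≤ Real.pi) (ht : |t| ≤ Real.pi)
    (hcs : c ≤ Real.cos s) (hct : c ≤ Real.cos t) (hθ : θ ∈ Ioo s t) : c < Real.cos θ := by
  rw [← Real.cos_abs] at hcs hct ⊢
  rcases le_total 0 θ with h | h
  · refine hct.trans_lt (Real.cos_lt_cos_of_nonneg_of_le_pi (abs_nonneg _) ht ?_)
    rw [abs_of_nonneg h]
    exact hθ.2.trans_le (le_abs_self t)
  · refine hcs.trans_lt (Real.cos_lt_cos_of_nonneg_of_le_pi (abs_nonneg _) hs ?_)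
    rw [abs_of_nonpos h]
    exact (neg_lt_neg hθ.1).trans_le (neg_le_abs s)

open MeasureTheory in
/-- If a holomorphic function has oscillation at least `η` on a circular arc of radius `ρ`, then
its derivative has large mean square on that arc. -/
lemma ofReal_le_lintegral_enorm_deriv_sq {F : ℂ → ℂ} (hc : ContinuousOn F (closedBall 1 1))
    (hd : DifferentiableOn ℂ F (ball 1 1)) {ρ η : ℝ} (hρ : 0 < ρ) (hη : 0 < η) {z w : ℂ}
    (hz : z ∈ closedBall (1 : ℂ) 1 ∩ sphere 0 ρ) (hw : w ∈ closedBall (1 : ℂ) 1 ∩ sphere 0 ρ)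
    (hzw : η ≤ dist (F z) (F w)) :
    ENNReal.ofReal (η ^ 2 / Real.pi * ρ⁻¹) ≤ ∫⁻ θ in Ioo (-Real.pi) Real.pi,
      ENNReal.ofReal ρ * (ball (1 : ℂ) 1).indicator (fun z => ‖deriv F z‖ₑ ^ 2)
        (Complex.polarCoord.symm (ρ, θ)) := by
  wlog hle : w.arg ≤ z.arg generalizing z w
  · exact this hw hz (by rwa [dist_comm]) (le_of_not_ge hle)
  have hpi := Real.pi_pos
  have hrep : ∀ z ∈ closedBall (1 : ℂ) 1 ∩ sphere 0 ρ, Complex.polarCoord.symm (ρ, z.arg) = z ∧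
      |z.arg| ≤ Real.pi / 2 := by
    rintro z ⟨hz, hzρ⟩
    rw [mem_sphere_zero_iff_norm] at hzρ
    constructor
    · rw [Complex.polarCoord_symm_apply, ← hzρ]
      simp
    · rw [Complex.abs_arg_le_pi_div_two_iff]
      have h1 := (Complex.abs_re_le_norm (z - 1)).trans (mem_closedBall_iff_norm.1 hz)
      have h2 := (abs_le.1 h1).1
      simp at h2
      linarith
  obtain ⟨hzc, hza⟩ := hrep z hz
  obtain ⟨hwc, hwa⟩ := hrep w hw
  set s := w.arg
  set t := z.arg
  have hcs : ρ / 2 ≤ Real.cos s := by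
    have := (polarCoord_symm_mem_closedBall_one_iff (θ := s) hρ).1 (hwc ▸ hw.1)
    linarith
  have hct : ρ / 2 ≤ Real.cos t := by
    have := (polarCoord_symm_mem_closedBall_one_iff (θ := t) hρ).1 (hzc ▸ hz.1)
    linarith
  have hbIoo : ∀ θ ∈ Ioo s t, Complex.polarCoord.symm (ρ, θ) ∈ ball (1 : ℂ) 1 := fun θ hθ => by
    have := cos_gt_of_mem_Ioo (by linarith) (by linarith) hcs hct hθ
    rw [polarCoord_symm_mem_ball_one_iff hρ]
    linarith
  have hbIcc : ∀ θ ∈ Icc s t, Complex.polarCoord.symm (ρ, θ) ∈ closedBall (1 : ℂ) 1 := by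
    intro θ hθ
    rcases hθ.1.eq_or_lt with h | h
    · rw [← h, hwc]; exact hw.1
    rcases hθ.2.eq_or_lt with h' | h'
    · rw [h', hzc]; exact hz.1
    exact ball_subset_closedBall (hbIoo θ ⟨h, h'⟩)
  have hcd : ∀ θ : ℝ, HasDerivAt (fun θ : ℝ => Complex.polarCoord.symm (ρ, θ))
      (Complex.polarCoord.symm (ρ, θ) * Complex.I) θ := by
    intro θ
    have hexp : ∀ θ : ℝ, Complex.polarCoord.symm (ρ, θ) = ρ * Complex.exp (θ * Complex.I) :=
      fun θ => by simp [Complex.polarCoord_symm_apply, Complex.exp_mul_I]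
    have h := ((((hasDerivAt_id θ).ofReal_comp).mul_const Complex.I).cexp).const_mul (ρ : ℂ)
    simp only [hexp]
    refine h.congr_deriv ?_
    simp only [id_eq, Complex.ofReal_one]
    ring
  have hcc : Continuous fun θ : ℝ => Complex.polarCoord.symm (ρ, θ) :=
    continuous_iff_continuousAt.2 fun θ => (hcd θ).continuousAt
  have hlen := enorm_sub_le_lintegral_enorm_deriv hle
    (G := fun θ => F (Complex.polarCoord.symm (ρ, θ)))
    (G' := fun θ => deriv F (Complex.polarCoord.symm (ρ, θ)) *
      (Complex.polarCoord.symm (ρ, θ) * Complex.I))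
    (hc.comp hcc.continuousOn hbIcc)
    (fun θ hθ => HasDerivAt.comp θ
      (hd.differentiableAt (isOpen_ball.mem_nhds (hbIoo θ hθ))).hasDerivAt (hcd θ))
    (((hd.deriv isOpen_ball).continuousOn.comp hcc.continuousOn hbIoo).mul
      (hcc.mul continuous_const).continuousOn)
  simp only [hzc, hwc] at hlen
  set B := ∫⁻ θ in Ioo s t, ENNReal.ofReal ρ * ‖deriv F (Complex.polarCoord.symm (ρ, θ))‖ₑ ^ 2
  have hB : B ≤ ∫⁻ θ in Ioo (-Real.pi) Real.pi,
      ENNReal.ofReal ρ * (ball (1 : ℂ) 1).indicator (fun z => ‖deriv F z‖ₑ ^ 2)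
        (Complex.polarCoord.symm (ρ, θ)) := by
    refine le_trans (setLIntegral_mono' measurableSet_Ioo fun θ hθ => ?_)
      (lintegral_mono_set (Ioo_subset_Ioo ?_ ?_))
    · rw [indicator_of_mem (hbIoo θ hθ)]
    · linarith [(abs_le.1 hwa).1]
    · linarith [(abs_le.1 hza).2]
  refine le_trans ?_ hB
  by_cases hBtop : B = ⊤
  · simp [hBtop]
  have hpt : ∀ θ, ‖deriv F (Complex.polarCoord.symm (ρ, θ)) *
      (Complex.polarCoord.symm (ρ, θ) * Complex.I)‖ₑ ≤
      ENNReal.ofReal (Real.pi * ρ / (2 * η)) *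
        (ENNReal.ofReal ρ * ‖deriv F (Complex.polarCoord.symm (ρ, θ))‖ₑ ^ 2) +
        ENNReal.ofReal (η / (2 * Real.pi)) := by
    intro θ
    rw [← ofReal_norm, ← ofReal_norm, ← ENNReal.ofReal_pow (norm_nonneg _),
      ← ENNReal.ofReal_mul hρ.le, ← ENNReal.ofReal_mul (by positivity),
      ← ENNReal.ofReal_add (by positivity) (by positivity)]
    refine ENNReal.ofReal_le_ofReal ?_
    rw [norm_mul, norm_mul, Complex.norm_polarCoord_symm, Complex.norm_I, mul_one,
      abs_of_pos hρ]
    set x := ‖deriv F (Complex.polarCoord.symm (ρ, θ))‖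
    have : Real.pi * ρ / (2 * η) * (ρ * x ^ 2) + η / (2 * Real.pi) - x * ρ =
        Real.pi / (2 * η) * (ρ * x - η / Real.pi) ^ 2 := by
      field_simp
      ring
    have h2 : 0 ≤ Real.pi / (2 * η) * (ρ * x - η / Real.pi) ^ 2 := by positivity
    linarith
  have hmain : ENNReal.ofReal η ≤ ENNReal.ofReal (Real.pi * ρ / (2 * η)) * B +
      ENNReal.ofReal (η / (2 * Real.pi)) * ENNReal.ofReal Real.pi := by
    calc ENNReal.ofReal η ≤ ‖F z - F w‖ₑ := by
          rw [← ofReal_norm, ← dist_eq_norm]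
          exact ENNReal.ofReal_le_ofReal hzw
      _ ≤ _ := hlen
      _ ≤ _ := lintegral_mono hpt
      _ = ENNReal.ofReal (Real.pi * ρ / (2 * η)) * B +
          ENNReal.ofReal (η / (2 * Real.pi)) * volume (Ioo s t) := by
          rw [lintegral_add_right _ measurable_const, lintegral_const_mul' _ _ (by simp),
            setLIntegral_const]
      _ ≤ _ := by
          gcongr
          rw [Real.volume_Ioo]
          exact ENNReal.ofReal_le_ofReal (by linarith [(abs_le.1 hwa).1, (abs_le.1 hza).2])
  rw [← ENNReal.ofReal_toReal hBtop, ← ENNReal.ofReal_mul (by positivity),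
    ← ENNReal.ofReal_mul (by positivity), ← ENNReal.ofReal_add (by positivity) (by positivity),
    ENNReal.ofReal_le_ofReal_iff (by positivity)] at hmain
  refine ENNReal.ofReal_le_of_le_toReal ?_
  have h1 : η / (2 * Real.pi) * Real.pi = η / 2 := by field_simp
  rw [h1] at hmain
  have h2 : η / 2 ≤ Real.pi * ρ / (2 * η) * B.toReal := by linarith
  calc η ^ 2 / Real.pi * ρ⁻¹ = η / 2 * (2 * η / (Real.pi * ρ)) := by field_simp
    _ ≤ Real.pi * ρ / (2 * η) * B.toReal * (2 * η / (Real.pi * ρ)) := by gcongr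
    _ = B.toReal := by field_simp

open MeasureTheory in
/-- The length-area principle at the boundary point `0` of the disc `ball 1 1`. -/
lemma exists_crosscut_ball_one {F : ℂ → ℂ} (hc : ContinuousOn F (closedBall 1 1))
    (hd : DifferentiableOn ℂ F (ball 1 1)) (hi : InjOn F (ball 1 1)) {δ R η : ℝ} (hδ : 0 < δ)
    (hδR : δ < R) (hη : 0 < η)
    (hA : volume (F '' ball 1 1) < ENNReal.ofReal (η ^ 2 / Real.pi * Real.log (R / δ))) :
    ∃ ρ ∈ Ioo δ R, ∀ z ∈ closedBall (1 : ℂ) 1 ∩ sphere 0 ρ,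
      ∀ w ∈ closedBall (1 : ℂ) 1 ∩ sphere 0 ρ, dist (F z) (F w) < η := by
  by_contra! hcon
  refine hA.not_ge ?_
  set g : ℂ → ENNReal := (ball (1 : ℂ) 1).indicator (fun z => ‖deriv F z‖ₑ ^ 2)
  have hg : Measurable g :=
    ((measurable_deriv F).enorm.pow_const 2).indicator isOpen_ball.measurableSet
  have hpm : Measurable fun p : ℝ × ℝ => Complex.polarCoord.symm p := by
    simp only [Complex.polarCoord_symm_apply]
    fun_prop
  have hprod : ∫⁻ p in Ioo δ R ×ˢ Ioo (-Real.pi) Real.pi,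
      ENNReal.ofReal p.1 * g (Complex.polarCoord.symm p) ≤ volume (F '' ball 1 1) := by
    rw [← lintegral_enorm_deriv_sq_eq_volume_image isOpen_ball hd hi,
      ← lintegral_indicator isOpen_ball.measurableSet, ← Complex.lintegral_comp_polarCoord_symm]
    exact lintegral_mono_set (prod_mono (fun x hx => hδ.trans hx.1) subset_rfl)
  refine le_trans ?_ hprod
  rw [Measure.volume_eq_prod, ← Measure.prod_restrict, lintegral_prod _ (by fun_prop)]
  have hlog : ENNReal.ofReal (η ^ 2 / Real.pi * Real.log (R / δ)) =
      ∫⁻ ρ in Ioo δ R, ENNReal.ofReal (η ^ 2 / Real.pi * ρ⁻¹) := by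
    have hG_int : IntervalIntegrable (fun ρ : ℝ => η ^ 2 / Real.pi * ρ⁻¹) volume δ R := by
      refine ContinuousOn.intervalIntegrable (continuousOn_const.mul
        (continuousOn_id.inv₀ fun x hx => ?_))
      rw [uIcc_of_le hδR.le] at hx
      exact (hδ.trans_le hx.1).ne'
    rw [← ofReal_integral_eq_lintegral_ofReal
      ((intervalIntegrable_iff_integrableOn_Ioo_of_le hδR.le).1 hG_int),
      ← integral_Ioc_eq_integral_Ioo, ← intervalIntegral.integral_of_le hδR.le,
      intervalIntegral.integral_const_mul, integral_inv_of_pos hδ (hδ.trans hδR)]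
    filter_upwards [ae_restrict_mem measurableSet_Ioo] with ρ hρ
    have := hδ.trans hρ.1
    have := Real.pi_pos
    simp only [Pi.zero_apply]
    positivity
  rw [hlog]
  refine setLIntegral_mono' measurableSet_Ioo fun ρ hρ => ?_
  obtain ⟨z, hz, w, hw, hzw⟩ := hcon ρ hρ
  exact ofReal_le_lintegral_enorm_deriv_sq hc hd (hδ.trans hρ.1) hη hz hw hzw

/-- The length-area principle: around each boundary point of the unit disc there is a circular
crosscut at a controlled scale whose image under a univalent map has small diameter. -/
lemma exists_crosscut {f : ℂ → ℂ} (hc : ContinuousOn f (closedBall 0 1))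
    (hd : DifferentiableOn ℂ f (ball 0 1)) (hi : InjOn f (ball 0 1)) {δ R η : ℝ} (hδ : 0 < δ)
    (hδR : δ < R) (hη : 0 < η)
    (hA : MeasureTheory.volume (f '' ball 0 1) <
      ENNReal.ofReal (η ^ 2 / Real.pi * Real.log (R / δ))) {ζ : ℂ} (hζ : ‖ζ‖ = 1) :
    ∃ ρ ∈ Ioo δ R, ∀ z ∈ closedBall (0 : ℂ) 1 ∩ sphere ζ ρ,
      ∀ w ∈ closedBall (0 : ℂ) 1 ∩ sphere ζ ρ, dist (f z) (f w) < η := by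
  have hζ0 : ζ ≠ 0 := by
    rintro rfl
    simp at hζ
  have hdist : ∀ x, ‖ζ * (1 - x)‖ = dist x 1 := fun x => by
    rw [norm_mul, hζ, one_mul, dist_eq_norm, norm_sub_rev]
  have hinv : ∀ z, ζ * (1 - (1 - ζ⁻¹ * z)) = z := fun z => by field_simp; ring
  have himg : (fun x => f (ζ * (1 - x))) '' ball 1 1 = f '' ball 0 1 := by
    ext y
    constructor
    · rintro ⟨x, hx, rfl⟩
      exact ⟨ζ * (1 - x), by rw [mem_ball_zero_iff, hdist]; exact hx, rfl⟩
    · rintro ⟨z, hz, rfl⟩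
      refine ⟨1 - ζ⁻¹ * z, ?_, by simp only [hinv]⟩
      rw [mem_ball, ← hdist, hinv]
      exact mem_ball_zero_iff.1 hz
  have hmb : MapsTo (fun x => ζ * (1 - x)) (ball 1 1) (ball 0 1) := fun x hx => by
    rw [mem_ball_zero_iff, hdist]; exact hx
  have hmc : MapsTo (fun x => ζ * (1 - x)) (closedBall 1 1) (closedBall 0 1) := fun x hx => by
    rw [mem_closedBall_zero_iff, hdist]; exact hx
  obtain ⟨ρ, hρ, H⟩ := exists_crosscut_ball_one (F := fun x => f (ζ * (1 - x)))
    (hc.comp (by fun_prop) hmc) (hd.comp (by fun_prop) hmb)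
    (hi.comp (fun x _ y _ h => by simpa [hζ0] using h) hmb) hδ hδR hη (by rwa [himg])
  have hmem : ∀ z ∈ closedBall (0 : ℂ) 1 ∩ sphere ζ ρ,
      1 - ζ⁻¹ * z ∈ closedBall (1 : ℂ) 1 ∩ sphere 0 ρ := by
    rintro z ⟨hz, hzρ⟩
    constructor
    · rw [mem_closedBall, ← hdist, hinv]
      exact mem_closedBall_zero_iff.1 hz
    · rw [mem_sphere_zero_iff_norm, ← one_mul ‖_‖, ← hζ, ← norm_mul, mul_sub, mul_one,
        mul_inv_cancel_left₀ hζ0, norm_sub_rev]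
      exact mem_sphere_iff_norm.1 hzρ
  refine ⟨ρ, hρ, fun z hz w hw => ?_⟩
  have := H _ (hmem z hz) _ (hmem w hw)
  simpa only [hinv] using this

lemma exists_dist_lt_of_curve {p : ℝ → ℂ} {a b : ℝ} (hp : ContinuousOn p (Icc a b)) {ε : ℝ}
    (hε : 0 < ε) :
    ∃ η > 0, ∀ s ∈ Icc a b, ∀ t ∈ Icc a b, dist (p s) (p t) < η →
      ∃ s' ∈ Icc a b, ∃ t' ∈ Icc a b, p s' = p t' ∧
        (∀ u ∈ uIcc s s', dist (p u) (p s) < ε) ∧ ∀ u ∈ uIcc t t', dist (p u) (p t) < ε := by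
  obtain ⟨δ, hδ, hunif⟩ := Metric.uniformContinuousOn_iff.1
    (isCompact_Icc.uniformContinuousOn_of_continuous hp) ε hε
  let P : Set (ℝ × ℝ) := {x | x.1 ∈ Icc a b ∧ x.2 ∈ Icc a b ∧ p x.1 = p x.2}
  have hK : IsCompact ((Icc a b ×ˢ Icc a b) \ ⋃ x ∈ P, ball x δ) :=
    (isCompact_Icc.prod isCompact_Icc).diff (isOpen_biUnion fun _ _ => isOpen_ball)
  have hcont : ContinuousOn (fun x : ℝ × ℝ => dist (p x.1) (p x.2)) (Icc a b ×ˢ Icc a b) :=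
    continuous_dist.comp_continuousOn <| ContinuousOn.prodMk
      (hp.comp continuousOn_fst fun x hx => hx.1)
      (hp.comp continuousOn_snd fun x hx => hx.2)
  obtain ⟨η, hη, hmin⟩ := hK.exists_forall_le' (f := fun x => dist (p x.1) (p x.2)) (a := 0)
    (hcont.mono sdiff_subset) (by
      rintro x ⟨hx, hxP⟩
      refine dist_pos.2 fun h => hxP ?_
      exact mem_biUnion (show x ∈ P from ⟨hx.1, hx.2, h⟩) (mem_ball_self hδ))
  refine ⟨η, hη, fun s hs t ht hst => ?_⟩
  have hmem : (s, t) ∈ ⋃ x ∈ P, ball x δ := by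
    by_contra h
    exact (hmin (s, t) ⟨⟨hs, ht⟩, h⟩).not_gt hst
  obtain ⟨⟨s', t'⟩, ⟨hs', ht', heq⟩, hball⟩ := mem_iUnion₂.1 hmem
  rw [mem_ball, Prod.dist_eq, max_lt_iff] at hball
  have key : ∀ x ∈ Icc a b, ∀ x' ∈ Icc a b, dist x x' < δ → ∀ u ∈ uIcc x x',
      dist (p u) (p x) < ε := fun x hx x' hx' hd u hu =>
    hunif u (ordConnected_Icc.uIcc_subset hx hx' hu) x hx (by
      rw [dist_comm]
      exact (Real.dist_left_le_of_mem_uIcc hu).trans_lt hd)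
  exact ⟨s', hs', t', ht', heq, key s hs s' hs' hball.1, key t ht t' ht' hball.2⟩

/-- Small perturbations of a curve are locally connected, uniformly. -/
lemma exists_isPreconnected_of_perturbed_curve {p : ℝ → ℂ} {a b : ℝ}
    (hp : ContinuousOn p (Icc a b)) {ε : ℝ} (hε : 0 < ε) :
    ∃ η > 0, ∀ g : ℂ → ℂ, ContinuousOn g (p '' Icc a b) →
      (∀ z ∈ p '' Icc a b, dist (g z) z ≤ η) →
      ∀ x ∈ g '' (p '' Icc a b), ∀ y ∈ g '' (p '' Icc a b), dist x y < η →
      ∃ C ⊆ g '' (p '' Icc a b), IsPreconnected C ∧ x ∈ C ∧ y ∈ C ∧ C ⊆ closedBall x ε := by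
  obtain ⟨η, hη, H⟩ := exists_dist_lt_of_curve hp (ε := ε / 3) (by positivity)
  refine ⟨min (η / 4) (ε / 12), by positivity, fun g hg hgd => ?_⟩
  rintro _ ⟨_, ⟨s, hs, rfl⟩, rfl⟩ _ ⟨_, ⟨t, ht, rfl⟩, rfl⟩ hxy
  have hd : ∀ u ∈ Icc a b, dist (g (p u)) (p u) ≤ min (η / 4) (ε / 12) := fun u hu =>
    hgd _ (mem_image_of_mem p hu)
  have hη4 := min_le_left (η / 4) (ε / 12)
  have hε12 := min_le_right (η / 4) (ε / 12)
  obtain ⟨s', hs', t', ht', heq, h1, h2⟩ := H s hs t ht (by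
    have := dist_triangle4 (p s) (g (p s)) (g (p t)) (p t)
    rw [dist_comm (p s) (g (p s))] at this
    linarith [hd s hs, hd t ht])
  have hsub : ∀ x ∈ Icc a b, ∀ x' ∈ Icc a b, uIcc x x' ⊆ Icc a b := fun x hx x' hx' =>
    ordConnected_Icc.uIcc_subset hx hx'
  have hgp : ContinuousOn (fun u => g (p u)) (Icc a b) := hg.comp hp (mapsTo_image p _)
  have hnear : ∀ u ∈ Icc a b, ∀ v ∈ Icc a b, dist (p u) (p v) < ε / 3 →
      dist (g (p u)) (g (p v)) < ε / 2 := by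
    intro u hu v hv huv
    have := dist_triangle4 (g (p u)) (p u) (p v) (g (p v))
    rw [dist_comm (p v) (g (p v))] at this
    linarith [hd u hu, hd v hv]
  refine ⟨(fun u => g (p u)) '' uIcc s s' ∪ (fun u => g (p u)) '' uIcc t t', ?_, ?_,
    Or.inl ⟨s, left_mem_uIcc, rfl⟩, Or.inr ⟨t, left_mem_uIcc, rfl⟩, ?_⟩
  · rintro _ (⟨u, hu, rfl⟩ | ⟨u, hu, rfl⟩)
    · exact mem_image_of_mem g (mem_image_of_mem p (hsub s hs s' hs' hu))
    · exact mem_image_of_mem g (mem_image_of_mem p (hsub t ht t' ht' hu))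
  · refine IsPreconnected.union (g (p s')) ⟨s', right_mem_uIcc, rfl⟩
      ⟨t', right_mem_uIcc, by simp only [heq]⟩ ?_ ?_
    · exact isPreconnected_uIcc.image _ (hgp.mono (hsub s hs s' hs'))
    · exact isPreconnected_uIcc.image _ (hgp.mono (hsub t ht t' ht'))
  · rintro _ (⟨u, hu, rfl⟩ | ⟨u, hu, rfl⟩)
    · exact mem_closedBall.2 (by linarith [hnear u (hsub s hs s' hs' hu) s hs (h1 u hu)])
    · refine mem_closedBall.2 ((dist_triangle _ (g (p t)) _).trans ?_)
      rw [dist_comm (g (p t))]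
      linarith [hnear u (hsub t ht t' ht' hu) t ht (h2 u hu)]

lemma subset_of_disjoint_frontier {X : Type*} [TopologicalSpace X] {s t : Set X} (hs : IsOpen s)
    (ht : IsPreconnected t) {x : X} (hxt : x ∈ t) (hxs : x ∈ s) (hd : Disjoint t (frontier s)) :
    t ⊆ s := by
  refine ht.subset_left_of_subset_union hs isClosed_closure.isOpen_compl
    (disjoint_left.2 fun y hy hyc => hyc (subset_closure hy)) (fun y hy => ?_) ⟨x, hxt, hxs⟩
  by_contra h
  rw [mem_union, not_or, mem_compl_iff, not_not] at h
  exact disjoint_left.1 hd hy (by rw [hs.frontier_eq]; exact ⟨h.2, h.1⟩)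

/-- A pointwise limit of uniformly bounded holomorphic functions is a locally uniform limit. -/
lemma tendstoLocallyUniformlyOn_of_norm_le {ι : Type*} {l : Filter ι} [l.NeBot] {F : ι → ℂ → ℂ}
    {f : ℂ → ℂ} {U : Set ℂ} (hU : IsOpen U) (hd : ∀ n, DifferentiableOn ℂ (F n) U) {M : ℝ}
    (hM : ∀ᶠ n in l, ∀ z ∈ U, ‖F n z‖ ≤ M) (hlim : ∀ z ∈ U, Tendsto (F · z) l (𝓝 (f z))) :
    TendstoLocallyUniformlyOn F f l U := by
  rw [Metric.tendstoLocallyUniformlyOn_iff]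
  intro ε hε x hx
  obtain ⟨s, hs, hsU⟩ := Metric.isOpen_iff.1 hU x hx
  have hM0 : 0 ≤ M := by
    obtain ⟨n, hn⟩ := hM.exists
    exact (norm_nonneg _).trans (hn x hx)
  have hlip : ∀ᶠ n in l, ∀ y ∈ ball x s, dist (F n y) (F n x) ≤ 2 * M / s * dist y x := by
    filter_upwards [hM] with n hn y hy
    refine Complex.dist_le_div_mul_dist_of_mapsTo_ball ((hd n).mono hsU) (fun w hw => ?_) hy
    rw [mem_closedBall, dist_eq_norm]
    linarith [norm_sub_le (F n w) (F n x), hn w (hsU hw), hn x hx]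
  set t := min s (ε / 4 / (2 * M / s + 1)) with ht
  have ht0 : 0 < t := by positivity
  have hsmall : ∀ y ∈ ball x t, 2 * M / s * dist y x ≤ ε / 4 := by
    intro y hy
    have h1 : dist y x ≤ ε / 4 / (2 * M / s + 1) := (mem_ball.1 hy).le.trans (min_le_right _ _)
    rw [le_div_iff₀ (by positivity)] at h1
    nlinarith [dist_nonneg (x := y) (y := x)]
  have hts : ball x t ⊆ ball x s := ball_subset_ball (min_le_left _ _)
  refine ⟨ball x t, mem_nhdsWithin_of_mem_nhds (ball_mem_nhds x ht0), ?_⟩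
  filter_upwards [hlip, Metric.tendsto_nhds.1 (hlim x hx) (ε / 4) (by positivity)]
    with n hn hnx y hy
  have hlimy : dist (f y) (f x) ≤ ε / 4 :=
    le_of_tendsto ((hlim y (hsU (hts hy))).dist (hlim x hx)) (by
      filter_upwards [hlip] with m hm using (hm y (hts hy)).trans (hsmall y hy))
  have h2 := (hn y (hts hy)).trans (hsmall y hy)
  have h3 := dist_triangle4 (f y) (f x) (F n x) (F n y)
  rw [dist_comm (f x), dist_comm (F n x) (F n y)] at h3
  linarith

/-- A version of **Hurwitz's theorem**: values omitted along a sequence of holomorphic functions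
are omitted in the limit. -/
lemma ne_of_tendstoLocallyUniformlyOn {ι : Type*} {l : Filter ι} [l.NeBot] {F : ι → ℂ → ℂ}
    {f : ℂ → ℂ} {U : Set ℂ} (hU : IsOpen U) (hUc : IsPreconnected U)
    (hd : ∀ n, DifferentiableOn ℂ (F n) U) (hlim : TendstoLocallyUniformlyOn F f l U)
    {x : ℂ} (hx : x ∈ U) (hf : deriv f x ≠ 0) {c : ι → ℂ} {p : ℂ} (hc : Tendsto c l (𝓝 p))
    (hne : ∀ n, ∀ z ∈ U, F n z ≠ c n) {z : ℂ} (hz : z ∈ U) : f z ≠ p := by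
  intro hzp
  have hfd : DifferentiableOn ℂ f U := hlim.differentiableOn (Eventually.of_forall hd) hU
  have han : AnalyticOnNhd ℂ f U := hfd.analyticOnNhd hU
  have hiso : ∀ᶠ w in 𝓝[≠] z, f w ≠ p := by
    refine ((han z hz).eventually_eq_or_eventually_ne analyticAt_const).resolve_left fun h => hf ?_
    have heq : EqOn f (fun _ => p) U :=
      han.eqOn_of_preconnected_of_eventuallyEq analyticOnNhd_const hUc hz h
    rw [(heq.eventuallyEq_of_mem (hU.mem_nhds hx)).deriv_eq, deriv_const]
  obtain ⟨r, hr, hball⟩ := Metric.nhds_basis_closedBall.mem_iff.1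
    (inter_mem (mem_nhdsWithin_iff_eventually.1 hiso) (hU.mem_nhds hz))
  have hrU : closedBall z r ⊆ U := fun w hw => (hball hw).2
  have hsU : sphere z r ⊆ U := sphere_subset_closedBall.trans hrU
  obtain ⟨m, hm, hmin⟩ := (isCompact_sphere z r).exists_forall_le' (f := fun w => dist (f w) p)
    (a := 0) (continuous_id.dist continuous_const |>.comp_continuousOn (hfd.continuousOn.mono hsU))
    fun w hw => dist_pos.2 ((hball (sphere_subset_closedBall hw)).1 (ne_of_mem_sphere hw hr.ne'))
  have hunif := Metric.tendstoUniformlyOn_iff.1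
    ((tendstoLocallyUniformlyOn_iff_forall_isCompact hU).1 hlim _ hrU
      (isCompact_closedBall z r)) (m / 4) (by positivity)
  obtain ⟨n, hn, hcn⟩ :=
    (hunif.and (Metric.tendsto_nhds.1 hc (m / 4) (by positivity))).exists
  have hdiff : DiffContOnCl ℂ (fun w => (F n w - c n)⁻¹) (ball z r) := by
    refine DifferentiableOn.diffContOnCl ?_
    rw [closure_ball z hr.ne']
    exact (((hd n).mono hrU).sub_const _).inv fun w hw => sub_ne_zero.2 (hne n w (hrU hw))
  have hle : ‖(F n z - c n)⁻¹‖ ≤ (m / 2)⁻¹ := by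
    refine Complex.norm_le_of_forall_mem_frontier_norm_le isBounded_ball hdiff (fun w hw => ?_)
      (subset_closure (mem_ball_self hr))
    rw [frontier_ball z hr.ne'] at hw
    rw [norm_inv]
    refine inv_anti₀ (by positivity) ?_
    have h1 := hmin w hw
    have h2 := hn w (sphere_subset_closedBall hw)
    have h3 := dist_triangle4 (f w) (F n w) (c n) p
    rw [← dist_eq_norm]
    linarith
  rw [norm_inv] at hle
  have h1 := (inv_le_inv₀ (norm_pos_iff.2 (sub_ne_zero.2 (hne n z hz))) (by positivity)).1 hle
  have h2 := hn z (mem_closedBall_self hr.le)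
  have h3 := dist_triangle (F n z) (f z) (c n)
  rw [hzp, dist_comm p (c n), ← hzp, dist_comm (F n z) (f z), dist_eq_norm (F n z), hzp] at h3
  rw [hzp] at h2
  linarith

/-- The subordination principle. -/
lemma exists_comp_eq_of_image_subset {f g : ℂ → ℂ} {r : ℝ} (hr : 0 < r)
    (hf : DifferentiableOn ℂ f (ball 0 r)) (hg : DifferentiableOn ℂ g (ball 0 1))
    (hi : InjOn g (ball 0 1)) (h0 : f 0 = g 0) (hsub : f '' ball 0 r ⊆ g '' ball 0 1) :
    ∃ k : ℂ → ℂ, DifferentiableOn ℂ k (ball 0 r) ∧ MapsTo k (ball 0 r) (ball 0 1) ∧ k 0 = 0 ∧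
      (∀ z ∈ ball 0 r, g (k z) = f z) ∧ deriv f 0 = deriv g 0 * deriv k 0 := by
  set e := Function.invFunOn g (ball 0 1)
  have he : LeftInvOn e g (ball 0 1) := hi.leftInvOn_invFunOn
  have hmaps : MapsTo f (ball 0 r) (g '' ball 0 1) := fun z hz => hsub (mem_image_of_mem f hz)
  have hed := differentiableOn_of_leftInvOn isOpen_ball hg hi he
  have hkd : DifferentiableOn ℂ (fun z => e (f z)) (ball 0 r) := hed.comp hf hmaps
  have hk0 : e (f 0) = 0 := by rw [h0, he (mem_ball_self one_pos)]
  have hgk : ∀ z ∈ ball 0 r, g (e (f z)) = f z := fun z hz => Function.invFunOn_eq (hmaps hz)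
  refine ⟨fun z => e (f z), hkd, fun z hz => Function.invFunOn_mem (hmaps hz), hk0, hgk, ?_⟩
  have hkd0 : DifferentiableAt ℂ (fun z => e (f z)) 0 := hkd.differentiableAt (ball_mem_nhds 0 hr)
  have hgd0 : DifferentiableAt ℂ g (e (f 0)) := by
    rw [hk0]
    exact hg.differentiableAt (ball_mem_nhds 0 one_pos)
  have hcomp := (hgd0.hasDerivAt.comp (0 : ℂ) hkd0.hasDerivAt).deriv
  rw [hk0] at hcomp
  rw [← hcomp]
  refine Filter.EventuallyEq.deriv_eq ?_
  filter_upwards [ball_mem_nhds 0 hr] with z hz using (hgk z hz).symm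

lemma mul_norm_deriv_le_of_image_subset {f g : ℂ → ℂ} {r : ℝ} (hr : 0 < r)
    (hf : DifferentiableOn ℂ f (ball 0 r)) (hg : DifferentiableOn ℂ g (ball 0 1))
    (hi : InjOn g (ball 0 1)) (h0 : f 0 = g 0) (hsub : f '' ball 0 r ⊆ g '' ball 0 1) :
    r * ‖deriv f 0‖ ≤ ‖deriv g 0‖ := by
  obtain ⟨k, hkd, hkm, hk0, -, hder⟩ := exists_comp_eq_of_image_subset hr hf hg hi h0 hsub
  have hk : ‖deriv k 0‖ ≤ 1 / r := Complex.norm_deriv_le_div_of_mapsTo_ball hkd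
    (by rw [hk0]; exact hkm.mono_right ball_subset_closedBall) hr
  rw [hder, norm_mul]
  rw [le_div_iff₀ hr] at hk
  nlinarith [norm_nonneg (deriv g 0)]

/-- Uniqueness of normalized Riemann maps, in extremal form. -/
lemma eqOn_of_image_subset_of_deriv_le {f g : ℂ → ℂ} (hf : DifferentiableOn ℂ f (ball 0 1))
    (hg : DifferentiableOn ℂ g (ball 0 1)) (hi : InjOn g (ball 0 1)) (h0 : f 0 = g 0)
    (hsub : f '' ball 0 1 ⊆ g '' ball 0 1) {a b : ℝ} (ha : 0 < a) (hab : a ≤ b)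
    (hga : deriv g 0 = a) (hfb : deriv f 0 = b) : EqOn f g (ball 0 1) := by
  obtain ⟨k, hkd, hkm, hk0, hgk, hder⟩ := exists_comp_eq_of_image_subset one_pos hf hg hi h0 hsub
  have hkm' : MapsTo k (ball 0 1) (closedBall (k 0) 1) := by
    rw [hk0]
    exact hkm.mono_right ball_subset_closedBall
  have hk' : deriv k 0 = ((b / a : ℝ) : ℂ) := by
    rw [hfb, hga] at hder
    push_cast
    rw [hder, mul_div_cancel_left₀ _ (Complex.ofReal_ne_zero.2 ha.ne')]
  have hle : ‖deriv k 0‖ ≤ 1 := Complex.norm_deriv_le_one_of_mapsTo_ball hkd hkm' one_pos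
  have hba : b / a = 1 := by
    rw [hk', Complex.norm_real, Real.norm_eq_abs, abs_of_pos (div_pos (ha.trans_le hab) ha)] at hle
    exact le_antisymm hle ((one_le_div ha).2 hab)
  rw [hba] at hk'
  have haff := Complex.affine_of_mapsTo_ball_of_norm_dslope_eq_div hkd hkm'
    (mem_ball_self one_pos) (by rw [dslope_same, hk']; simp)
  intro z hz
  have hkz := haff hz
  simp only [hk0, dslope_same, hk'] at hkz
  rw [← hgk z hz, hkz]
  simp

/-- **Carathéodory kernel convergence** for bounded sequences of normalized Riemann maps. -/
lemma tendstoLocallyUniformlyOn_of_kernel {φ : ℂ → ℂ} {φn : ℕ → ℂ → ℂ} {M : ℝ}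
    (hd : DifferentiableOn ℂ φ (ball 0 1)) (hi : InjOn φ (ball 0 1))
    (hnd : ∀ n, DifferentiableOn ℂ (φn n) (ball 0 1)) (hni : ∀ n, InjOn (φn n) (ball 0 1))
    (hn0 : ∀ n, φn n 0 = φ 0) (hder : ∃ a : ℝ, 0 < a ∧ deriv φ 0 = a)
    (hnder : ∀ n, ∃ a : ℝ, 0 < a ∧ deriv (φn n) 0 = a)
    (hM : ∀ᶠ n in atTop, ∀ z ∈ ball 0 1, ‖φn n z‖ ≤ M)
    (hsub : ∀ r < 1, ∀ᶠ n in atTop, φ '' ball 0 r ⊆ φn n '' ball 0 1)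
    (homit : ∀ p ∈ frontier (φ '' ball 0 1), ∃ c : ℕ → ℂ, Tendsto c atTop (𝓝 p) ∧
      ∀ n, c n ∉ φn n '' ball 0 1) :
    TendstoLocallyUniformlyOn φn φ atTop (ball 0 1) := by
  refine tendstoLocallyUniformlyOn_of_norm_le isOpen_ball hnd hM fun z hz => ?_
  rw [tendsto_iff_ultrafilter]
  intro u hu
  have hlim : ∀ w : ℂ, ∃ y, w ∈ ball 0 1 → Tendsto (φn · w) u (𝓝 y) := by
    intro w
    by_cases hw : w ∈ ball 0 1
    · obtain ⟨y, -, hy⟩ := (isCompact_closedBall (0 : ℂ) M).ultrafilter_le_nhds (u.map (φn · w)) (by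
        rw [Ultrafilter.coe_map, le_principal_iff, mem_map]
        filter_upwards [hu hM] with n hn
        exact mem_closedBall_zero_iff.2 (hn w hw))
      exact ⟨y, fun _ => hy⟩
    · exact ⟨0, fun h => absurd h hw⟩
  choose ψ hψ using hlim
  have hloc : TendstoLocallyUniformlyOn φn ψ u (ball 0 1) :=
    tendstoLocallyUniformlyOn_of_norm_le isOpen_ball hnd (hu hM) hψ
  have hψd : DifferentiableOn ℂ ψ (ball 0 1) :=
    hloc.differentiableOn (Eventually.of_forall hnd) isOpen_ball
  have h0 : (0 : ℂ) ∈ ball 0 1 := mem_ball_self one_pos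
  have hψ0 : ψ 0 = φ 0 := tendsto_nhds_unique (hψ 0 h0) (by
    simp only [hn0]
    exact tendsto_const_nhds)
  have hψder : Tendsto (fun n => deriv (φn n) 0) u (𝓝 (deriv ψ 0)) :=
    (hloc.deriv (Eventually.of_forall hnd) isOpen_ball).tendsto_at h0
  obtain ⟨a, ha, hφa⟩ := hder
  choose b hb hφb using hnder
  have hblim : Tendsto b u (𝓝 (deriv ψ 0).re) := by
    have := (Complex.continuous_re.tendsto _).comp hψder
    refine this.congr fun n => ?_
    simp [hφb]
  have hψb : deriv ψ 0 = ((deriv ψ 0).re : ℂ) := by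
    refine tendsto_nhds_unique hψder ?_
    simp only [hφb]
    exact (Complex.continuous_ofReal.tendsto _).comp hblim
  have hab : a ≤ (deriv ψ 0).re := by
    refine le_of_forall_lt_imp_le_of_dense fun x hx => ?_
    rcases le_or_gt x 0 with hx0 | hx0
    · exact hx0.trans (ge_of_tendsto' hblim fun n => (hb n).le)
    refine ge_of_tendsto hblim ?_
    filter_upwards [hu (hsub (x / a) ((div_lt_one ha).2 hx))] with n hn
    have := mul_norm_deriv_le_of_image_subset (div_pos hx0 ha)
      (hd.mono (ball_subset_ball ((div_lt_one ha).2 hx).le)) (hnd n) (hni n) (hn0 n).symm hn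
    rw [hφa, hφb, Complex.norm_real, Complex.norm_real, Real.norm_of_nonneg ha.le,
      Real.norm_of_nonneg (hb n).le, div_mul_cancel₀ _ ha.ne'] at this
    exact this
  have hψne : deriv ψ 0 ≠ 0 := by
    rw [hψb]
    exact Complex.ofReal_ne_zero.2 (ha.trans_le hab).ne'
  have hsubψ : ψ '' ball 0 1 ⊆ φ '' ball 0 1 := by
    refine subset_of_disjoint_frontier
      (isOpen_image_of_injOn isOpen_ball hd hi isOpen_ball Subset.rfl)
      ((convex_ball (0 : ℂ) 1).isPreconnected.image ψ hψd.continuousOn)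
      (mem_image_of_mem ψ h0) (hψ0 ▸ mem_image_of_mem φ h0) (disjoint_left.2 ?_)
    rintro _ ⟨w, hw, rfl⟩ hwΩ
    obtain ⟨c, hc, hcn⟩ := homit _ hwΩ
    exact ne_of_tendstoLocallyUniformlyOn isOpen_ball (convex_ball 0 1).isPreconnected hnd hloc h0
      hψne (hc.mono_left hu) (fun n x hx h => hcn n ⟨x, hx, h⟩) hw rfl
  have heq := eqOn_of_image_subset_of_deriv_le hψd hd hi hψ0 hsubψ ha hab hφa hψb
  rw [← heq hz]
  exact hψ z hz

lemma frontier_image_ball {f : ℂ → ℂ} (hc : ContinuousOn f (closedBall 0 1))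
    (hd : DifferentiableOn ℂ f (ball 0 1)) (hi : InjOn f (ball 0 1)) :
    frontier (f '' ball 0 1) = f '' sphere 0 1 := by
  have hcl : closure (ball (0 : ℂ) 1) = closedBall 0 1 := closure_ball 0 one_ne_zero
  have hclosure : closure (f '' ball 0 1) = f '' closedBall 0 1 := by
    refine (closure_minimal (image_mono ball_subset_closedBall)
      ((isCompact_closedBall 0 1).image_of_continuousOn hc).isClosed).antisymm ?_
    rw [← hcl] at hc ⊢
    exact hc.image_closure
  rw [(isOpen_image_of_injOn isOpen_ball hd hi isOpen_ball Subset.rfl).frontier_eq, hclosure]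
  ext y
  constructor
  · rintro ⟨⟨ξ, hξ, rfl⟩, hy⟩
    refine mem_image_of_mem f ?_
    rw [← closedBall_sdiff_ball]
    exact ⟨hξ, fun h => hy (mem_image_of_mem f h)⟩
  · rintro ⟨ξ, hξ, rfl⟩
    refine ⟨mem_image_of_mem f (sphere_subset_closedBall hξ), ?_⟩
    refine notMem_image_of_mem_frontier isOpen_ball (by rwa [hcl]) hd hi
      (by rw [hcl]; exact sphere_subset_closedBall hξ) fun h => ?_
    exact (mem_ball.1 h).ne (mem_sphere.1 hξ)

lemma frontier_connectedComponentIn_compl_subset {K : Set ℂ} (hK : IsClosed K) (z : ℂ) :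
    frontier (connectedComponentIn Kᶜ z) ⊆ K := by
  have hopen : ∀ x, IsOpen (connectedComponentIn Kᶜ x) := fun x =>
    hK.isOpen_compl.connectedComponentIn
  intro y hy
  by_contra hyK
  rw [(hopen z).frontier_eq] at hy
  have hyy : y ∈ connectedComponentIn Kᶜ y := mem_connectedComponentIn hyK
  obtain ⟨x, hxy, hxz⟩ := mem_closure_iff.1 hy.1 _ (hopen y) hyy
  rw [connectedComponentIn_eq hxy, ← connectedComponentIn_eq hxz] at hyy
  exact hy.2 hyy

lemma exists_mem_sphere_inter_sphere {ζ : ℂ} (hζ : ‖ζ‖ = 1) {ρ : ℝ} (h0 : 0 ≤ ρ) (h2 : ρ ≤ 2) :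
    ∃ ξ, ξ ∈ sphere (0 : ℂ) 1 ∩ sphere ζ ρ := by
  have hconn : IsPreconnected (sphere (0 : ℂ) 1) := by
    refine isPreconnected_sphere ?_ 0 1
    rw [Complex.rank_real_complex]
    exact Cardinal.one_lt_two
  obtain ⟨ξ, hξ, hξρ⟩ := hconn.intermediate_value (a := ζ) (b := -ζ) (by simpa using hζ)
    (by simpa using hζ) (f := fun x => dist x ζ) (by fun_prop) (show ρ ∈ Icc _ _ from ⟨by simpa, by
      rw [dist_eq_norm, show -ζ - ζ = (-2 : ℂ) * ζ by ring, norm_mul, hζ]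
      simpa⟩)
  exact ⟨ξ, hξ, hξρ⟩

/-- Normalized univalent maps of the disc whose boundary values lie on small perturbations of a
fixed curve are equicontinuous up to the boundary. -/
lemma exists_dist_le_of_perturbed_curve {p : ℝ → ℂ} {a b : ℝ} (hp : ContinuousOn p (Icc a b))
    {z₀ : ℂ} (hz₀ : z₀ ∉ p '' Icc a b) (M : ℝ) {ε : ℝ} (hε : 0 < ε) :
    ∃ δ > 0, ∃ η > 0, ∀ g f : ℂ → ℂ, ContinuousOn g (p '' Icc a b) →
      (∀ z ∈ p '' Icc a b, dist (g z) z ≤ η) → ContinuousOn f (closedBall 0 1) →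
      DifferentiableOn ℂ f (ball 0 1) → InjOn f (ball 0 1) →
      MapsTo f (sphere 0 1) (g '' (p '' Icc a b)) →
      Disjoint (g '' (p '' Icc a b)) (f '' ball 0 1) → f 0 = z₀ →
      (∀ z ∈ ball 0 1, ‖f z‖ ≤ M) →
      ∀ ζ ∈ sphere (0 : ℂ) 1, ∀ z ∈ closedBall 0 1, dist z ζ < δ → dist (f z) (f ζ) ≤ ε := by
  obtain ⟨d, hd, hdist⟩ := (isCompact_Icc.image_of_continuousOn hp).exists_forall_le'
    (f := fun z => dist z z₀) (a := 0) (by fun_prop) fun z hz =>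
      dist_pos.2 fun h => hz₀ (h ▸ hz)
  set ε' := min (ε / 2) (d / 4) with hε'
  have hε'0 : 0 < ε' := by positivity
  have hε'ε : ε' ≤ ε / 2 := min_le_left _ _
  have hε'd : ε' ≤ d / 4 := min_le_right _ _
  obtain ⟨η₀, hη₀, hconn⟩ := exists_isPreconnected_of_perturbed_curve hp hε'0
  set η₁ := min η₀ ε' with hη₁
  have hη₁0 : 0 < η₁ := by positivity
  set A := (MeasureTheory.volume (closedBall (0 : ℂ) M)).toReal with hA
  have hA0 : 0 ≤ A := ENNReal.toReal_nonneg
  set T := Real.pi / η₁ ^ 2 * (A + 1) with hT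
  have hT0 : 0 < T := by have := Real.pi_pos; positivity
  refine ⟨1 / 2 * Real.exp (-T), by positivity, min η₀ (d / 2), by positivity, ?_⟩
  intro g f hg hgη hfc hfd hfi hfK hKd hf0 hfM ζ hζ z hz hzζ
  have hζ1 : ‖ζ‖ = 1 := mem_sphere_zero_iff_norm.1 hζ
  have hvol : MeasureTheory.volume (f '' ball 0 1) <
      ENNReal.ofReal (η₁ ^ 2 / Real.pi * Real.log (1 / 2 / (1 / 2 * Real.exp (-T)))) := by
    have hlog : Real.log (1 / 2 / (1 / 2 * Real.exp (-T))) = T := by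
      rw [div_mul_cancel_left₀ (by norm_num), ← Real.exp_neg, neg_neg, Real.log_exp]
    have hAT : η₁ ^ 2 / Real.pi * T = A + 1 := by
      have := Real.pi_ne_zero
      rw [hT]
      field_simp
    rw [hlog, hAT]
    calc MeasureTheory.volume (f '' ball 0 1)
        ≤ MeasureTheory.volume (closedBall (0 : ℂ) M) := MeasureTheory.measure_mono (by
          rintro _ ⟨w, hw, rfl⟩
          exact mem_closedBall_zero_iff.2 (hfM w hw))
      _ = ENNReal.ofReal A :=
          (ENNReal.ofReal_toReal MeasureTheory.measure_closedBall_lt_top.ne).symm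
      _ < ENNReal.ofReal (A + 1) := (ENNReal.ofReal_lt_ofReal_iff (by linarith)).2 (by linarith)
  obtain ⟨ρ, ⟨hδρ, hρ⟩, hcross⟩ := exists_crosscut hfc hfd hfi (by positivity)
    (mul_lt_of_lt_one_right (by norm_num) (Real.exp_lt_one_iff.2 (by linarith))) hη₁0 hvol hζ1
  have hρ0 : 0 < ρ := lt_trans (by positivity) hδρ
  obtain ⟨ξ₀, hξ₀⟩ := exists_mem_sphere_inter_sphere hζ1 hρ0.le (by linarith)
  have hS : sphere (0 : ℂ) 1 ∩ sphere ζ ρ ⊆ closedBall 0 1 ∩ sphere ζ ρ :=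
    inter_subset_inter_left _ sphere_subset_closedBall
  have hex : ∀ ξ ∈ sphere (0 : ℂ) 1 ∩ sphere ζ ρ, ∃ C ⊆ g '' (p '' Icc a b), IsPreconnected C ∧
      f ξ₀ ∈ C ∧ f ξ ∈ C ∧ C ⊆ closedBall (f ξ₀) ε' := fun ξ hξ =>
    hconn g hg (fun w hw => (hgη w hw).trans (min_le_left _ _)) _ (hfK hξ₀.1) _ (hfK hξ.1)
      ((hcross _ (hS hξ₀) _ (hS hξ)).trans_le (min_le_left _ _))
  choose! C hCK hCc hC₀ hCξ hCε using hex
  have himage : f '' (ball 0 1 ∩ ball ζ ρ) ⊆ closedBall (f ξ₀) ε' := by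
    refine image_inter_ball_subset_closedBall hfc hfd hfi hfK hKd
      (C := ⋃ ξ ∈ sphere (0 : ℂ) 1 ∩ sphere ζ ρ, C ξ) (iUnion₂_subset hCK) ?_
      (mem_biUnion hξ₀ (hC₀ _ hξ₀)) (fun ξ hξ => mem_biUnion hξ (hCξ ξ hξ)) (iUnion₂_subset hCε)
      (fun w hw => ?_) ?_ ?_
    · rw [← sUnion_image]
      refine isPreconnected_sUnion (f ξ₀) _ ?_ ?_
      · rintro _ ⟨ξ, hξ, rfl⟩
        exact hC₀ ξ hξ
      · rintro _ ⟨ξ, hξ, rfl⟩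
        exact hCc ξ hξ
    · exact mem_closedBall.2 ((hcross w hw _ (hS hξ₀)).le.trans (min_le_right _ _))
    · rw [mem_closedBall, dist_zero_left, hζ1]
      linarith
    · obtain ⟨w, hw, hwξ⟩ := hfK hξ₀.1
      have h1 := (hgη w hw).trans (min_le_right _ _)
      have h2 := hdist w hw
      have h3 := dist_triangle w (g w) z₀
      rw [dist_comm w (g w), dist_comm (g w) z₀] at h3
      rw [mem_closedBall, hf0, ← hwξ, not_le]
      linarith
  have hball : ∀ w ∈ closedBall 0 1, w ∈ ball ζ ρ → dist (f w) (f ξ₀) ≤ ε' := by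
    intro w hw hwζ
    have hw' : w ∈ closure (ball 0 1 ∩ ball ζ ρ) := by
      rw [inter_comm]
      refine isOpen_ball.inter_closure ⟨hwζ, ?_⟩
      rwa [closure_ball 0 one_ne_zero]
    have hcw : ContinuousWithinAt f (ball 0 1 ∩ ball ζ ρ) w :=
      (hfc w hw).mono (inter_subset_left.trans ball_subset_closedBall)
    exact mem_closedBall.1 (closure_minimal himage isClosed_closedBall (hcw.mem_closure_image hw'))
  have h1 := hball z hz (mem_ball.2 (hzζ.trans hδρ))
  have h2 := hball ζ (sphere_subset_closedBall hζ) (mem_ball_self hρ0)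
  have h3 := dist_triangle_right (f z) (f ζ) (f ξ₀)
  linarith

/-- Locally uniform convergence in the open disc together with equicontinuity at the boundary
gives uniform convergence on the closed disc. -/
lemma tendstoUniformlyOn_closedBall {φ : ℂ → ℂ} {φn : ℕ → ℂ → ℂ}
    (hc : ContinuousOn φ (closedBall 0 1)) (hloc : TendstoLocallyUniformlyOn φn φ atTop (ball 0 1))
    (hequi : ∀ ε > 0, ∃ δ > 0, ∀ᶠ n in atTop, ∀ ζ ∈ sphere (0 : ℂ) 1, ∀ z ∈ closedBall 0 1,
      dist z ζ < δ → dist (φn n z) (φn n ζ) ≤ ε) :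
    TendstoUniformlyOn φn φ atTop (closedBall 0 1) := by
  rw [Metric.tendstoUniformlyOn_iff]
  intro ε hε
  obtain ⟨δ₁, hδ₁, hev⟩ := hequi (ε / 5) (by positivity)
  obtain ⟨δ₂, hδ₂, hunif⟩ := Metric.uniformContinuousOn_iff.1
    ((isCompact_closedBall 0 1).uniformContinuousOn_of_continuous hc) (ε / 5) (by positivity)
  set t := min (min δ₁ δ₂) 1 / 2 with ht
  have ht0 : 0 < t := by positivity
  have ht1 : t < δ₁ := (half_lt_self (by positivity)).trans_le
    ((min_le_left _ _).trans (min_le_left _ _))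
  have ht2 : t < δ₂ := (half_lt_self (by positivity)).trans_le
    ((min_le_left _ _).trans (min_le_right _ _))
  have ht3 : t < 1 := (half_lt_self (by positivity)).trans_le (min_le_right _ _)
  have hcomp := Metric.tendstoUniformlyOn_iff.1
    ((tendstoLocallyUniformlyOn_iff_forall_isCompact isOpen_ball).1 hloc (closedBall 0 (1 - t))
      (closedBall_subset_ball (by linarith)) (isCompact_closedBall 0 _)) (ε / 5) (by positivity)
  filter_upwards [hev, hcomp] with n hn hn' z hz
  have hz1 : ‖z‖ ≤ 1 := mem_closedBall_zero_iff.1 hz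
  rcases le_or_gt ‖z‖ (1 - t) with hzt | hzt
  · linarith [hn' z (mem_closedBall_zero_iff.2 hzt)]
  have hz0 : 0 < ‖z‖ := by linarith
  set ζ : ℂ := (‖z‖⁻¹ : ℝ) • z with hζ
  have hscale : ∀ s t : ℝ, dist (s • ζ) (t • ζ) = |s - t| := by
    intro s t
    rw [dist_eq_norm, ← sub_smul, hζ, norm_smul, norm_smul, Real.norm_eq_abs, norm_inv, norm_norm,
      inv_mul_cancel₀ hz0.ne', mul_one]
  have hz' : z = ‖z‖ • ζ := by rw [hζ, smul_inv_smul₀ hz0.ne']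
  have hζ' : ζ = (1 : ℝ) • ζ := (one_smul ℝ ζ).symm
  have hζ1 : ζ ∈ sphere (0 : ℂ) 1 := by
    have := hscale 1 0
    rw [zero_smul, one_smul] at this
    simpa using this
  set w := (1 - t) • ζ with hw
  have hwb : w ∈ closedBall (0 : ℂ) (1 - t) := by
    have := hscale (1 - t) 0
    rw [zero_smul, sub_zero, abs_of_pos (by linarith)] at this
    exact mem_closedBall.2 this.le
  have hw1 : w ∈ closedBall (0 : ℂ) 1 := closedBall_subset_closedBall (by linarith) hwb
  have hzζ : dist z ζ < δ₁ := by
    have := hscale ‖z‖ 1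
    rw [← hz', ← hζ', abs_sub_comm, abs_of_nonneg (by linarith)] at this
    linarith
  have hwζ : dist w ζ < δ₁ := by
    have := hscale (1 - t) 1
    rw [← hw, ← hζ', abs_sub_comm, abs_of_nonneg (by linarith)] at this
    linarith
  have hzw : dist z w < δ₂ := by
    have := hscale ‖z‖ (1 - t)
    rw [← hz', ← hw, abs_of_nonneg (by linarith)] at this
    linarith
  have h1 := hn ζ hζ1 z hz hzζ
  have h2 := hn ζ hζ1 w hw1 hwζ
  have h3 := hn' w hwb
  have h4 := hunif z hz w hw1 hzw
  have h5 := dist_triangle4 (φ z) (φ w) (φn n w) (φn n z)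
  have h6 := dist_triangle_right (φn n w) (φn n z) (φn n ζ)
  linarith

/-- Carathéodory-type continuity of Riemann maps for perturbed lemniscate domains:
if `h_n` are `δ_n`-displacements of `γ = ∂Ω` with `δ_n → 0`, then the normalized
Riemann maps of the components `Ω_n` of the complements of `h_n(γ)` containing `z₀`
converge uniformly on the closed disc to the normalized Riemann map of `Ω`. -/
theorem riemann_maps_uniform_convergence
    (Ω : Set ℂ) (hΩ : IsLemniscateDomain Ω) (hbdd : Bornology.IsBounded Ω)
    (z₀ : ℂ) (hz₀ : z₀ ∈ Ω)
    (δ : ℕ → ℝ) (hδpos : ∀ n, 0 < δ n) (hδ : Tendsto δ atTop (𝓝 0))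
    (h : ℕ → ℂ → ℂ)
    (hcont : ∀ n, ContinuousOn (h n) (frontier Ω))
    (hinj : ∀ n, Set.InjOn (h n) (frontier Ω))
    (hclose : ∀ n, ∀ z ∈ frontier Ω, dist (h n z) z < δ n)
    (hz₀n : ∀ n, z₀ ∉ h n '' frontier Ω)
    (φ : ℂ → ℂ) (φn : ℕ → ℂ → ℂ)
    (hφc : ContinuousOn φ (closure (ball (0 : ℂ) 1)))
    (hφd : DifferentiableOn ℂ φ (ball (0 : ℂ) 1))
    (hφi : Set.InjOn φ (ball (0 : ℂ) 1))
    (hφim : φ '' ball (0 : ℂ) 1 = Ω)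
    (hφ0 : φ 0 = z₀)
    (hφ' : ∃ a : ℝ, 0 < a ∧ deriv φ 0 = (a : ℂ))
    (hφnc : ∀ n, ContinuousOn (φn n) (closure (ball (0 : ℂ) 1)))
    (hφnd : ∀ n, DifferentiableOn ℂ (φn n) (ball (0 : ℂ) 1))
    (hφni : ∀ n, Set.InjOn (φn n) (ball (0 : ℂ) 1))
    (hφnim : ∀ n, φn n '' ball (0 : ℂ) 1 = connectedComponentIn (h n '' frontier Ω)ᶜ z₀)
    (hφn0 : ∀ n, φn n 0 = z₀)
    (hφn' : ∀ n, ∃ a : ℝ, 0 < a ∧ deriv (φn n) 0 = (a : ℂ)) :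
    TendstoUniformlyOn φn φ atTop (closure (ball (0 : ℂ) 1)) := by
  rw [closure_ball (0 : ℂ) one_ne_zero] at hφc ⊢
  have hφnc' : ∀ n, ContinuousOn (φn n) (closedBall 0 1) := fun n => by
    have := hφnc n
    rwa [closure_ball (0 : ℂ) one_ne_zero] at this
  have hΩo : IsOpen Ω := hΩ.1
  have hγ : frontier Ω = φ '' sphere 0 1 := by rw [← hφim, frontier_image_ball hφc hφd hφi]
  set p : ℝ → ℂ := fun θ => φ (Complex.exp (θ * Complex.I)) with hp
  have hpγ : p '' Icc (-Real.pi) Real.pi = frontier Ω := by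
    rw [hγ]
    ext y
    constructor
    · rintro ⟨θ, -, rfl⟩
      exact mem_image_of_mem φ (by simp [Complex.norm_exp_ofReal_mul_I])
    · rintro ⟨ξ, hξ, rfl⟩
      refine ⟨ξ.arg, ⟨(Complex.neg_pi_lt_arg ξ).le, Complex.arg_le_pi ξ⟩, ?_⟩
      have := Complex.norm_mul_exp_arg_mul_I ξ
      rw [mem_sphere_zero_iff_norm.1 hξ, Complex.ofReal_one, one_mul] at this
      simp only [hp, this]
  have hpc : ContinuousOn p (Icc (-Real.pi) Real.pi) :=
    hφc.comp (by fun_prop) fun θ _ => by simp [Complex.norm_exp_ofReal_mul_I]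
  have hγc : IsCompact (frontier Ω) := hpγ ▸ isCompact_Icc.image_of_continuousOn hpc
  have hz₀γ : z₀ ∉ frontier Ω := fun hz => by
    rw [hΩo.frontier_eq] at hz
    exact hz.2 hz₀
  have hKc : ∀ n, IsCompact (h n '' frontier Ω) := fun n => hγc.image_of_continuousOn (hcont n)
  have hmaps : ∀ n, MapsTo (φn n) (sphere 0 1) (h n '' frontier Ω) := fun n ξ hξ => by
    refine frontier_connectedComponentIn_compl_subset (hKc n).isClosed z₀ ?_
    rw [← hφnim n, frontier_image_ball (hφnc' n) (hφnd n) (hφni n)]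
    exact mem_image_of_mem _ hξ
  have hdisj : ∀ n, Disjoint (h n '' frontier Ω) (φn n '' ball 0 1) := fun n => by
    rw [hφnim n]
    exact disjoint_left.2 fun x hx hx' => connectedComponentIn_subset _ _ hx' hx
  obtain ⟨M, hM⟩ := hγc.isBounded.subset_closedBall 0
  have hbound : ∀ᶠ n in atTop, ∀ z ∈ ball 0 1, ‖φn n z‖ ≤ M + 1 := by
    filter_upwards [hδ.eventually_lt_const one_pos] with n hn z hz
    refine Complex.norm_le_of_forall_mem_frontier_norm_le isBounded_ball ⟨hφnd n, hφnc n⟩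
      (fun ξ hξ => ?_) (subset_closure hz)
    rw [frontier_ball (0 : ℂ) one_ne_zero] at hξ
    obtain ⟨x, hx, hxξ⟩ := hmaps n hξ
    have h1 := hclose n x hx
    have h2 := mem_closedBall_zero_iff.1 (hM hx)
    have h3 := norm_le_norm_add_norm_sub' (h n x) x
    rw [← hxξ]
    rw [dist_eq_norm] at h1
    linarith
  refine tendstoUniformlyOn_closedBall hφc (tendstoLocallyUniformlyOn_of_kernel hφd hφi hφnd hφni
    (fun n => (hφn0 n).trans hφ0.symm) hφ' hφn' hbound ?_ ?_) fun ε hε => ?_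
  · intro r hr
    have hrball : closedBall (0 : ℂ) r ⊆ ball 0 1 := closedBall_subset_ball hr
    have hcompact : IsCompact (φ '' closedBall 0 r) :=
      (isCompact_closedBall 0 r).image_of_continuousOn (hφd.continuousOn.mono hrball)
    have hdisjoint : Disjoint (φ '' closedBall 0 r) (frontier Ω) := by
      refine disjoint_left.2 fun x hx hxΩ => ?_
      rw [hΩo.frontier_eq, ← hφim] at hxΩ
      exact hxΩ.2 (image_mono hrball hx)
    obtain ⟨d, hd, hthick⟩ := hdisjoint.exists_thickenings hcompact isClosed_frontier
    filter_upwards [hδ.eventually_lt_const hd] with n hn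
    rcases le_or_gt r 0 with hr0 | hr0
    · rw [ball_eq_empty.2 hr0, image_empty]
      exact empty_subset _
    rw [hφnim n]
    refine ((convex_ball (0 : ℂ) r).isPreconnected.image φ
      (hφd.continuousOn.mono (ball_subset_closedBall.trans hrball))).subset_connectedComponentIn
      ⟨0, mem_ball_self hr0, hφ0⟩ ?_
    rintro x hx ⟨y, hy, rfl⟩
    exact disjoint_left.1 hthick
      (self_subset_thickening hd _ (image_mono ball_subset_closedBall hx))
      (mem_thickening_iff.2 ⟨y, hy, (hclose n y hy).trans hn⟩)
  · intro q hq
    rw [hφim] at hq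
    refine ⟨fun n => h n q, ?_, fun n => disjoint_left.1 (hdisj n) (mem_image_of_mem _ hq)⟩
    exact tendsto_iff_dist_tendsto_zero.2
      (squeeze_zero (fun _ => dist_nonneg) (fun n => (hclose n q hq).le) hδ)
  · obtain ⟨d, hd, η, hη, H⟩ := exists_dist_le_of_perturbed_curve hpc (hpγ ▸ hz₀γ) (M + 1) hε
    rw [hpγ] at H
    refine ⟨d, hd, ?_⟩
    filter_upwards [hbound, hδ.eventually_lt_const hη] with n hn hnη
    exact H (h n) (φn n) (hcont n) (fun z hz => ((hclose n z hz).trans hnη).le) (hφnc' n) (hφnd n)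
      (hφni n) (hmaps n) (hdisj n) (hφn0 n) hn

end
end
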